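/- arXiv:2009.06300 — 2 statements merged into one kernel-verified Lean document; each statement's English description precedes it below -/
import Mathlib

section
/- Let I be an inner function on the unit ball B_n (n ≥ 2), b : B_n → D a non-constant holomorphic function, α unimodular, σ = σ_α[I] and μ = σ_α[b] the Clark measures on the sphere S_n, and K(z,w) = (1 − I(z)conj(I(w)))·(1 − ⟨z,w⟩)^{-n} the reproducing kernel of H(I). If σ ≪ μ and dσ/dμ ∈ L²(μ), then for every w ∈ B_n the function z ↦ ((α − b(z))/(α − I(z))) K(z,w) belongs to the de Branges–Rovnyak space H(b). -/
open Complex Metric MeasureTheory Set Filter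

/-- Membership of a function `F` in the reproducing kernel Hilbert space on the unit ball of
`ℂⁿ` with kernel `kb`: there is `c ≥ 0` such that the kernel
`c·kb(z,w) − F z · conj (F w)` is positive semidefinite on the ball. -/
def MemRKHSBall (n : ℕ) (kb : EuclideanSpace ℂ (Fin n) → EuclideanSpace ℂ (Fin n) → ℂ)
    (F : EuclideanSpace ℂ (Fin n) → ℂ) : Prop :=
  ∃ c : ℝ, 0 ≤ c ∧ ∀ (m : ℕ) (w : Fin m → EuclideanSpace ℂ (Fin n)) (a : Fin m → ℂ),
    (∀ i, w i ∈ ball (0 : EuclideanSpace ℂ (Fin n)) 1) →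
    0 ≤ (∑ i, ∑ j, (starRingEnd ℂ) (a i) * a j *
      ((c : ℂ) * kb (w i) (w j) - F (w i) * (starRingEnd ℂ) (F (w j)))).re

lemma aux_hasDeriv (n : ℕ) (p q u v t : ℂ) (h1 : p + t * q ≠ 0) (h2 : u + t * v ≠ 0) :
    HasDerivAt (fun t : ℂ => ((p + t * q)⁻¹) ^ n * ((u + t * v)⁻¹) ^ n)
      (((n : ℂ) * ((p + t * q)⁻¹) ^ (n - 1) * (-(q * ((p + t * q)⁻¹) ^ 2))) * ((u + t * v)⁻¹) ^ n +
        ((p + t * q)⁻¹) ^ n *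
          ((n : ℂ) * ((u + t * v)⁻¹) ^ (n - 1) * (-(v * ((u + t * v)⁻¹) ^ 2)))) t := by
  have key : ∀ p q : ℂ, p + t * q ≠ 0 → HasDerivAt (fun t : ℂ => ((p + t * q)⁻¹) ^ n)
      ((n : ℂ) * ((p + t * q)⁻¹) ^ (n - 1) * (-(q * ((p + t * q)⁻¹) ^ 2))) t := by
    intro p q h
    have h0 : HasDerivAt (fun t : ℂ => p + t * q) q t := by
      simpa using ((hasDerivAt_id t).mul_const q).const_add p
    have h3 := (h0.fun_inv h).fun_pow n
    rwa [show -q / (p + t * q) ^ 2 = -(q * ((p + t * q)⁻¹) ^ 2) by rw [inv_pow]; ring] at h3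
  exact (key p q h1).mul (key u v h2)

lemma aux_diff_int {E : Type*} [MeasurableSpace E] (μ : Measure E) [IsFiniteMeasure μ] (n : ℕ)
    (p q u v : E → ℂ) (hp : Measurable p) (hq : Measurable q) (hu : Measurable u)
    (hv : Measurable v) (t₀ : ℂ) (s : Set ℂ) (hs : s ∈ nhds t₀) (δ M : ℝ) (hδ : 0 < δ)
    (h : ∀ᵐ ζ ∂μ, ‖q ζ‖ ≤ M ∧ ‖v ζ‖ ≤ M ∧
      ∀ t ∈ s, δ ≤ ‖p ζ + t * q ζ‖ ∧ δ ≤ ‖u ζ + t * v ζ‖) :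
    DifferentiableAt ℂ
      (fun t : ℂ => ∫ ζ, ((p ζ + t * q ζ)⁻¹) ^ n * ((u ζ + t * v ζ)⁻¹) ^ n ∂μ) t₀ := by
  have hi : ∀ x : ℂ, δ ≤ ‖x‖ → ‖x⁻¹‖ ≤ δ⁻¹ := by
    intro x hx
    rw [norm_inv]
    exact inv_anti₀ hδ hx
  have hmem : t₀ ∈ s := mem_of_mem_nhds hs
  have hmeas : ∀ t : ℂ, Measurable fun ζ => ((p ζ + t * q ζ)⁻¹) ^ n * ((u ζ + t * v ζ)⁻¹) ^ n := by
    intro t; fun_prop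
  have hD : 0 ≤ δ⁻¹ := by positivity
  have := hasDerivAt_integral_of_dominated_loc_of_deriv_le (μ := μ) (x₀ := t₀) hs
    (F := fun t ζ => ((p ζ + t * q ζ)⁻¹) ^ n * ((u ζ + t * v ζ)⁻¹) ^ n)
    (F' := fun t ζ => (((n : ℂ) * ((p ζ + t * q ζ)⁻¹) ^ (n - 1) *
      (-(q ζ * ((p ζ + t * q ζ)⁻¹) ^ 2))) * ((u ζ + t * v ζ)⁻¹) ^ n +
        ((p ζ + t * q ζ)⁻¹) ^ n *
          ((n : ℂ) * ((u ζ + t * v ζ)⁻¹) ^ (n - 1) * (-(v ζ * ((u ζ + t * v ζ)⁻¹) ^ 2)))))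
    (bound := fun _ => (((n : ℝ) * (δ⁻¹) ^ (n - 1) *
      (M * (δ⁻¹) ^ 2)) * (δ⁻¹) ^ n +
        (δ⁻¹) ^ n *
          ((n : ℝ) * (δ⁻¹) ^ (n - 1) * (M * (δ⁻¹) ^ 2))))
    (Filter.Eventually.of_forall fun t => (hmeas t).aestronglyMeasurable)
    ?_ ?_ ?_ (integrable_const _) ?_
  · exact this.2.differentiableAt
  · refine Integrable.of_bound (hmeas t₀).aestronglyMeasurable ((δ⁻¹) ^ n * (δ⁻¹) ^ n) ?_
    filter_upwards [h] with ζ hζ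
    obtain ⟨h1, h2⟩ := hζ.2.2 t₀ hmem
    rw [norm_mul, norm_pow, norm_pow]
    gcongr
    · exact hi _ h1
    · exact hi _ h2
  · refine Measurable.aestronglyMeasurable ?_
    fun_prop
  · filter_upwards [h] with ζ hζ t ht
    obtain ⟨h1, h2⟩ := hζ.2.2 t ht
    have e1 := hi _ h1
    have e2 := hi _ h2
    have hM : 0 ≤ M := (norm_nonneg _).trans hζ.1
    refine (norm_add_le _ _).trans ?_
    simp only [norm_mul, norm_pow, norm_neg, Complex.norm_natCast]
    have := hζ.1
    have := hζ.2.1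
    gcongr
  · filter_upwards [h] with ζ hζ t ht
    obtain ⟨h1, h2⟩ := hζ.2.2 t ht
    exact aux_hasDeriv n _ _ _ _ t (norm_pos_iff.1 (hδ.trans_le h1)) (norm_pos_iff.1 (hδ.trans_le h2))

section gen
variable {E : Type*} [NormedAddCommGroup E] [InnerProductSpace ℂ E]

/-- Cauchy kernel. -/
noncomputable def cauK (n : ℕ) (z ζ : E) : ℂ := ((1 - inner ℂ ζ z)⁻¹) ^ n

lemma aux_lower (z ζ : E) (hζ : ‖ζ‖ ≤ 1) : 1 - ‖z‖ ≤ ‖1 - inner ℂ ζ z‖ := by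
  have h1 : ‖inner ℂ ζ z‖ ≤ ‖z‖ := by
    refine (norm_inner_le_norm ζ z).trans ?_
    nlinarith [norm_nonneg z]
  have h2 := norm_sub_norm_le (1 : ℂ) (inner ℂ ζ z)
  rw [norm_one] at h2
  linarith

lemma aux_ne (z ζ : E) (hz : ‖z‖ < 1) (hζ : ‖ζ‖ ≤ 1) : 1 - inner ℂ ζ z ≠ 0 := by
  have := aux_lower z ζ hζ
  exact norm_pos_iff.1 (by linarith)

lemma cauK_bound (n : ℕ) (z ζ : E) (hz : ‖z‖ < 1) (hζ : ‖ζ‖ ≤ 1) :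
    ‖cauK n z ζ‖ ≤ ((1 - ‖z‖)⁻¹) ^ n := by
  have := aux_lower z ζ hζ
  rw [cauK, norm_pow, norm_inv]
  have : 0 < 1 - ‖z‖ := by linarith
  gcongr

lemma cauK_conj (n : ℕ) (z ζ : E) : (starRingEnd ℂ) (cauK n z ζ) = cauK n ζ z := by
  simp [cauK, inner_conj_symm]

lemma cauK_measurable [MeasurableSpace E] [BorelSpace E] (n : ℕ) (z : E) :
    Measurable (cauK n z : E → ℂ) := by
  have : Measurable fun ζ : E => inner ℂ ζ z :=
    Continuous.measurable (by fun_prop)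
  unfold cauK
  fun_prop

lemma polar [MeasurableSpace E] [BorelSpace E] (n : ℕ) (μ : Measure E) [IsFiniteMeasure μ]
    (hsupp : ∀ᵐ ζ ∂μ, ‖ζ‖ = 1) (b : E → ℂ) (hb : DifferentiableOn ℂ b (ball (0 : E) 1))
    (hbmap : ∀ z ∈ ball (0 : E) 1, b z ∈ ball (0 : ℂ) 1) (α : ℂ) (hα : ‖α‖ = 1)
    (hμ : ∀ z ∈ ball (0 : E) 1,
      ∫ ζ, (1 - ‖z‖ ^ 2) ^ n / ‖1 - inner ℂ ζ z‖ ^ (2 * n) ∂μ =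
        (1 - ‖b z‖ ^ 2) / ‖α - b z‖ ^ 2)
    (z w : E) (hz : z ∈ ball (0 : E) 1) (hw : w ∈ ball (0 : E) 1) :
    ∫ ζ, cauK n z ζ * (starRingEnd ℂ) (cauK n w ζ) ∂μ =
      (1 - b z * (starRingEnd ℂ) (b w)) / ((α - b z) * (starRingEnd ℂ) (α - b w)) *
        cauK n z w := by
  have hne : ∀ x ∈ ball (0 : E) 1, α - b x ≠ 0 := by
    intro x hx h0
    have h1 := hbmap x hx
    rw [mem_ball_zero_iff] at h1
    rw [← sub_eq_zero.1 h0, hα] at h1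
    exact lt_irrefl _ h1
  -- the diagonal
  have hdiag : ∀ z ∈ ball (0 : E) 1, ∫ ζ, cauK n z ζ * (starRingEnd ℂ) (cauK n z ζ) ∂μ =
      (1 - b z * (starRingEnd ℂ) (b z)) / ((α - b z) * (starRingEnd ℂ) (α - b z)) *
        cauK n z z := by
    intro z hz
    have h1 := hμ z hz
    rw [mem_ball_zero_iff] at hz
    have hpos : (0 : ℝ) < 1 - ‖z‖ ^ 2 := by nlinarith [norm_nonneg z]
    have h2 : ∀ ζ : E, (1 - ‖z‖ ^ 2) ^ n / ‖1 - inner ℂ ζ z‖ ^ (2 * n) =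
        (1 - ‖z‖ ^ 2) ^ n * ‖cauK n z ζ‖ ^ 2 := by
      intro ζ
      rw [cauK, norm_pow, norm_inv, div_eq_mul_inv, ← inv_pow, pow_mul']
    simp_rw [h2, integral_const_mul] at h1
    have h3 : ∀ ζ : E, cauK n z ζ * (starRingEnd ℂ) (cauK n z ζ) =
        ((‖cauK n z ζ‖ ^ 2 : ℝ) : ℂ) := by
      intro ζ
      rw [Complex.mul_conj, Complex.normSq_eq_norm_sq]
    simp_rw [h3]
    rw [integral_complex_ofReal, Complex.mul_conj, Complex.normSq_eq_norm_sq, Complex.mul_conj,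
      Complex.normSq_eq_norm_sq]
    have h4 : cauK n z z = ((((1 - ‖z‖ ^ 2) ^ n)⁻¹ : ℝ) : ℂ) := by
      rw [cauK, inner_self_eq_norm_sq_to_K]
      push_cast
      rw [inv_pow]
      rfl
    rw [h4]
    have h5 : ∫ ζ, ‖cauK n z ζ‖ ^ 2 ∂μ =
        (1 - ‖b z‖ ^ 2) / ‖α - b z‖ ^ 2 * ((1 - ‖z‖ ^ 2) ^ n)⁻¹ := by
      rw [← h1]
      field_simp
    rw [h5]
    push_cast
    ring
  -- the complexified segment
  set m : E := (2⁻¹ : ℂ) • (z + w) with hm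
  set d : E := (2⁻¹ : ℂ) • (z - w) with hd
  set Z : ℂ → E := fun t => m + t • d with hZ
  set W : ℂ → E := fun t => m - t • d with hW
  set W' : ℂ → E := fun t => W ((starRingEnd ℂ) t) with hW'
  set Ω : Set ℂ := {t | ‖Z t‖ < 1 ∧ ‖W' t‖ < 1} with hΩ
  have hZc : Continuous Z := by fun_prop
  have hWc : Continuous W := by fun_prop
  have hW'c : Continuous W' := hWc.comp Complex.continuous_conj
  have hopen : IsOpen Ω :=
    (isOpen_lt hZc.norm continuous_const).inter (isOpen_lt hW'c.norm continuous_const)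
  have hconv : Convex ℝ Ω := by
    have c : Convex ℝ (ball (0 : E) 1) := convex_ball 0 1
    intro x hx y hy r s hr hs hrs
    have h1 : Z (r • x + s • y) = r • Z x + s • Z y := by
      have hr' : (r : ℂ) = 1 - s := by rw [← Complex.ofReal_one, ← hrs]; push_cast; ring
      simp only [hZ, RCLike.real_smul_eq_coe_smul (K := ℂ) r, RCLike.real_smul_eq_coe_smul (K := ℂ) s,
        RCLike.ofReal_eq_complex_ofReal, hr', smul_eq_mul]
      module
    have h2 : W' (r • x + s • y) = r • W' x + s • W' y := by
      have hr' : (r : ℂ) = 1 - s := by rw [← Complex.ofReal_one, ← hrs]; push_cast; ring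
      simp only [hW', hW, RCLike.real_smul_eq_coe_smul (K := ℂ) r,
        RCLike.real_smul_eq_coe_smul (K := ℂ) s,
        RCLike.ofReal_eq_complex_ofReal, hr', smul_eq_mul, map_add, map_mul, map_sub, map_one,
        Complex.conj_ofReal]
      module
    constructor
    · rw [h1, ← mem_ball_zero_iff]
      exact c (mem_ball_zero_iff.2 hx.1) (mem_ball_zero_iff.2 hy.1) hr hs hrs
    · rw [h2, ← mem_ball_zero_iff]
      exact c (mem_ball_zero_iff.2 hx.2) (mem_ball_zero_iff.2 hy.2) hr hs hrs
  have hZ1 : Z 1 = z := by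
    simp only [hZ, hm, hd]; module
  have hW1 : W' 1 = w := by
    simp only [hW', hW, hm, hd, map_one]; module
  have h1Ω : (1 : ℂ) ∈ Ω := by
    simp only [hΩ, mem_ofPred_eq, hZ1, hW1]
    exact ⟨mem_ball_zero_iff.1 hz, mem_ball_zero_iff.1 hw⟩
  have h1Ω' : (-1 : ℂ) ∈ Ω := by
    have e1 : Z (-1) = w := by simp only [hZ, hm, hd]; module
    have e2 : W' (-1) = z := by simp only [hW', hW, hm, hd, map_one, map_neg]; module
    simp only [hΩ, mem_ofPred_eq, e1, e2]
    exact ⟨mem_ball_zero_iff.1 hw, mem_ball_zero_iff.1 hz⟩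
  have h0Ω : (0 : ℂ) ∈ Ω := by
    have := hconv h1Ω h1Ω' (a := 1/2) (b := 1/2) (by norm_num) (by norm_num) (by norm_num)
    simpa using this
  -- holomorphy of the three ingredients
  have hbZ : DifferentiableOn ℂ (fun t => b (Z t)) Ω := by
    refine hb.comp (t := ball 0 1) ?_ ?_
    · simp only [hZ]; fun_prop
    · intro t ht; exact mem_ball_zero_iff.2 ht.1
  have hbW : DifferentiableOn ℂ (fun t => (starRingEnd ℂ) (b (W' t))) Ω := by
    intro t ht
    have h1 : DifferentiableAt ℂ (fun t => b (W t)) ((starRingEnd ℂ) t) := by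
      have h2 : DifferentiableAt ℂ b (W ((starRingEnd ℂ) t)) :=
        hb.differentiableAt (isOpen_ball.mem_nhds (mem_ball_zero_iff.2 ht.2))
      refine DifferentiableAt.comp (g := b) (f := W) _ h2 ?_
      simp only [hW]; fun_prop
    exact (differentiableAt_conj_conj_iff.2 h1).differentiableWithinAt
  have hinnW : ∀ (t : ℂ) (ζ : E), inner ℂ (W' t) ζ = inner ℂ m ζ - t * inner ℂ d ζ := by
    intro t ζ
    simp only [hW', hW, inner_sub_left, inner_smul_left, Complex.conj_conj]
  have hinnZ : ∀ (t : ℂ) (ζ : E), inner ℂ ζ (Z t) = inner ℂ ζ m + t * inner ℂ ζ d := by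
    intro t ζ
    simp only [hZ, inner_add_right, inner_smul_right]
  have hCC : DifferentiableOn ℂ (fun t => cauK n (Z t) (W' t)) Ω := by
    intro t ht
    have e : (fun t => cauK n (Z t) (W' t)) = fun t =>
        ((1 - (inner ℂ m m + t * inner ℂ m d - t * (inner ℂ d m + t * inner ℂ d d)))⁻¹) ^ n := by
      funext t
      rw [cauK, hinnW, hinnZ, hinnZ]
    have hne0 : 1 - inner ℂ (W' t) (Z t) ≠ 0 := aux_ne _ _ ht.1 ht.2.le
    rw [hinnW, hinnZ, hinnZ] at hne0
    rw [e]
    refine DifferentiableAt.differentiableWithinAt ?_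
    have hd0 : DifferentiableAt ℂ (fun t : ℂ => 1 - (inner ℂ m m + t * inner ℂ m d -
        t * (inner ℂ d m + t * inner ℂ d d))) t := by fun_prop
    exact (hd0.fun_inv hne0).fun_pow n
  have hG : DifferentiableOn ℂ
      (fun t => ∫ ζ, cauK n (Z t) ζ * (starRingEnd ℂ) (cauK n (W' t) ζ) ∂μ) Ω := by
    intro t₀ ht₀
    have e : (fun t => ∫ ζ, cauK n (Z t) ζ * (starRingEnd ℂ) (cauK n (W' t) ζ) ∂μ) =
        fun t => ∫ ζ, (((1 - inner ℂ ζ m) + t * (-inner ℂ ζ d))⁻¹) ^ n *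
          (((1 - inner ℂ m ζ) + t * inner ℂ d ζ)⁻¹) ^ n ∂μ := by
      funext t
      congr 1
      funext ζ
      rw [cauK_conj, cauK, cauK, hinnW, hinnZ]
      congr 3 <;> ring
    rw [e]
    refine DifferentiableAt.differentiableWithinAt ?_
    obtain ⟨ρ, hρ1, hρ2⟩ := exists_between (max_lt ht₀.1 ht₀.2)
    have hs : {t : ℂ | ‖Z t‖ < ρ ∧ ‖W' t‖ < ρ} ∈ nhds t₀ :=
      ((isOpen_lt hZc.norm continuous_const).inter
        (isOpen_lt hW'c.norm continuous_const)).mem_nhds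
        ⟨(le_max_left _ _).trans_lt hρ1, (le_max_right _ _).trans_lt hρ1⟩
    refine aux_diff_int μ n (fun ζ => 1 - inner ℂ ζ m) (fun ζ => -inner ℂ ζ d)
      (fun ζ => 1 - inner ℂ m ζ) (fun ζ => inner ℂ d ζ)
      (Continuous.measurable (by fun_prop)) (Continuous.measurable (by fun_prop))
      (Continuous.measurable (by fun_prop)) (Continuous.measurable (by fun_prop))
      t₀ _ hs (1 - ρ) ‖d‖ (by linarith) ?_
    filter_upwards [hsupp] with ζ hζ
    refine ⟨?_, ?_, ?_⟩
    · rw [norm_neg]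
      simpa [hζ] using norm_inner_le_norm (𝕜 := ℂ) ζ d
    · simpa [hζ] using norm_inner_le_norm (𝕜 := ℂ) d ζ
    · intro t ht
      have l1 := aux_lower (Z t) ζ hζ.le
      have l2 := aux_lower (W' t) ζ hζ.le
      rw [← inner_conj_symm, ← Complex.norm_conj, map_sub, Complex.conj_conj] at l2
      rw [hinnZ] at l1
      rw [map_one, hinnW] at l2
      have := ht.1
      have := ht.2
      constructor
      · have e1 : 1 - inner ℂ ζ m + t * -inner ℂ ζ d = 1 - (inner ℂ ζ m + t * inner ℂ ζ d) := by
          ring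
        rw [e1]; linarith
      · have e1 : 1 - inner ℂ m ζ + t * inner ℂ d ζ = 1 - (inner ℂ m ζ - t * inner ℂ d ζ) := by
          ring
        rw [e1]; linarith
  set P : ℂ → ℂ := fun t => (∫ ζ, cauK n (Z t) ζ * (starRingEnd ℂ) (cauK n (W' t) ζ) ∂μ) -
      (1 - b (Z t) * (starRingEnd ℂ) (b (W' t))) /
        ((α - b (Z t)) * (starRingEnd ℂ) (α - b (W' t))) * cauK n (Z t) (W' t) with hP
  have hPd : DifferentiableOn ℂ P Ω := by
    refine hG.sub (DifferentiableOn.mul (DifferentiableOn.div ?_ ?_ ?_) hCC)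
    · exact (hbZ.mul hbW).const_sub 1
    · refine (hbZ.const_sub α).mul ?_
      simp only [map_sub]
      exact hbW.const_sub _
    · intro t ht
      refine mul_ne_zero (hne _ (mem_ball_zero_iff.2 ht.1)) ?_
      exact (map_ne_zero _).2 (hne _ (mem_ball_zero_iff.2 ht.2))
  have hzero : EqOn P 0 Ω := by
    refine (hPd.analyticOnNhd hopen).eqOn_zero_of_preconnected_of_frequently_eq_zero
      hconv.isPreconnected h0Ω ?_
    have ht : Tendsto (fun y : ℝ => (y : ℂ) * Complex.I) (nhdsWithin 0 {0}ᶜ)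
        (nhdsWithin 0 {0}ᶜ) := by
      refine tendsto_nhdsWithin_of_tendsto_nhds_of_eventually_within _ ?_ ?_
      · have : Continuous fun y : ℝ => (y : ℂ) * Complex.I := by fun_prop
        have := this.tendsto 0
        simp only [Complex.ofReal_zero, zero_mul] at this
        exact this.mono_left nhdsWithin_le_nhds
      · filter_upwards [self_mem_nhdsWithin] with y hy
        simpa using hy
    refine ht.frequently (Filter.Eventually.frequently ?_)
    have hev : ∀ᶠ t in nhdsWithin (0 : ℂ) {0}ᶜ, t ∈ Ω :=
      nhdsWithin_le_nhds (hopen.mem_nhds h0Ω)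
    filter_upwards [ht.eventually hev] with y hy
    have e1 : W' ((y : ℂ) * Complex.I) = Z ((y : ℂ) * Complex.I) := by
      simp [hW', hW, hZ]
    simp only [hP, e1]
    rw [hdiag _ (mem_ball_zero_iff.2 hy.1), sub_self]
  have := hzero h1Ω
  simp only [hP, hZ1, hW1, Pi.zero_apply] at this
  exact sub_eq_zero.1 this
end gen

lemma aux_cs {E : Type*} [MeasurableSpace E] (μ : Measure E) (f g : E → ℂ)
    (hf : MemLp f 2 μ) (hg : MemLp g 2 μ) :
    ‖∫ x, f x * g x ∂μ‖ ^ 2 ≤ (∫ x, ‖f x‖ ^ 2 ∂μ) * ∫ x, ‖g x‖ ^ 2 ∂μ := by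
  have h2 : ENNReal.ofReal 2 = 2 := by norm_num
  have h := integral_mul_norm_le_Lp_mul_Lq (μ := μ) (f := f) (g := g) Real.HolderConjugate.two_two
    (by rwa [h2]) (by rwa [h2])
  have h1 : ‖∫ x, f x * g x ∂μ‖ ≤ ∫ x, ‖f x‖ * ‖g x‖ ∂μ := by
    refine (norm_integral_le_integral_norm _).trans_eq ?_
    simp only [norm_mul]
  have h3 := h1.trans h
  simp only [Real.rpow_two, ← Real.sqrt_eq_rpow] at h3
  have hA : 0 ≤ ∫ x, ‖f x‖ ^ 2 ∂μ := integral_nonneg fun x => by positivity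
  have hB : 0 ≤ ∫ x, ‖g x‖ ^ 2 ∂μ := integral_nonneg fun x => by positivity
  calc _ ≤ (√(∫ x, ‖f x‖ ^ 2 ∂μ) * √(∫ x, ‖g x‖ ^ 2 ∂μ)) ^ 2 := by gcongr
    _ = _ := by rw [mul_pow, Real.sq_sqrt hA, Real.sq_sqrt hB]

lemma main_gen {E : Type*} [NormedAddCommGroup E] [InnerProductSpace ℂ E]
    [MeasurableSpace E] [BorelSpace E] (n : ℕ) (σ μ : Measure E)
    [IsFiniteMeasure σ] [IsFiniteMeasure μ]
    (hσs : ∀ᵐ ζ ∂σ, ‖ζ‖ = 1) (hμs : ∀ᵐ ζ ∂μ, ‖ζ‖ = 1)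
    (I : E → ℂ) (hI : DifferentiableOn ℂ I (ball (0 : E) 1))
    (hImap : ∀ z ∈ ball (0 : E) 1, I z ∈ ball (0 : ℂ) 1)
    (b : E → ℂ) (hb : DifferentiableOn ℂ b (ball (0 : E) 1))
    (hbmap : ∀ z ∈ ball (0 : E) 1, b z ∈ ball (0 : ℂ) 1) (α : ℂ) (hα : ‖α‖ = 1)
    (hσ : ∀ z ∈ ball (0 : E) 1,
      ∫ ζ, (1 - ‖z‖ ^ 2) ^ n / ‖1 - inner ℂ ζ z‖ ^ (2 * n) ∂σ =
        (1 - ‖I z‖ ^ 2) / ‖α - I z‖ ^ 2)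
    (hμ : ∀ z ∈ ball (0 : E) 1,
      ∫ ζ, (1 - ‖z‖ ^ 2) ^ n / ‖1 - inner ℂ ζ z‖ ^ (2 * n) ∂μ =
        (1 - ‖b z‖ ^ 2) / ‖α - b z‖ ^ 2)
    (hac : σ ≪ μ) (hL2 : ∫⁻ ζ, (σ.rnDeriv μ ζ) ^ 2 ∂μ < ⊤)
    (w : E) (hw : w ∈ ball (0 : E) 1) :
    ∃ c : ℝ, 0 ≤ c ∧ ∀ (m : ℕ) (x : Fin m → E) (a : Fin m → ℂ),
    (∀ i, x i ∈ ball (0 : E) 1) →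
    0 ≤ (∑ i, ∑ j, (starRingEnd ℂ) (a i) * a j *
      ((c : ℂ) * ((1 - b (x i) * (starRingEnd ℂ) (b (x j))) * cauK n (x i) (x j)) -
        ((α - b (x i)) / (α - I (x i)) * ((1 - I (x i) * (starRingEnd ℂ) (I w)) * cauK n (x i) w)) *
        (starRingEnd ℂ) ((α - b (x j)) / (α - I (x j)) *
          ((1 - I (x j) * (starRingEnd ℂ) (I w)) * cauK n (x j) w)))).re := by
  have hne : ∀ (b : E → ℂ), (∀ z ∈ ball (0 : E) 1, b z ∈ ball (0 : ℂ) 1) →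
      ∀ x ∈ ball (0 : E) 1, α - b x ≠ 0 := by
    intro b hbmap x hx h0
    have h1 := hbmap x hx
    rw [mem_ball_zero_iff] at h1
    rw [← sub_eq_zero.1 h0, hα] at h1
    exact lt_irrefl _ h1
  set g : E → ℂ := fun ζ => ((σ.rnDeriv μ ζ).toReal : ℂ) * (starRingEnd ℂ) (cauK n w ζ) with hg
  have hcm : ∀ z, Measurable (cauK n z : E → ℂ) := cauK_measurable n
  have hbd : ∀ z ∈ ball (0 : E) 1, ∀ᵐ ζ ∂μ, ‖cauK n z ζ‖ ≤ ((1 - ‖z‖)⁻¹) ^ n := by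
    intro z hz
    filter_upwards [hμs] with ζ hζ
    exact cauK_bound n z ζ (mem_ball_zero_iff.1 hz) hζ.le
  have hrn : MemLp (fun ζ => ((σ.rnDeriv μ ζ).toReal : ℂ)) 2 μ := by
    refine ⟨(Complex.measurable_ofReal.comp
      (Measure.measurable_rnDeriv σ μ).ennreal_toReal).aestronglyMeasurable, ?_⟩
    rw [eLpNorm_lt_top_iff_lintegral_rpow_enorm_lt_top (by norm_num) (by norm_num)]
    refine lt_of_le_of_lt (lintegral_mono fun ζ => ?_) hL2
    simp only [ENNReal.toReal_ofNat, ENNReal.rpow_ofNat]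
    gcongr
    rw [← ofReal_norm, Complex.norm_real, Real.norm_of_nonneg ENNReal.toReal_nonneg]
    exact ENNReal.ofReal_toReal_le
  have hgL : MemLp g 2 μ := by
    have hm2 : Measurable fun ζ => (starRingEnd ℂ) (cauK n w ζ) :=
      Complex.continuous_conj.measurable.comp (hcm _)
    refine MemLp.of_le_mul (c := ((1 - ‖w‖)⁻¹) ^ n) hrn
      (hrn.1.mul hm2.aestronglyMeasurable) ?_
    filter_upwards [hbd w hw] with ζ h1
    simp only [hg]
    rw [norm_mul, Complex.norm_conj, mul_comm]
    gcongr
  have hCL : ∀ z ∈ ball (0 : E) 1, MemLp (cauK n z) 2 μ := fun z hz =>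
    MemLp.of_bound (hcm z).aestronglyMeasurable _ (hbd z hz)
  have hF : ∀ z ∈ ball (0 : E) 1,
      (α - b z) / (α - I z) * ((1 - I z * (starRingEnd ℂ) (I w)) * cauK n z w) =
        (starRingEnd ℂ) (α - I w) * ((α - b z) * ∫ ζ, cauK n z ζ * g ζ ∂μ) := by
    intro z hz
    have h1 := polar n σ hσs I hI hImap α hα hσ z w hz hw
    rw [← integral_rnDeriv_smul hac] at h1
    have h2 : ∫ ζ, cauK n z ζ * g ζ ∂μ = ∫ ζ, (σ.rnDeriv μ ζ).toReal •
        (cauK n z ζ * (starRingEnd ℂ) (cauK n w ζ)) ∂μ := by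
      congr 1
      funext ζ
      simp only [hg, Complex.real_smul]
      ring
    rw [h2, h1]
    have := hne I hImap z hz
    have h3 : (starRingEnd ℂ) (α - I w) ≠ 0 := (map_ne_zero _).2 (hne I hImap w hw)
    field_simp
  set c : ℝ := ‖α - I w‖ ^ 2 * ∫ ζ, ‖g ζ‖ ^ 2 ∂μ with hc
  have hg0 : 0 ≤ ∫ ζ, ‖g ζ‖ ^ 2 ∂μ := integral_nonneg fun x => by positivity
  refine ⟨c, by positivity, ?_⟩
  intro m x a hx
  set e : Fin m → ℂ := fun i => (starRingEnd ℂ) (a i) * (α - b (x i)) with he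
  set f : E → ℂ := fun ζ => ∑ i, e i * cauK n (x i) ζ with hf
  have hfL : MemLp f 2 μ := memLp_finsetSum _ fun i _ => (hCL _ (hx i)).const_mul (e i)
  have hcs := aux_cs μ f g hfL hgL
  -- expand the norm of f
  have hff : ((∫ ζ, ‖f ζ‖ ^ 2 ∂μ : ℝ) : ℂ) = ∑ i, ∑ j, (starRingEnd ℂ) (a i) * a j *
      ((1 - b (x i) * (starRingEnd ℂ) (b (x j))) * cauK n (x i) (x j)) := by
    have h3 : ∀ ζ : E, ((‖f ζ‖ ^ 2 : ℝ) : ℂ) =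
        ∑ i, ∑ j, (e i * (starRingEnd ℂ) (e j)) *
          (cauK n (x i) ζ * (starRingEnd ℂ) (cauK n (x j) ζ)) := by
      intro ζ
      rw [← Complex.normSq_eq_norm_sq, ← Complex.mul_conj]
      simp only [hf]
      rw [map_sum, Finset.sum_mul_sum]
      refine Finset.sum_congr rfl fun i _ => Finset.sum_congr rfl fun j _ => ?_
      rw [map_mul]; ring
    have hint : ∀ i j, Integrable (fun ζ => (e i * (starRingEnd ℂ) (e j)) *
          (cauK n (x i) ζ * (starRingEnd ℂ) (cauK n (x j) ζ))) μ := by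
      intro i j
      refine Integrable.const_mul ?_ _
      have hm2 : Measurable fun ζ => cauK n (x i) ζ * (starRingEnd ℂ) (cauK n (x j) ζ) :=
        (hcm _).mul (Complex.continuous_conj.measurable.comp (hcm _))
      refine Integrable.of_bound hm2.aestronglyMeasurable
        (((1 - ‖x i‖)⁻¹) ^ n * ((1 - ‖x j‖)⁻¹) ^ n) ?_
      filter_upwards [hbd _ (hx i), hbd _ (hx j)] with ζ h1 h2
      rw [norm_mul, Complex.norm_conj]
      exact mul_le_mul h1 h2 (norm_nonneg _) ((norm_nonneg _).trans h1)
    rw [← integral_complex_ofReal]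
    simp_rw [h3]
    rw [integral_finsetSum _ fun i _ => integrable_finsetSum _ fun j _ => hint i j]
    refine Finset.sum_congr rfl fun i _ => ?_
    rw [integral_finsetSum _ fun j _ => hint i j]
    refine Finset.sum_congr rfl fun j _ => ?_
    rw [integral_const_mul, polar n μ hμs b hb hbmap α hα hμ _ _ (hx i) (hx j)]
    have h1 := hne b hbmap _ (hx i)
    have h2 : (starRingEnd ℂ) (α - b (x j)) ≠ 0 := (map_ne_zero _).2 (hne b hbmap _ (hx j))
    simp only [he, map_mul, Complex.conj_conj]
    field_simp
  have hfg : ∫ ζ, f ζ * g ζ ∂μ = ∑ i, e i * ∫ ζ, cauK n (x i) ζ * g ζ ∂μ := by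
    simp only [hf, Finset.sum_mul, mul_assoc]
    rw [integral_finsetSum]
    · simp only [integral_const_mul]
    · intro i _
      refine Integrable.const_mul ?_ _
      exact (hCL _ (hx i)).integrable_mul hgL
  have hsum : (∑ i, ∑ j, (starRingEnd ℂ) (a i) * a j *
      ((c : ℂ) * ((1 - b (x i) * (starRingEnd ℂ) (b (x j))) * cauK n (x i) (x j)) -
        ((α - b (x i)) / (α - I (x i)) * ((1 - I (x i) * (starRingEnd ℂ) (I w)) * cauK n (x i) w)) *
        (starRingEnd ℂ) ((α - b (x j)) / (α - I (x j)) *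
          ((1 - I (x j) * (starRingEnd ℂ) (I w)) * cauK n (x j) w)))) =
      ((c * (∫ ζ, ‖f ζ‖ ^ 2 ∂μ) - ‖α - I w‖ ^ 2 * ‖∫ ζ, f ζ * g ζ ∂μ‖ ^ 2 : ℝ) : ℂ) := by
    have h4 : ((‖α - I w‖ ^ 2 * ‖∫ ζ, f ζ * g ζ ∂μ‖ ^ 2 : ℝ) : ℂ) =
        ((starRingEnd ℂ) (α - I w) * ∫ ζ, f ζ * g ζ ∂μ) *
        (starRingEnd ℂ) ((starRingEnd ℂ) (α - I w) * ∫ ζ, f ζ * g ζ ∂μ) := by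
      rw [Complex.mul_conj, Complex.normSq_eq_norm_sq, norm_mul, Complex.norm_conj, mul_pow]
    rw [Complex.ofReal_sub, Complex.ofReal_mul c, hff, h4, hfg, Finset.mul_sum _ _ ((starRingEnd ℂ) (α - I w)), map_sum,
      Finset.sum_mul_sum, Finset.mul_sum, ← Finset.sum_sub_distrib]
    refine Finset.sum_congr rfl fun i _ => ?_
    rw [Finset.mul_sum, ← Finset.sum_sub_distrib]
    refine Finset.sum_congr rfl fun j _ => ?_
    rw [hF _ (hx i), hF _ (hx j)]
    simp only [he, map_mul, Complex.conj_conj]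
    ring
  rw [hsum, Complex.ofReal_re, hc]
  have : 0 ≤ ‖α - I w‖ ^ 2 := by positivity
  nlinarith [mul_le_mul_of_nonneg_left hcs this]

/-- (i) ⇒ (ii) of the main theorem: let `I` be inner on the ball `B_n` (`n ≥ 2`), `b` a
non-constant holomorphic self-map of the disc defined on `B_n`, `α` unimodular, and let
`σ = σ_α[I]`, `μ = σ_α[b]` be the Clark measures. If `σ ≪ μ` with `dσ/dμ ∈ L²(μ)`, then for
every `w ∈ B_n` the function `z ↦ ((α - b z)/(α - I z))·K(z,w)` lies in the
de Branges–Rovnyak space `H(b)`, where `K(z,w) = (1 - I z conj (I w))(1 - ⟨z,w⟩)^{-n}`. -/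
theorem stmt9 (n : ℕ) (hn : 2 ≤ n)
    [MeasurableSpace (EuclideanSpace ℂ (Fin n))]
    [BorelSpace (EuclideanSpace ℂ (Fin n))]
    (Λ : Measure (EuclideanSpace ℂ (Fin n))) (hΛprob : IsProbabilityMeasure Λ)
    (hΛsupp : Λ (sphere (0 : EuclideanSpace ℂ (Fin n)) 1)ᶜ = 0)
    (hΛinv : ∀ U : EuclideanSpace ℂ (Fin n) ≃ₗᵢ[ℂ] EuclideanSpace ℂ (Fin n),
      Measure.map (⇑U) Λ = Λ)
    (I : EuclideanSpace ℂ (Fin n) → ℂ)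
    (hI : DifferentiableOn ℂ I (ball (0 : EuclideanSpace ℂ (Fin n)) 1))
    (hImap : ∀ z ∈ ball (0 : EuclideanSpace ℂ (Fin n)) 1, I z ∈ ball (0 : ℂ) 1)
    (Ib : EuclideanSpace ℂ (Fin n) → ℂ)
    (hIinner : ∀ᵐ ζ ∂Λ,
      Tendsto (fun r : ℝ => I (r • ζ)) (nhdsWithin 1 (Iio 1)) (nhds (Ib ζ)) ∧ ‖Ib ζ‖ = 1)
    (b : EuclideanSpace ℂ (Fin n) → ℂ)
    (hb : DifferentiableOn ℂ b (ball (0 : EuclideanSpace ℂ (Fin n)) 1))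
    (hbmap : ∀ z ∈ ball (0 : EuclideanSpace ℂ (Fin n)) 1, b z ∈ ball (0 : ℂ) 1)
    (hbnc : ∃ z₁ ∈ ball (0 : EuclideanSpace ℂ (Fin n)) 1,
      ∃ z₂ ∈ ball (0 : EuclideanSpace ℂ (Fin n)) 1, b z₁ ≠ b z₂)
    (α : ℂ) (hα : ‖α‖ = 1)
    (σ μ : Measure (EuclideanSpace ℂ (Fin n)))
    (hσfin : IsFiniteMeasure σ) (hμfin : IsFiniteMeasure μ)
    (hσsupp : σ (sphere (0 : EuclideanSpace ℂ (Fin n)) 1)ᶜ = 0)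
    (hμsupp : μ (sphere (0 : EuclideanSpace ℂ (Fin n)) 1)ᶜ = 0)
    (hσ : ∀ z ∈ ball (0 : EuclideanSpace ℂ (Fin n)) 1,
      ∫ ζ, (1 - ‖z‖ ^ 2) ^ n /
          ‖1 - ∑ i, z i * (starRingEnd ℂ) (ζ i)‖ ^ (2 * n) ∂σ =
        (1 - ‖I z‖ ^ 2) / ‖α - I z‖ ^ 2)
    (hμ : ∀ z ∈ ball (0 : EuclideanSpace ℂ (Fin n)) 1,
      ∫ ζ, (1 - ‖z‖ ^ 2) ^ n /
          ‖1 - ∑ i, z i * (starRingEnd ℂ) (ζ i)‖ ^ (2 * n) ∂μ =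
        (1 - ‖b z‖ ^ 2) / ‖α - b z‖ ^ 2)
    (hac : σ ≪ μ)
    (hL2 : ∫⁻ ζ, (σ.rnDeriv μ ζ) ^ 2 ∂μ < ⊤) :
    ∀ w ∈ ball (0 : EuclideanSpace ℂ (Fin n)) 1,
      MemRKHSBall n
        (fun z w' => (1 - b z * (starRingEnd ℂ) (b w')) *
          ((1 - ∑ i, z i * (starRingEnd ℂ) (w' i))⁻¹) ^ n)
        (fun z => (α - b z) / (α - I z) *
          ((1 - I z * (starRingEnd ℂ) (I w)) *
            ((1 - ∑ i, z i * (starRingEnd ℂ) (w i))⁻¹) ^ n)) := by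
  intro w hw
  have hnorm : ∀ ν : Measure (EuclideanSpace ℂ (Fin n)),
      ν (sphere (0 : EuclideanSpace ℂ (Fin n)) 1)ᶜ = 0 → ∀ᵐ ζ ∂ν, ‖ζ‖ = 1 := by
    intro ν hν
    have h1 : ∀ᵐ ζ ∂ν, ζ ∈ sphere (0 : EuclideanSpace ℂ (Fin n)) 1 := mem_ae_iff.2 hν
    filter_upwards [h1] with ζ hζ
    simpa using hζ
  have hin : ∀ z ζ : EuclideanSpace ℂ (Fin n),
      ∑ i, z i * (starRingEnd ℂ) (ζ i) = inner ℂ ζ z := by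
    intro z ζ
    rw [PiLp.inner_apply]
    rfl
  simp only [hin] at hσ hμ ⊢
  exact main_gen n σ μ (hnorm σ hσsupp) (hnorm μ hμsupp) I hI hImap b hb hbmap α hα hσ hμ hac hL2 w hw
end

section
/- Let I be an inner function on the unit ball B_n (n ≥ 2), b : B_n → D non-constant holomorphic, α unimodular, σ = σ_α[I], μ = σ_α[b], and K(z,w) = (1 − I(z)conj(I(w)))(1 − ⟨z,w⟩)^{-n}. If for some w ∈ B_n the function z ↦ ((α − b(z))/(α − I(z))) K(z,w) belongs to H(b), then σ ≪ μ and the Radon–Nikodym derivative dσ/dμ belongs to L²(μ). -/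
open Complex Metric MeasureTheory Set Filter

namespace Clk

set_option linter.unusedSectionVars false

open scoped Topology

/-- complex Euclidean space -/
abbrev E (n : ℕ) := EuclideanSpace ℂ (Fin n)
/-- closed unit ball -/
abbrev K (n : ℕ) := closedBall (0 : E n) 1
/-- continuous functions on the closed ball -/
abbrev Y (n : ℕ) := C(K n, ℂ)

instance instCompactK (n : ℕ) : CompactSpace (K n) :=
  isCompact_iff_compactSpace.mp (isCompact_closedBall _ _)

instance instNeK (n : ℕ) : Nonempty (K n) := ⟨⟨0, by simp⟩⟩

/-- the pairing `⟨z, ζ⟩` -/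
noncomputable def ip {n : ℕ} (z ζ : E n) : ℂ := ∑ i, z i * (starRingEnd ℂ) (ζ i)

lemma ip_eq {n : ℕ} (z ζ : E n) : ip z ζ = inner ℂ ζ z := by
  simp [ip, PiLp.inner_apply]

lemma norm_ip_le {n : ℕ} (z ζ : E n) : ‖ip z ζ‖ ≤ ‖z‖ * ‖ζ‖ := by
  rw [ip_eq, mul_comm]; exact norm_inner_le_norm _ _

lemma ip_self {n : ℕ} (z : E n) : ip z z = ((‖z‖ ^ 2 : ℝ) : ℂ) := by
  rw [ip_eq, inner_self_eq_norm_sq_to_K]; simp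

lemma ip_conj {n : ℕ} (z w : E n) : (starRingEnd ℂ) (ip z w) = ip w z := by
  rw [ip_eq, ip_eq, inner_conj_symm]

/-- coordinate function -/
noncomputable def x {n : ℕ} (i : Fin n) : Y n := ⟨fun ζ => (ζ : E n) i, by fun_prop⟩

@[simp] lemma x_apply {n : ℕ} (i : Fin n) (ζ : K n) : x i ζ = (ζ : E n) i := rfl

/-- `e z` is the function `ζ ↦ ⟨z, ζ⟩` -/
noncomputable def e {n : ℕ} : E n →L[ℂ] Y n :=
  LinearMap.toContinuousLinearMap
    { toFun := fun z => ∑ i, z i • star (x i)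
      map_add' := by intro a b; simp [add_smul, Finset.sum_add_distrib]
      map_smul' := by intro a b; simp [mul_smul, Finset.smul_sum] }

lemma e_def {n : ℕ} (z : E n) : e z = ∑ i, z i • star (x i) := rfl

@[simp] lemma e_apply {n : ℕ} (z : E n) (ζ : K n) : e z ζ = ip z ζ := by
  simp [e_def, ip, ContinuousMap.sum_apply]

lemma norm_e_le {n : ℕ} (z : E n) : ‖e z‖ ≤ ‖z‖ := by
  rw [ContinuousMap.norm_le _ (norm_nonneg _)]
  intro ζ
  rw [e_apply]
  have h := norm_ip_le z ζ
  have h2 : ‖(ζ : E n)‖ ≤ 1 := mem_closedBall_zero_iff.mp ζ.2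
  nlinarith [norm_nonneg z]

/-- `(1 - ⟨z, ζ⟩)⁻¹` -/
noncomputable def G {n : ℕ} (z : E n) : Y n := Ring.inverse (1 - e z)

lemma isUnit_one_sub_e {n : ℕ} {z : E n} (hz : ‖z‖ < 1) : IsUnit (1 - e z) :=
  isUnit_one_sub_of_norm_lt_one ((norm_e_le z).trans_lt hz)

lemma ringInverse_apply {n : ℕ} {f : Y n} (hf : IsUnit f) (ζ : K n) :
    (Ring.inverse f) ζ = (f ζ)⁻¹ := by
  have h := Ring.mul_inverse_cancel f hf
  have h2 : f ζ * (Ring.inverse f) ζ = 1 := by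
    rw [← ContinuousMap.mul_apply, h]; rfl
  exact eq_inv_of_mul_eq_one_right h2

lemma G_apply {n : ℕ} {z : E n} (hz : ‖z‖ < 1) (ζ : K n) : G z ζ = (1 - ip z ζ)⁻¹ := by
  rw [G, ringInverse_apply (isUnit_one_sub_e hz)]; simp

/-- Cauchy kernel -/
noncomputable def c {n : ℕ} (z : E n) : Y n := G z ^ n

lemma c_apply {n : ℕ} {z : E n} (hz : ‖z‖ < 1) (ζ : K n) : c z ζ = (1 - ip z ζ)⁻¹ ^ n := by
  rw [c, ContinuousMap.pow_apply, G_apply hz]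

lemma c_zero {n : ℕ} : c (0 : E n) = 1 := by
  ext ζ; rw [c_apply (by simp)]; simp [ip]

lemma differentiableOn_G {n : ℕ} : DifferentiableOn ℂ (G : E n → Y n) (ball 0 1) := by
  apply DifferentiableOn.inverse
  · exact ((differentiable_const _).sub e.differentiable).differentiableOn
  · intro z hz; exact isUnit_one_sub_e (by simpa using hz)

lemma differentiableOn_c {n : ℕ} : DifferentiableOn ℂ (c : E n → Y n) (ball 0 1) :=
  differentiableOn_G.pow n

lemma one_sub_ip_ne {n : ℕ} {z ζ : E n} (hz : ‖z‖ < 1) (hζ : ‖ζ‖ ≤ 1) : 1 - ip z ζ ≠ 0 := by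
  intro h
  have h1 : ip z ζ = 1 := (sub_eq_zero.mp h).symm
  have h2 := norm_ip_le z ζ
  rw [h1, norm_one] at h2
  nlinarith [norm_nonneg z, norm_nonneg ζ]

section meas
variable {n : ℕ} [MeasurableSpace (E n)] [BorelSpace (E n)]

/-- restriction to the closed ball -/
noncomputable def km (ρ : Measure (E n)) : Measure (K n) := ρ.comap Subtype.val

instance (ρ : Measure (E n)) [IsFiniteMeasure ρ] : IsFiniteMeasure (km ρ) := by
  unfold km; infer_instance

lemma integrable_Y (ρ : Measure (E n)) [IsFiniteMeasure ρ] (f : Y n) :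
    Integrable (fun ζ => f ζ) (km ρ) :=
  Continuous.integrable_of_hasCompactSupport f.continuous (HasCompactSupport.of_compactSpace _)

/-- integration as a functional -/
noncomputable def L (ρ : Measure (E n)) [IsFiniteMeasure ρ] : Y n →L[ℂ] ℂ :=
  LinearMap.mkContinuous
    { toFun := fun f => ∫ ζ, f ζ ∂(km ρ)
      map_add' := by
        intro f g
        simpa using integral_add (integrable_Y ρ f) (integrable_Y ρ g)
      map_smul' := by
        intro a f
        simpa using integral_const_mul a (fun ζ => f ζ) }
    ((km ρ).real univ) (by
      intro f
      have := norm_integral_le_of_norm_le_const (μ := km ρ) (f := fun ζ => f ζ) (C := ‖f‖)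
        (Eventually.of_forall fun ζ => f.norm_coe_le_norm ζ)
      simpa [mul_comm] using this)

lemma L_apply (ρ : Measure (E n)) [IsFiniteMeasure ρ] (f : Y n) :
    L ρ f = ∫ ζ, f ζ ∂(km ρ) := rfl

lemma L_star (ρ : Measure (E n)) [IsFiniteMeasure ρ] (f : Y n) :
    L ρ (star f) = (starRingEnd ℂ) (L ρ f) := by
  rw [L_apply, L_apply, ← integral_conj]; rfl

lemma ae_closedBall {ρ : Measure (E n)} (h : ρ (sphere (0 : E n) 1)ᶜ = 0) :
    ∀ᵐ ζ ∂ρ, ζ ∈ closedBall (0 : E n) 1 := by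
  have h2 : ∀ᵐ ζ ∂ρ, ζ ∈ sphere (0 : E n) 1 := h
  filter_upwards [h2] with ζ hζ using sphere_subset_closedBall hζ

lemma integral_km {F : Type*} [NormedAddCommGroup F] [NormedSpace ℝ F]
    {ρ : Measure (E n)} (h : ρ (sphere (0 : E n) 1)ᶜ = 0) (f : E n → F) :
    ∫ ζ : K n, f ζ ∂(km ρ) = ∫ ζ, f ζ ∂ρ := by
  unfold km
  rw [integral_subtype_comap measurableSet_closedBall,
    Measure.restrict_eq_self_of_ae_mem (ae_closedBall h)]

lemma ae_km {ρ : Measure (E n)} {p : E n → Prop} (h : ∀ᵐ ζ ∂ρ, p ζ) :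
    ∀ᵐ ζ : K n ∂(km ρ), p ζ := by
  unfold km
  rw [← ae_restrict_iff_subtype measurableSet_closedBall]
  exact ae_restrict_of_ae h
end meas
end Clk

namespace Clk
open scoped Topology

lemma real_accum (x₀ : ℝ) : ∃ᶠ z : ℂ in 𝓝[≠] (x₀ : ℂ), ∃ r : ℝ, (r : ℂ) = z := by
  have h : Tendsto (fun r : ℝ => (r : ℂ)) (𝓝[≠] x₀) (𝓝[≠] (x₀ : ℂ)) := by
    apply tendsto_nhdsWithin_of_tendsto_nhds_of_eventually_within
    · exact (Complex.continuous_ofReal.tendsto x₀).mono_left nhdsWithin_le_nhds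
    · filter_upwards [self_mem_nhdsWithin] with r hr
      simpa using hr
  exact h.frequently (Eventually.frequently (Eventually.of_forall fun r => ⟨r, rfl⟩))

/-- identity theorem from the real points -/
lemma ident_real {U : Set ℂ} (hU : IsOpen U) (hc : Convex ℝ U) {f : ℂ → ℂ}
    (hf : DifferentiableOn ℂ f U) {x₀ : ℝ} (hx : (x₀ : ℂ) ∈ U)
    (h0 : ∀ r : ℝ, (r : ℂ) ∈ U → f r = 0) : ∀ z ∈ U, f z = 0 := by
  have ha : AnalyticOnNhd ℂ f U := hf.analyticOnNhd hU
  have := ha.eqOn_zero_of_preconnected_of_frequently_eq_zero hc.isPreconnected hx (by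
    have h1 := (real_accum x₀).and_eventually
      (mem_nhdsWithin_of_mem_nhds (hU.mem_nhds hx))
    refine h1.mono ?_
    rintro z ⟨⟨r, rfl⟩, hz⟩
    exact h0 r hz)
  exact this

lemma star_line {n : ℕ} {V : Type*} [NormedAddCommGroup V] [NormedSpace ℂ V] [StarAddMonoid V]
    [NormedStarGroup V] [StarModule ℂ V] {f : E n → V} (hf : DifferentiableOn ℂ f (ball 0 1))
    (a v : E n) (s : ℂ) (hs : a + (starRingEnd ℂ) s • v ∈ ball (0 : E n) 1) :
    DifferentiableAt ℂ (fun s : ℂ => star (f (a + (starRingEnd ℂ) s • v))) s := by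
  have h1 : DifferentiableAt ℂ (fun s : ℂ => f (a + s • v)) ((starRingEnd ℂ) s) := by
    have h2 : DifferentiableAt ℂ f (a + (starRingEnd ℂ) s • v) :=
      hf.differentiableAt (isOpen_ball.mem_nhds hs)
    exact h2.comp ((starRingEnd ℂ) s) (f := fun s : ℂ => a + s • v) (by fun_prop)
  exact differentiableAt_star_conj_iff.mpr h1

/-- polarization -/
lemma polar {n : ℕ} (H : E n → E n → ℂ)
    (hH : ∀ (a v : E n) (p : ℂ × ℂ), a + p.1 • v ∈ ball (0 : E n) 1 →
      a + (starRingEnd ℂ) p.2 • v ∈ ball (0 : E n) 1 →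
      DifferentiableAt ℂ (fun p : ℂ × ℂ => H (a + p.1 • v) (a + (starRingEnd ℂ) p.2 • v)) p)
    (h0 : ∀ z ∈ ball (0 : E n) 1, H z z = 0) :
    ∀ z ∈ ball (0 : E n) 1, ∀ w ∈ ball (0 : E n) 1, H z w = 0 := by
  intro z hz w hw
  set v := z - w with hv
  -- the function of (s,t)
  let F : ℂ → ℂ → ℂ := fun s t =>
    H (w + (s + Complex.I * t) • v) (w + (starRingEnd ℂ) (s - Complex.I * t) • v)
  let D : ℂ → ℂ → Prop := fun s t => w + (s + Complex.I * t) • v ∈ ball (0 : E n) 1 ∧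
    w + (starRingEnd ℂ) (s - Complex.I * t) • v ∈ ball (0 : E n) 1
  have hmid : ∀ s : ℂ, s = (1 / 2 : ℝ) → w + s • v ∈ ball (0 : E n) 1 := by
    rintro s rfl
    have := (convex_ball (0 : E n) 1) hw hz (a := 1/2) (b := 1/2) (by norm_num) (by norm_num)
      (by norm_num)
    convert this using 1
    rw [hv]
    ext i
    simp
    ring
  have hdiff : ∀ s t, D s t → DifferentiableAt ℂ (fun q : ℂ × ℂ => F q.1 q.2) (s, t) := by
    intro s t h
    have h1 := hH w v (s + Complex.I * t, s - Complex.I * t) h.1 h.2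
    have h2 := h1.comp (s, t) (f := fun q : ℂ × ℂ =>
      (q.1 + Complex.I * q.2, q.1 - Complex.I * q.2)) (by fun_prop)
    exact h2
  have hopen : IsOpen {q : ℂ × ℂ | D q.1 q.2} := by
    apply IsOpen.inter
    · exact isOpen_ball.preimage (by fun_prop)
    · exact isOpen_ball.preimage (by
        have : Continuous (starRingEnd ℂ) := Complex.continuous_conj
        fun_prop)
  have hconv : Convex ℝ {q : ℂ × ℂ | D q.1 q.2} := by
    intro q hq q' hq' a b ha hb hab
    have hb' : (b : ℂ) = 1 - a := by rw [eq_sub_iff_add_eq']; exact_mod_cast hab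
    have e1 := (convex_ball (0 : E n) 1) hq.1 hq'.1 ha hb hab
    have e2 := (convex_ball (0 : E n) 1) hq.2 hq'.2 ha hb hab
    constructor
    · convert e1 using 1
      ext i
      simp [hb']
      ring
    · convert e2 using 1
      ext i
      simp [hb']
      ring
  have sec2 : ∀ s, IsOpen {t | D s t} := fun s =>
    hopen.preimage (f := fun t : ℂ => (s, t)) (by fun_prop)
  have csec2 : ∀ t, Convex ℝ {s | D t s} := by
    intro t s hs s' hs' a b ha hb hab
    have := hconv hs hs' ha hb hab (x := (t, s)) (y := (t, s'))
    have h2 : a • (t, s) + b • (t, s') = (t, a • s + b • s') := by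
      ext1
      · simp [← add_mul]
        rw [show (a : ℂ) + b = 1 by exact_mod_cast hab]; ring
      · simp
    rw [h2] at this
    exact this
  have hreal : ∀ s t : ℝ, D s t → F s t = 0 := by
    intro s t h
    have e1 : (starRingEnd ℂ) ((s : ℂ) - Complex.I * t) = s + Complex.I * t := by
      simp
    show H (w + ((s:ℂ) + Complex.I * t) • v) (w + (starRingEnd ℂ) ((s:ℂ) - Complex.I * t) • v) = 0
    rw [e1]
    exact h0 _ h.1
  -- step 1 : all s in the section, t real with (1/2, t) in D
  have step1 : ∀ t : ℝ, D ((1 / 2 : ℝ) : ℂ) t → F ((1 / 2 : ℝ) : ℂ) t = 0 := by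
    intro t ht
    exact hreal _ _ ht
  have hD0 : D ((1 / 2 : ℝ) : ℂ) ((0 : ℝ) : ℂ) := by
    constructor
    · apply hmid; simp
    · apply hmid; simp [Complex.conj_ofNat]
  have step2 := ident_real (sec2 ((1/2 : ℝ) : ℂ)) (csec2 _) (f := fun t => F ((1/2 : ℝ) : ℂ) t)
    (fun t ht => ((hdiff _ t ht).comp t (f := fun t : ℂ => (((1/2 : ℝ) : ℂ), t))
      (by fun_prop)).differentiableWithinAt) (x₀ := 0) hD0 step1
  have hgoal : D ((1 / 2 : ℝ) : ℂ) (-(Complex.I / 2)) ∧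
      F ((1 / 2 : ℝ) : ℂ) (-(Complex.I / 2)) = H z w := by
    have e1 : ((1 / 2 : ℝ) : ℂ) + Complex.I * (-(Complex.I / 2)) = 1 := by
      have := Complex.I_mul_I
      push_cast
      linear_combination (-1/2) * this
    have e2 : (starRingEnd ℂ) (((1 / 2 : ℝ) : ℂ) - Complex.I * (-(Complex.I / 2))) = 0 := by
      have := Complex.I_mul_I
      rw [map_eq_zero]
      push_cast
      linear_combination (1/2) * this
    simp only [D, F, e1, e2]
    simp [hv] at hz hw ⊢
    exact ⟨hz, hw⟩
  rw [← hgoal.2]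
  exact step2 _ hgoal.1

end Clk

namespace Clk
open scoped Topology
section
variable {n : ℕ} [MeasurableSpace (E n)] [BorelSpace (E n)]

lemma normK {n : ℕ} (ζ : K n) : ‖(ζ : E n)‖ ≤ 1 := mem_closedBall_zero_iff.mp ζ.2

lemma L_mul_star (ρ : Measure (E n)) [IsFiniteMeasure ρ] (f : Y n) :
    L ρ (f * star f) = ((∫ ζ, ‖f ζ‖ ^ 2 ∂(km ρ) : ℝ) : ℂ) := by
  rw [L_apply, ← integral_complex_ofReal]
  congr 1
  ext ζ
  simp [Complex.mul_conj, Complex.normSq_eq_norm_sq]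

lemma diag_c (ρ : Measure (E n)) [IsFiniteMeasure ρ] (hs : ρ (sphere (0 : E n) 1)ᶜ = 0)
    {z : E n} (hz : z ∈ ball (0 : E n) 1) :
    ((1 - ‖z‖ ^ 2) ^ n : ℝ) * L ρ (c z * star (c z)) =
      ((∫ ζ, (1 - ‖z‖ ^ 2) ^ n / ‖1 - ip z ζ‖ ^ (2 * n) ∂ρ : ℝ) : ℂ) := by
  have hz' : ‖z‖ < 1 := by simpa using hz
  rw [L_mul_star, ← Complex.ofReal_mul, ← integral_km hs, ← integral_const_mul]
  congr 2
  ext ζ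
  rw [c_apply hz', norm_pow, norm_inv, ← pow_mul, inv_pow, mul_comm n 2]
  rfl

lemma kernel_ident (ρ : Measure (E n)) [IsFiniteMeasure ρ] (hs : ρ (sphere (0 : E n) 1)ᶜ = 0)
    (b : E n → ℂ) (hb : DifferentiableOn ℂ b (ball (0 : E n) 1))
    (hbmap : ∀ z ∈ ball (0 : E n) 1, b z ∈ ball (0 : ℂ) 1) (α : ℂ) (hα : ‖α‖ = 1)
    (hρ : ∀ z ∈ ball (0 : E n) 1,
      ∫ ζ, (1 - ‖z‖ ^ 2) ^ n / ‖1 - ip z ζ‖ ^ (2 * n) ∂ρ = (1 - ‖b z‖ ^ 2) / ‖α - b z‖ ^ 2)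
    {z w : E n} (hz : z ∈ ball (0 : E n) 1) (hw : w ∈ ball (0 : E n) 1) :
    (α - b z) * (starRingEnd ℂ) (α - b w) * L ρ (c z * star (c w)) =
      (1 - b z * (starRingEnd ℂ) (b w)) * (1 - ip z w)⁻¹ ^ n := by
  -- clear denominators in the last factor
  suffices h : ∀ z ∈ ball (0 : E n) 1, ∀ w ∈ ball (0 : E n) 1,
      (1 - ip z w) ^ n * ((α - b z) * star (α - b w) * L ρ (c z * star (c w))) -
      (1 - b z * star (b w)) = 0 by
    have h1 := sub_eq_zero.mp (h z hz w hw)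
    have h2 : (1 - ip z w) ^ n ≠ 0 :=
      pow_ne_zero _ (one_sub_ip_ne (by simpa using hz) (by simpa using le_of_lt (mem_ball_zero_iff.mp hw)))
    rw [inv_pow]
    field_simp
    rw [mul_comm]
    exact h1
  apply polar
  · intro a v p h1 h2
    have hbz : DifferentiableAt ℂ (fun p : ℂ × ℂ => b (a + p.1 • v)) p :=
      (hb.differentiableAt (isOpen_ball.mem_nhds h1)).comp p
        (f := fun p : ℂ × ℂ => a + p.1 • v) (by fun_prop)
    have hcz : DifferentiableAt ℂ (fun p : ℂ × ℂ => c (a + p.1 • v)) p :=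
      (differentiableOn_c.differentiableAt (isOpen_ball.mem_nhds h1)).comp p
        (f := fun p : ℂ × ℂ => a + p.1 • v) (by fun_prop)
    have hbw : DifferentiableAt ℂ (fun p : ℂ × ℂ => star (b (a + (starRingEnd ℂ) p.2 • v))) p :=
      (star_line hb a v p.2 h2).comp p (f := fun p : ℂ × ℂ => p.2) (by fun_prop)
    have hcw : DifferentiableAt ℂ (fun p : ℂ × ℂ => star (c (a + (starRingEnd ℂ) p.2 • v))) p :=
      (star_line differentiableOn_c a v p.2 h2).comp p (f := fun p : ℂ × ℂ => p.2) (by fun_prop)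
    have hip : DifferentiableAt ℂ
        (fun p : ℂ × ℂ => ip (a + p.1 • v) (a + (starRingEnd ℂ) p.2 • v)) p := by
      simp only [ip, PiLp.add_apply, PiLp.smul_apply, smul_eq_mul, map_add, map_mul,
        Complex.conj_conj]
      fun_prop
    simp only [star_sub]
    have hL := (L ρ).differentiableAt.comp p (hcz.mul hcw)
    simp only [Function.comp_def] at hL
    exact (((hip.const_sub 1).pow n).mul (((hbz.const_sub α).mul (hbw.const_sub _)).mul hL)).sub
      ((hbz.mul hbw).const_sub 1)
  · intro z hz
    have hz' : ‖z‖ < 1 := by simpa using hz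
    have h := diag_c ρ hs hz
    rw [hρ z hz] at h
    have hne : α - b z ≠ 0 := by
      intro h0
      have h1 := hbmap z hz
      rw [← sub_eq_zero.mp h0, mem_ball_zero_iff, hα] at h1
      exact lt_irrefl _ h1
    have hne' : (‖α - b z‖ : ℂ) ≠ 0 := by simpa using hne
    have e1 : (α - b z) * star (α - b z) = (‖α - b z‖ : ℂ) ^ 2 := by
      rw [Complex.star_def, Complex.mul_conj, Complex.normSq_eq_norm_sq]; simp
    have e2 : b z * star (b z) = (‖b z‖ : ℂ) ^ 2 := by
      rw [Complex.star_def, Complex.mul_conj, Complex.normSq_eq_norm_sq]; simp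
    rw [e1, e2, ip_self]
    push_cast at h ⊢
    have h3 : (1 - (‖z‖ : ℂ) ^ 2) ^ n * ((‖α - b z‖ : ℂ) ^ 2 * L ρ (c z * star (c z))) =
      (‖α - b z‖ : ℂ) ^ 2 * ((1 - (‖z‖ : ℂ) ^ 2) ^ n * L ρ (c z * star (c z))) := by ring
    rw [h3, h]
    field_simp
    ring
end
end Clk

namespace Clk
open scoped Topology
section
variable {n : ℕ} [MeasurableSpace (E n)] [BorelSpace (E n)]

lemma exists_unitary {n : ℕ} {z w : E n} (h : ‖z‖ = ‖w‖) : ∃ U : E n ≃ₗᵢ[ℂ] E n, U z = w := by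
  by_cases hz : z = 0
  · subst hz
    have : w = 0 := by simpa using h.symm
    exact ⟨LinearIsometryEquiv.refl ℂ _, by simp [this]⟩
  have hw : w ≠ 0 := by
    intro h0; rw [h0, norm_zero, norm_eq_zero] at h; exact hz h
  let L₀ : (ℂ ∙ z) →ₗᵢ[ℂ] E n :=
    { toLinearMap := ((LinearMap.toSpanSingleton ℂ (E n) w).comp
        (LinearEquiv.toSpanNonzeroSingleton ℂ (E n) z hz).symm.toLinearMap)
      norm_map' := by
        intro y
        obtain ⟨a, rfl⟩ := (LinearEquiv.toSpanNonzeroSingleton ℂ (E n) z hz).surjective y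
        show ‖(LinearMap.toSpanSingleton ℂ (E n) w)
          ((LinearEquiv.toSpanNonzeroSingleton ℂ (E n) z hz).symm _)‖ = _
        rw [LinearEquiv.symm_apply_apply]
        simp [norm_smul, h] }
  refine ⟨LinearIsometryEquiv.ofSurjective L₀.extend ?_, ?_⟩
  · exact LinearMap.surjective_of_injective L₀.extend.injective
  · have := L₀.extend_apply ⟨z, Submodule.mem_span_singleton_self z⟩
    simp only [LinearIsometryEquiv.coe_ofSurjective]
    refine this.trans ?_
    have e1 : (LinearEquiv.toSpanNonzeroSingleton ℂ (E n) z hz).symm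
      ⟨z, Submodule.mem_span_singleton_self z⟩ = 1 := by
      rw [LinearEquiv.symm_apply_eq]
      ext1
      simp
    show (LinearMap.toSpanSingleton ℂ (E n) w)
      ((LinearEquiv.toSpanNonzeroSingleton ℂ (E n) z hz).symm _) = w
    rw [e1]; simp

lemma ip_unitary {n : ℕ} (U : E n ≃ₗᵢ[ℂ] E n) (z ζ : E n) : ip (U z) (U ζ) = ip z ζ := by
  rw [ip_eq, ip_eq]; simp

lemma moment_inv (Λ : Measure (E n)) [IsProbabilityMeasure Λ]
    (hs : Λ (sphere (0 : E n) 1)ᶜ = 0)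
    (hinv : ∀ U : E n ≃ₗᵢ[ℂ] E n, Measure.map (⇑U) Λ = Λ)
    (U : E n ≃ₗᵢ[ℂ] E n) (j k : ℕ) (z w : E n) :
    L Λ (e (U z) ^ j * star (e (U w)) ^ k) = L Λ (e z ^ j * star (e w) ^ k) := by
  have key : ∀ z w : E n, L Λ (e z ^ j * star (e w) ^ k) =
      ∫ ζ, (ip z ζ) ^ j * (starRingEnd ℂ) (ip w ζ) ^ k ∂Λ := by
    intro z w
    rw [L_apply, ← integral_km hs]
    congr 1
    ext ζ
    simp
  rw [key, key]
  conv_lhs => rw [← hinv U]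
  rw [show (⇑U : E n → E n) = ⇑U.toHomeomorph from rfl,
    U.toHomeomorph.measurableEmbedding.integral_map]
  simp [ip_unitary]

lemma moment_orth (Λ : Measure (E n)) [IsProbabilityMeasure Λ]
    (hs : Λ (sphere (0 : E n) 1)ᶜ = 0)
    (hinv : ∀ U : E n ≃ₗᵢ[ℂ] E n, Measure.map (⇑U) Λ = Λ)
    {j k : ℕ} (hjk : j ≠ k) (z w : E n) :
    L Λ (e z ^ j * star (e w) ^ k) = 0 := by
  -- a unimodular u with u^j * conj u^k ≠ 1
  obtain ⟨u, hu, hne⟩ : ∃ u : ℂ, ‖u‖ = 1 ∧ u ^ j * (starRingEnd ℂ) u ^ k ≠ 1 := by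
    refine ⟨Complex.exp (Complex.I), by simpa using Complex.norm_exp_ofReal_mul_I 1, ?_⟩
    have e1 : (starRingEnd ℂ) (Complex.exp Complex.I) = Complex.exp (-Complex.I) := by
      rw [← Complex.exp_conj]; simp
    rw [e1, ← Complex.exp_nat_mul, ← Complex.exp_nat_mul, ← Complex.exp_add]
    intro h
    rw [Complex.exp_eq_one_iff] at h
    obtain ⟨m, hm⟩ := h
    have hm2 := congrArg Complex.im hm
    simp at hm2
    have hjk' : ((j : ℤ) - k : ℤ) ≠ 0 := by omega
    have hpi : (((j : ℤ) - k : ℤ) : ℝ) = ((2 * m : ℤ) : ℝ) * Real.pi := by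
      push_cast; linarith
    by_cases hm0 : m = 0
    · subst hm0; simp at hpi; apply hjk'
      have : (((j:ℤ) - k : ℤ) : ℝ) = 0 := by push_cast; linarith
      exact_mod_cast this
    · have := irrational_pi
      apply this
      refine ⟨((j : ℤ) - k : ℤ) / ((2 * m : ℤ) : ℚ), ?_⟩
      have h2 : ((2 * m : ℤ) : ℝ) ≠ 0 := by
        have : (2 * m : ℤ) ≠ 0 := by omega
        exact_mod_cast this
      rw [Rat.cast_div, Rat.cast_intCast, Rat.cast_intCast, hpi]
      field_simp
  let U : E n ≃ₗᵢ[ℂ] E n := LinearIsometryEquiv.ofSurjective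
    ({ toLinearMap := u • LinearMap.id
       norm_map' := by intro v; simp [norm_smul, hu] } : E n →ₗᵢ[ℂ] E n) (by
        intro v
        have hu0 : u ≠ 0 := by intro h; simp [h] at hu
        exact ⟨u⁻¹ • v, by simp [hu0]⟩)
  have hU : ∀ v, U v = u • v := fun v => rfl
  have h := moment_inv Λ hs hinv U j k z w
  have h2 : e (U z) ^ j * star (e (U w)) ^ k =
      (u ^ j * (starRingEnd ℂ) u ^ k) • (e z ^ j * star (e w) ^ k) := by
    rw [hU, hU, map_smul, map_smul, star_smul, smul_pow, smul_pow, smul_mul_smul_comm]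
    rfl
  rw [h2, map_smul, smul_eq_mul] at h
  have h3 : (u ^ j * (starRingEnd ℂ) u ^ k - 1) * L Λ (e z ^ j * star (e w) ^ k) = 0 := by
    rw [sub_mul, h]; ring
  rcases mul_eq_zero.mp h3 with h4 | h4
  · exact absurd (sub_eq_zero.mp h4) hne
  · exact h4

lemma moment_diag (Λ : Measure (E n)) [IsProbabilityMeasure Λ]
    (hs : Λ (sphere (0 : E n) 1)ᶜ = 0)
    (hinv : ∀ U : E n ≃ₗᵢ[ℂ] E n, Measure.map (⇑U) Λ = Λ)
    (hn : 0 < n) (k : ℕ) :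
    ∃ C : ℂ, ∀ z ∈ ball (0 : E n) 1, ∀ w ∈ ball (0 : E n) 1,
      L Λ (e z ^ k * star (e w) ^ k) = C * ip z w ^ k := by
  let e0 : E n := EuclideanSpace.single ⟨0, hn⟩ 1
  have he0 : ‖e0‖ = 1 := by simp [e0]
  refine ⟨L Λ (e e0 ^ k * star (e e0) ^ k), ?_⟩
  set C := L Λ (e e0 ^ k * star (e e0) ^ k) with hC
  suffices h : ∀ z ∈ ball (0 : E n) 1, ∀ w ∈ ball (0 : E n) 1,
      L Λ (e z ^ k * star (e w) ^ k) - C * ip z w ^ k = 0 by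
    intro z hz w hw; exact sub_eq_zero.mp (h z hz w hw)
  apply polar
  · intro a v p h1 h2
    have hcz : DifferentiableAt ℂ (fun p : ℂ × ℂ => e (a + p.1 • v)) p :=
      e.differentiableAt.comp p (f := fun p : ℂ × ℂ => a + p.1 • v) (by fun_prop)
    have hcw : DifferentiableAt ℂ (fun p : ℂ × ℂ => star (e (a + (starRingEnd ℂ) p.2 • v))) p :=
      (star_line e.differentiable.differentiableOn a v p.2 h2).comp p
        (f := fun p : ℂ × ℂ => p.2) (by fun_prop)
    have hip : DifferentiableAt ℂ
        (fun p : ℂ × ℂ => ip (a + p.1 • v) (a + (starRingEnd ℂ) p.2 • v)) p := by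
      simp only [ip, PiLp.add_apply, PiLp.smul_apply, smul_eq_mul, map_add, map_mul,
        Complex.conj_conj]
      fun_prop
    have hL := (L Λ).differentiableAt.comp p ((hcz.pow k).mul (hcw.pow k))
    simp only [Function.comp_def] at hL
    exact hL.sub ((hip.pow k).const_mul C)
  · intro z hz
    obtain ⟨U, hU⟩ := exists_unitary (z := ((‖z‖ : ℝ) : ℂ) • e0) (w := z)
      (by simp [norm_smul, he0])
    have h := moment_inv Λ hs hinv U k k (((‖z‖ : ℝ) : ℂ) • e0) (((‖z‖ : ℝ) : ℂ) • e0)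
    rw [hU] at h
    rw [h, map_smul, star_smul, smul_pow, smul_pow, smul_mul_smul_comm, map_smul, ← hC, ip_self]
    simp
    ring

end
end Clk

namespace Clk
open scoped Topology
section
variable {n : ℕ} [MeasurableSpace (E n)] [BorelSpace (E n)]

lemma e_single {n : ℕ} (j : Fin n) (s : ℂ) : e (EuclideanSpace.single j s) = s • star (x j) := by
  rw [e_def, Finset.sum_eq_single j]
  · simp
  · intro i _ hi; simp [hi]
  · simp

lemma ip_add_left {n : ℕ} (z z' w : E n) : ip (z + z') w = ip z w + ip z' w := by
  simp [ip_eq, inner_add_right]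
lemma ip_add_right {n : ℕ} (z w w' : E n) : ip z (w + w') = ip z w + ip z w' := by
  simp [ip_eq, inner_add_left]
lemma ip_single_left {n : ℕ} (j : Fin n) (s : ℂ) (w : E n) :
    ip (EuclideanSpace.single j s) w = s * (starRingEnd ℂ) (w j) := by
  rw [ip, Finset.sum_eq_single j]
  · simp
  · intro i _ hi; simp [hi]
  · simp
lemma ip_single_right {n : ℕ} (j : Fin n) (s : ℂ) (w : E n) :
    ip w (EuclideanSpace.single j s) = w j * (starRingEnd ℂ) s := by
  rw [← ip_conj, ip_single_left]; simp [mul_comm]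

lemma ev_ball {n : ℕ} {z : E n} (hz : z ∈ ball (0 : E n) 1) (j : Fin n) :
    ∀ᶠ s : ℂ in 𝓝 0, z + EuclideanSpace.single j s ∈ ball (0 : E n) 1 := by
  have hc : Continuous (fun s : ℂ => z + EuclideanSpace.single j s) := by
    have : Continuous (fun s : ℂ => (EuclideanSpace.single j s : E n)) := by
      have h : (fun s : ℂ => (EuclideanSpace.single j s : E n)) =
          fun s : ℂ => s • EuclideanSpace.single j (1 : ℂ) := by
        ext s i; simp
      rw [h]; fun_prop
    fun_prop
  have := hc.tendsto 0
  apply this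
  apply isOpen_ball.mem_nhds
  have h0 : (EuclideanSpace.single j (0 : ℂ) : E n) = 0 := by ext i; simp
  simpa [h0] using hz

lemma ev_ball_conj {n : ℕ} {z : E n} (hz : z ∈ ball (0 : E n) 1) (j : Fin n) :
    ∀ᶠ s : ℂ in 𝓝 0, z + EuclideanSpace.single j ((starRingEnd ℂ) s) ∈ ball (0 : E n) 1 := by
  have h : Tendsto (starRingEnd ℂ) (𝓝 0) (𝓝 0) := by
    simpa using Complex.continuous_conj.tendsto 0
  exact h.eventually (ev_ball hz j)

lemma hasDerivAt_add_smul {A : Type*} [NormedRing A] [NormedAlgebra ℂ A] (a y : A) (s : ℂ) :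
    HasDerivAt (fun s : ℂ => a + s • y) y s := by
  simpa using ((hasDerivAt_id s).smul_const y).const_add a

lemma moment_rec (Λ : Measure (E n)) [IsProbabilityMeasure Λ]
    (hs : Λ (sphere (0 : E n) 1)ᶜ = 0) (hn : 0 < n) (k : ℕ) (C C' : ℂ)
    (h1 : ∀ z ∈ ball (0 : E n) 1, ∀ w ∈ ball (0 : E n) 1,
      L Λ (e z ^ k * star (e w) ^ k) = C * ip z w ^ k)
    (h2 : ∀ z ∈ ball (0 : E n) 1, ∀ w ∈ ball (0 : E n) 1,
      L Λ (e z ^ (k + 1) * star (e w) ^ (k + 1)) = C' * ip z w ^ (k + 1)) :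
    (k + 1) * C = (n + k) * C' := by
  have hk : (k + 1 : ℂ) ≠ 0 := by exact_mod_cast Nat.succ_ne_zero k
  have A : ∀ z ∈ ball (0 : E n) 1, ∀ w ∈ ball (0 : E n) 1, ∀ j,
      L Λ (e z ^ k * star (x j) * star (e w) ^ (k + 1)) =
        C' * ip z w ^ k * (starRingEnd ℂ) (w j) := by
    intro z hz w hw j
    have d1 : HasDerivAt (fun s : ℂ => L Λ ((e z + s • star (x j)) ^ (k + 1) * star (e w) ^ (k + 1)))
        (L Λ (((k + 1 : ℕ) * e z ^ k * star (x j)) * star (e w) ^ (k + 1))) 0 := by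
      have := ((hasDerivAt_add_smul (e z) (star (x j)) 0).pow (k + 1)).mul_const
        (star (e w) ^ (k + 1))
      have h := ((L Λ).hasFDerivAt.comp_hasDerivAt 0 this)
      simpa [Function.comp_def] using h
    have d2 : HasDerivAt (fun s : ℂ => C' * (ip z w + s * (starRingEnd ℂ) (w j)) ^ (k + 1))
        (C' * ((k + 1 : ℕ) * ip z w ^ k * (starRingEnd ℂ) (w j))) 0 := by
      have := ((((hasDerivAt_id (0:ℂ)).mul_const ((starRingEnd ℂ) (w j))).const_add
        (ip z w)).pow (k + 1)).const_mul C'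
      simpa using this
    have heq : (fun s : ℂ => C' * (ip z w + s * (starRingEnd ℂ) (w j)) ^ (k + 1)) =ᶠ[𝓝 0]
        (fun s : ℂ => L Λ ((e z + s • star (x j)) ^ (k + 1) * star (e w) ^ (k + 1))) := by
      filter_upwards [ev_ball hz j] with s hs
      have := h2 _ hs w hw
      rw [map_add, e_single, ip_add_left, ip_single_left] at this
      exact this.symm
    have hu := (d1.congr_of_eventuallyEq heq).unique d2
    have e1 : ((k + 1 : ℕ) * e z ^ k * star (x j)) * star (e w) ^ (k + 1) =
        ((k + 1 : ℕ) : ℂ) • (e z ^ k * star (x j) * star (e w) ^ (k + 1)) := by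
      ext ζ; simp; ring
    rw [e1, map_smul, smul_eq_mul] at hu
    push_cast at hu
    apply mul_left_cancel₀ hk
    rw [hu]; ring
  have B : ∀ z ∈ ball (0 : E n) 1, ∀ w ∈ ball (0 : E n) 1, ∀ j,
      (k + 1) * L Λ (e z ^ k * star (e w) ^ k * (star (x j) * x j)) =
        C' * (k * ip z w ^ (k - 1) * (z j * (starRingEnd ℂ) (w j)) + ip z w ^ k) := by
    intro z hz w hw j
    have d1 : HasDerivAt (fun s : ℂ => L Λ (e z ^ k * star (x j) * (star (e w) + s • x j) ^ (k + 1)))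
        (L Λ (e z ^ k * star (x j) * ((k + 1 : ℕ) * star (e w) ^ k * x j))) 0 := by
      have := ((hasDerivAt_add_smul (star (e w)) (x j) 0).pow (k + 1)).const_mul
        (e z ^ k * star (x j))
      have h := ((L Λ).hasFDerivAt.comp_hasDerivAt 0 this)
      simpa [Function.comp_def] using h
    have d2 : HasDerivAt (fun s : ℂ => C' * (ip z w + s * z j) ^ k * ((starRingEnd ℂ) (w j) + s))
        (C' * (k * ip z w ^ (k - 1) * z j) * (starRingEnd ℂ) (w j) + C' * ip z w ^ k) 0 := by
      have := (((((hasDerivAt_id (0:ℂ)).mul_const (z j)).const_add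
        (ip z w)).pow k).const_mul C').fun_mul ((hasDerivAt_id (0:ℂ)).const_add ((starRingEnd ℂ) (w j)))
      simpa using this
    have heq : (fun s : ℂ => C' * (ip z w + s * z j) ^ k * ((starRingEnd ℂ) (w j) + s)) =ᶠ[𝓝 0]
        (fun s : ℂ => L Λ (e z ^ k * star (x j) * (star (e w) + s • x j) ^ (k + 1))) := by
      filter_upwards [ev_ball_conj hw j] with s hs
      have := A z hz _ hs j
      rw [map_add, e_single, ip_add_right, ip_single_right, star_add, star_smul, star_star] at this
      simp only [Complex.star_def, Complex.conj_conj, PiLp.add_apply, map_add] at this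
      rw [this]
      simp [mul_comm]
    have hu := (d1.congr_of_eventuallyEq heq).unique d2
    have e1 : e z ^ k * star (x j) * ((k + 1 : ℕ) * star (e w) ^ k * x j) =
        ((k + 1 : ℕ) : ℂ) • (e z ^ k * star (e w) ^ k * (star (x j) * x j)) := by
      ext ζ; simp; ring
    rw [e1, map_smul, smul_eq_mul] at hu
    push_cast at hu
    rw [hu]; ring
  -- the test point
  let z : E n := EuclideanSpace.single ⟨0, hn⟩ (1 / 2 : ℂ)
  have hz : z ∈ ball (0 : E n) 1 := by
    rw [mem_ball_zero_iff]; simp [z]; norm_num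
  have hip : ip z z = 1 / 4 := by
    rw [ip_self]; simp [z]; norm_num
  have hsum : ∑ j, L Λ (e z ^ k * star (e z) ^ k * (star (x j) * x j)) =
      L Λ (e z ^ k * star (e z) ^ k) := by
    rw [← map_sum, ← Finset.mul_sum, L_apply, L_apply]
    apply integral_congr_ae
    have hS : ∀ᵐ ζ ∂Λ, ζ ∈ sphere (0 : E n) 1 := hs
    filter_upwards [ae_km hS] with ζ hζ
    have h3 : (∑ j, star (x j) * x j : Y n) ζ = 1 := by
      have h4 := ip_self (ζ : E n)
      rw [mem_sphere_zero_iff_norm.mp hζ] at h4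
      simp [ip] at h4
      rw [← h4]
      simp [ContinuousMap.sum_apply, mul_comm]
    rw [ContinuousMap.mul_apply, h3, mul_one]
  have hfin : (k + 1) * ∑ j, L Λ (e z ^ k * star (e z) ^ k * (star (x j) * x j)) =
      ∑ j : Fin n, C' * (k * ip z z ^ (k - 1) * (z j * (starRingEnd ℂ) (z j)) + ip z z ^ k) := by
    rw [Finset.mul_sum]
    exact Finset.sum_congr rfl fun j _ => B z hz z hz j
  rw [hsum, h1 z hz z hz, ← Finset.mul_sum, Finset.sum_add_distrib, ← Finset.mul_sum] at hfin
  have h5 : ∑ j, z j * (starRingEnd ℂ) (z j) = ip z z := rfl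
  rw [h5] at hfin
  have h6 : (k : ℂ) * ip z z ^ (k - 1) * ip z z = k * ip z z ^ k := by
    cases k with
    | zero => simp
    | succ m => simp [pow_succ]; ring
  rw [h6] at hfin
  simp only [Finset.sum_const, Finset.card_univ, Fintype.card_fin, nsmul_eq_mul] at hfin
  have h7 : ip z z ^ k ≠ 0 := pow_ne_zero _ (by rw [hip]; norm_num)
  apply mul_right_cancel₀ h7
  linear_combination hfin

lemma moment_val (Λ : Measure (E n)) [IsProbabilityMeasure Λ]
    (hs : Λ (sphere (0 : E n) 1)ᶜ = 0)
    (hinv : ∀ U : E n ≃ₗᵢ[ℂ] E n, Measure.map (⇑U) Λ = Λ) (m : ℕ) (hm : n = m + 1) (k : ℕ) :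
    ∀ z ∈ ball (0 : E n) 1, ∀ w ∈ ball (0 : E n) 1,
      ((k + m).choose m : ℂ) * L Λ (e z ^ k * star (e w) ^ k) = ip z w ^ k := by
  have hn : 0 < n := by omega
  choose C hC using moment_diag Λ hs hinv hn
  have h0 : C 0 = 1 := by
    have h := hC 0 0 (by simp) 0 (by simp)
    have e1 : L Λ (1 : Y n) = 1 := by
      rw [L_apply]
      have := integral_km hs (fun _ => (1 : ℂ))
      simpa using this
    simpa [e1] using h.symm
  have hk : ((k + m).choose m : ℂ) * C k = 1 := by
    induction k with
    | zero => simp [h0]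
    | succ k ih =>
      have hr := moment_rec Λ hs hn k _ _ (hC k) (hC (k + 1))
      have hch : (k + m + 1) * (k + m).choose m = (k + 1 + m).choose m * (k + 1) := by
        have := Nat.add_one_mul_choose_eq (k + m) k
        rw [Nat.choose_symm_add] at this
        rw [this]
        rw [show k + 1 + m = (k + 1) + m from rfl, ← Nat.choose_symm_add,
          show k + m + 1 = k + 1 + m by ring]
      have hch' : ((k + m + 1 : ℕ) : ℂ) * ((k + m).choose m : ℂ) =
          ((k + 1 + m).choose m : ℂ) * ((k + 1 : ℕ) : ℂ) := by exact_mod_cast hch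
      have hne : ((k + m + 1 : ℕ) : ℂ) ≠ 0 := Nat.cast_ne_zero.mpr (Nat.succ_ne_zero (k + m))
      have hne2 : ((k + 1 : ℕ) : ℂ) ≠ 0 := Nat.cast_ne_zero.mpr (Nat.succ_ne_zero k)
      subst hm
      push_cast at *
      apply mul_left_cancel₀ hne2
      linear_combination (-C (k+1)) * hch' - ((k + m).choose m : ℂ) * hr + (k + 1) * ih
  intro z hz w hw
  rw [hC k z hz w hw, ← mul_assoc, hk, one_mul]

lemma hasSum_c {n : ℕ} (m : ℕ) (hm : n = m + 1) {z : E n} (hz : z ∈ ball (0 : E n) 1) :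
    HasSum (fun k : ℕ => ((k + m).choose m : ℂ) • e z ^ k) (c z) := by
  have h := hasSum_choose_mul_geometric_of_norm_lt_one' m (r := e z)
    ((norm_e_le z).trans_lt (by simpa using hz))
  rw [← hm] at h
  have h2 : (fun k : ℕ => ((k + m).choose m : ℂ) • e z ^ k) =
      fun k : ℕ => ((k + m).choose m : Y n) * e z ^ k := by
    funext k; ext ζ; simp
  rw [h2]; exact h

lemma szego (Λ : Measure (E n)) [IsProbabilityMeasure Λ]
    (hs : Λ (sphere (0 : E n) 1)ᶜ = 0)
    (hinv : ∀ U : E n ≃ₗᵢ[ℂ] E n, Measure.map (⇑U) Λ = Λ) (hn : 0 < n)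
    {z w : E n} (hz : z ∈ ball (0 : E n) 1) (hw : w ∈ ball (0 : E n) 1) :
    L Λ (c z * star (c w)) = (1 - ip z w)⁻¹ ^ n := by
  obtain ⟨m, hm⟩ : ∃ m, n = m + 1 := ⟨n - 1, by omega⟩
  have h1 : ∀ k : ℕ, L Λ (e z ^ k * star (c w)) = ip z w ^ k := by
    intro k
    have hsum := (hasSum_c m hm hw).star
    have h2 := (((hsum.mul_left (e z ^ k))).mapL (L Λ))
    have h3 : HasSum (fun j : ℕ => L Λ (e z ^ k * star (((j + m).choose m : ℂ) • e w ^ j)))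
        (ip z w ^ k) := by
      have : L Λ (e z ^ k * star (((k + m).choose m : ℂ) • e w ^ k)) = ip z w ^ k := by
        rw [← moment_val Λ hs hinv m hm k z hz w hw, star_smul, mul_smul_comm, map_smul, star_pow]
        simp
      rw [← this]
      apply hasSum_single
      intro j hj
      rw [star_smul, mul_smul_comm, map_smul, star_pow, moment_orth Λ hs hinv (Ne.symm hj)]
      simp
    exact h2.unique h3
  have h2 := ((hasSum_c m hm hz).mul_right (star (c w))).mapL (L Λ)
  have h3 : HasSum (fun k : ℕ => L Λ (((k + m).choose m : ℂ) • e z ^ k * star (c w)))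
      (1 / (1 - ip z w) ^ (m + 1)) := by
    have h4 := hasSum_choose_mul_geometric_of_norm_lt_one m (r := ip z w) (by
      have := norm_ip_le z w
      have a1 := mem_ball_zero_iff.mp hz
      have a2 := mem_ball_zero_iff.mp hw
      nlinarith [norm_nonneg z, norm_nonneg w])
    have h5 : (fun k : ℕ => L Λ (((k + m).choose m : ℂ) • e z ^ k * star (c w))) =
        fun k : ℕ => ((k + m).choose m : ℂ) * ip z w ^ k := by
      funext k
      rw [smul_mul_assoc, map_smul, h1, smul_eq_mul]
    rw [h5]; exact h4
  rw [h2.unique h3, ← hm, one_div, inv_pow]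
end
end Clk

namespace Clk
open scoped Topology
section

lemma hasDerivAt_inv {A : Type*} [NormedCommRing A] [NormedAlgebra ℂ A] [HasSummableGeomSeries A]
    (a y : A) (ha : IsUnit a) :
    HasDerivAt (fun s : ℂ => Ring.inverse (a - s • y))
      (Ring.inverse a * y * Ring.inverse a) 0 := by
  obtain ⟨u, rfl⟩ := ha
  have h0 : HasDerivAt (fun s : ℂ => (u : A) - s • y) (-y) 0 := by
    simpa using ((hasDerivAt_id (0:ℂ)).smul_const y).const_sub (u : A)
  have h1 := hasFDerivAt_ringInverse (𝕜 := ℂ) u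
  have h2 : (u : A) - (0 : ℂ) • y = u := by simp
  have h3 := HasFDerivAt.comp_hasDerivAt (f := fun s : ℂ => (u : A) - s • y) (l := Ring.inverse)
    0 (by rw [h2]; exact h1) h0
  simpa [Function.comp_def] using h3

lemma mem_of_hasDerivAt {A : Type*} [NormedAddCommGroup A] [NormedSpace ℂ A] (W : Submodule ℂ A)
    (hW : IsClosed (W : Set A)) (f : ℂ → A) (f' : A) (hf : HasDerivAt f f' 0)
    (h : ∀ᶠ s in 𝓝 0, f s ∈ W) : f' ∈ W := by
  have h1 := hasDerivAt_iff_tendsto_slope.mp hf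
  have h0 : f 0 ∈ W := h.self_of_nhds
  refine hW.mem_of_tendsto h1 ?_
  filter_upwards [h.filter_mono nhdsWithin_le_nhds] with s hs
  rw [slope]
  simp only [vsub_eq_sub]
  exact W.smul_mem _ (W.sub_mem hs h0)

/-- algebra of holomorphic polynomials -/
noncomputable def PA (n : ℕ) : Subalgebra ℂ (Y n) := Algebra.adjoin ℂ (range x)

lemma star_G {n : ℕ} (w : E n) : star (G w) = Ring.inverse (1 - star (e w)) := by
  rw [G, ← Ring.inverse_star]; simp

lemma poly_step {n : ℕ} (W : Submodule ℂ (Y n)) (hW : IsClosed (W : Set (Y n))) (g : Y n) (m : ℕ)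
    (h : ∀ w ∈ ball (0 : E n) 1, g * star (G w) ^ (m + 1) ∈ W) (i : Fin n) :
    ∀ w ∈ ball (0 : E n) 1, g * x i * star (G w) ^ (m + 1 + 1) ∈ W := by
  intro w hw
  have hu : IsUnit (1 - star (e w)) := by
    have := (isUnit_one_sub_e (mem_ball_zero_iff.mp hw)).star
    simpa using this
  have h1 := (((hasDerivAt_inv (1 - star (e w)) (x i) hu).pow (m + 1)).const_mul g)
  have h2 := mem_of_hasDerivAt W hW _ _ h1 ?_
  · have h3 : g * (((m + 1 : ℕ) : Y n) * star (G w) ^ m * (star (G w) * x i * star (G w))) =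
        ((m + 1 : ℕ) : ℂ) • (g * x i * star (G w) ^ (m + 1 + 1)) := by
      ext ζ; simp; ring
    simp only [zero_smul, sub_zero, Nat.add_sub_cancel, ← star_G] at h2
    rw [h3] at h2
    exact (W.smul_mem_iff (Nat.cast_ne_zero.mpr (Nat.succ_ne_zero m))).mp h2
  · filter_upwards [ev_ball_conj hw i] with s hs
    have h4 := h _ hs
    rw [star_G, map_add, e_single, star_add, star_smul, star_star] at h4
    simp only [Complex.star_def, Complex.conj_conj, ← sub_sub] at h4
    exact h4

lemma PA_le {n : ℕ} (hn : 0 < n) (W : Submodule ℂ (Y n)) (hW : IsClosed (W : Set (Y n)))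
    (h : ∀ w ∈ ball (0 : E n) 1, star (c w) ∈ W) (p : Y n) (hp : p ∈ PA n) : p ∈ W := by
  have key : ∀ g ∈ Submonoid.closure (range (x : Fin n → Y n)), ∃ m : ℕ,
      ∀ w ∈ ball (0 : E n) 1, g * star (G w) ^ (m + 1) ∈ W := by
    intro g hg
    induction hg using Submonoid.closure_induction_right with
    | one =>
      refine ⟨n - 1, fun w hw => ?_⟩
      rw [Nat.sub_add_cancel hn, one_mul, ← star_pow]
      exact h w hw
    | mul_right g hg y hy ih =>
      obtain ⟨m, hm⟩ := ih
      obtain ⟨i, rfl⟩ := hy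
      exact ⟨m + 1, poly_step W hW g m hm i⟩
  have hp' : p ∈ Subalgebra.toSubmodule (PA n) := hp
  rw [PA, Algebra.adjoin_eq_span] at hp'
  refine (Submodule.span_le.mpr ?_) hp'
  intro g hg
  obtain ⟨m, hm⟩ := key g hg
  have := hm 0 (by simp)
  have hG : (G (0 : E n)) = 1 := by simp [G]
  simpa [hG] using this
end

section
variable {n : ℕ} [MeasurableSpace (E n)] [BorelSpace (E n)]

/-- point of the ball as a point of K -/
def pt {n : ℕ} {z : E n} (hz : z ∈ ball (0 : E n) 1) : K n := ⟨z, ball_subset_closedBall hz⟩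

/-- evaluation functional -/
noncomputable def evK {n : ℕ} (ζ : K n) : Y n →L[ℂ] ℂ := ContinuousMap.evalCLM ℂ ζ

@[simp] lemma evK_apply {n : ℕ} (ζ : K n) (f : Y n) : evK ζ f = f ζ := rfl

/-- closure of polynomials -/
noncomputable def PB (n : ℕ) : Subalgebra ℂ (Y n) := (PA n).topologicalClosure

lemma isClosed_PB (n : ℕ) : IsClosed (PB n : Set (Y n)) := (PA n).isClosed_topologicalClosure

lemma PB_le {n : ℕ} (hn : 0 < n) (W : Submodule ℂ (Y n)) (hW : IsClosed (W : Set (Y n)))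
    (h : ∀ w ∈ ball (0 : E n) 1, star (c w) ∈ W) (p : Y n) (hp : p ∈ PB n) : p ∈ W := by
  have : closure (PA n : Set (Y n)) ⊆ W := closure_minimal (fun p hp => PA_le hn W hW h p hp) hW
  exact this hp

lemma szego_poly (Λ : Measure (E n)) [IsProbabilityMeasure Λ]
    (hs : Λ (sphere (0 : E n) 1)ᶜ = 0)
    (hinv : ∀ U : E n ≃ₗᵢ[ℂ] E n, Measure.map (⇑U) Λ = Λ) (hn : 0 < n)
    {z : E n} (hz : z ∈ ball (0 : E n) 1) (p : Y n) (hp : p ∈ PB n) :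
    L Λ (p * c z) = p (pt hz) := by
  let T : Y n →L[ℂ] ℂ := (L Λ).comp ((ContinuousLinearMap.mul ℂ (Y n)).flip (c z)) - evK (pt hz)
  have h := PB_le hn (LinearMap.ker (T : Y n →ₗ[ℂ] ℂ)) T.isClosed_ker (by
    intro w hw
    have h1 := szego Λ hs hinv hn hz hw
    rw [LinearMap.mem_ker]
    show L Λ (star (c w) * c z) - (star (c w)) (pt hz) = 0
    rw [mul_comm, h1, sub_eq_zero, ContinuousMap.star_apply, c_apply (mem_ball_zero_iff.mp hw)]
    simp [pt, ip_conj]) p hp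
  rw [LinearMap.mem_ker] at h
  exact sub_eq_zero.mp h

lemma inv_one_sub_mem {n : ℕ} {f : Y n} (hf : f ∈ PB n) (h : ‖f‖ < 1) : Ring.inverse (1 - f) ∈ PB n := by
  have h1 := NormedRing.inverse_one_sub f h
  have h2 := (summable_geometric_of_norm_lt_one h).hasSum
  rw [h1]
  have h3 : ((Units.oneSub f h)⁻¹ : (Y n)ˣ) = (∑' k : ℕ, f ^ k) := by
    simp [Units.oneSub]
  rw [h3]
  exact (isClosed_PB n).mem_of_tendsto h2 (Eventually.of_forall fun s =>
    (PB n).sum_mem fun k _ => (PB n).pow_mem hf k)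

lemma PA_sub_PB {n : ℕ} {f : Y n} (hf : f ∈ PA n) : f ∈ PB n := (PA n).le_topologicalClosure hf

lemma star_e_mem {n : ℕ} (z : E n) : star (e z) ∈ PA n := by
  rw [e_def, star_sum]
  refine (PA n).sum_mem fun i _ => ?_
  rw [star_smul, star_star]
  exact (PA n).smul_mem (Algebra.subset_adjoin ⟨i, rfl⟩) _

lemma star_c_mem {n : ℕ} {z : E n} (hz : z ∈ ball (0 : E n) 1) : star (c z) ∈ PB n := by
  rw [c, star_pow, star_G]
  refine (PB n).pow_mem (inv_one_sub_mem (PA_sub_PB (star_e_mem z)) ?_) _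
  rw [norm_star]
  exact (norm_e_le z).trans_lt (mem_ball_zero_iff.mp hz)

lemma poisson_poly (Λ : Measure (E n)) [IsProbabilityMeasure Λ]
    (hs : Λ (sphere (0 : E n) 1)ᶜ = 0)
    (hinv : ∀ U : E n ≃ₗᵢ[ℂ] E n, Measure.map (⇑U) Λ = Λ) (hn : 0 < n)
    {z : E n} (hz : z ∈ ball (0 : E n) 1) (p : Y n) (hp : p ∈ PB n) :
    L Λ (p * star (c z) * c z) = p (pt hz) * ((1 - ‖z‖ ^ 2 : ℝ) : ℂ)⁻¹ ^ n := by
  rw [szego_poly Λ hs hinv hn hz _ ((PB n).mul_mem hp (star_c_mem hz)),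
    ContinuousMap.mul_apply, ContinuousMap.star_apply, c_apply (mem_ball_zero_iff.mp hz)]
  simp only [pt, ip_self]
  simp
end
end Clk

namespace Clk
open scoped Topology
section
variable {n : ℕ} [MeasurableSpace (E n)] [BorelSpace (E n)]

lemma sub_ne {n : ℕ} {b : E n → ℂ} 
    (hbmap : ∀ z ∈ ball (0 : E n) 1, b z ∈ ball (0 : ℂ) 1) {α : ℂ} (hα : ‖α‖ = 1)
    {z : E n} (hz : z ∈ ball (0 : E n) 1) : α - b z ≠ 0 := by
  intro h0
  have h1 := hbmap z hz
  rw [← sub_eq_zero.mp h0, mem_ball_zero_iff, hα] at h1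
  exact lt_irrefl _ h1

lemma key_ineq (hn : 0 < n) (σ μ : Measure (E n)) [IsFiniteMeasure σ] [IsFiniteMeasure μ]
    (b I : E n → ℂ) 
    (hbmap : ∀ z ∈ ball (0 : E n) 1, b z ∈ ball (0 : ℂ) 1) 
    (hImap : ∀ z ∈ ball (0 : E n) 1, I z ∈ ball (0 : ℂ) 1) (α : ℂ) (hα : ‖α‖ = 1)
    (hμ : ∀ z ∈ ball (0 : E n) 1, ∀ w ∈ ball (0 : E n) 1,
      (α - b z) * (starRingEnd ℂ) (α - b w) * L μ (c z * star (c w)) =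
      (1 - b z * (starRingEnd ℂ) (b w)) * (1 - ip z w)⁻¹ ^ n)
    (hσ : ∀ z ∈ ball (0 : E n) 1, ∀ w ∈ ball (0 : E n) 1,
      (α - I z) * (starRingEnd ℂ) (α - I w) * L σ (c z * star (c w)) =
      (1 - I z * (starRingEnd ℂ) (I w)) * (1 - ip z w)⁻¹ ^ n)
    (w : E n) (hw : w ∈ ball (0 : E n) 1)
    (hmem : MemRKHSBall n
        (fun z w' => (1 - b z * (starRingEnd ℂ) (b w')) * (1 - ip z w')⁻¹ ^ n)
        (fun z => (α - b z) / (α - I z) *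
          ((1 - I z * (starRingEnd ℂ) (I w)) * (1 - ip z w)⁻¹ ^ n))) :
    ∃ M : ℝ, 0 ≤ M ∧ ∀ q ∈ PB n, ‖L σ (q * c w)‖ ^ 2 ≤ M * ∫ ζ, ‖q ζ‖ ^ 2 ∂(km μ) := by
  obtain ⟨C, hC, hpsd⟩ := hmem
  set κ : ℂ := (starRingEnd ℂ) (α - I w) with hκ
  have hκ0 : κ ≠ 0 := by
    rw [hκ, Ne, map_eq_zero]; exact sub_ne hImap hα hw
  have hκp : 0 < ‖κ‖ ^ 2 := by positivity
  have hsp : ∀ q ∈ Submodule.span ℂ ((fun z => star (c z)) '' ball (0 : E n) 1),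
      ‖κ‖ ^ 2 * ‖L σ (q * c w)‖ ^ 2 ≤ C * (L μ (q * star q)).re := by
    intro q hq
    obtain ⟨m, d, g, rfl⟩ := Submodule.mem_span_set'.mp hq
    have hg : ∀ i, ∃ z ∈ ball (0 : E n) 1, star (c z) = (g i : Y n) := fun i => (g i).2
    choose z hz hzg using hg
    have h := hpsd m z (fun j => d j / (starRingEnd ℂ) (α - b (z j))) hz
    set q := ∑ i, d i • (g i : Y n) with hqd
    have hq1 : q = ∑ i, d i • star (c (z i)) := by simp [hqd, hzg]
    have hq2 : star q = ∑ i, (starRingEnd ℂ) (d i) • c (z i) := by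
      rw [hq1, star_sum]; simp [star_smul]
    have hS : ∑ i, (starRingEnd ℂ) (d i) * L σ (c (z i) * star (c w)) =
        (starRingEnd ℂ) (L σ (q * c w)) := by
      rw [← L_star, star_mul, mul_comm, hq2, Finset.sum_mul, map_sum]
      simp
    have hM : ∑ i, ∑ j, (starRingEnd ℂ) (d i) * d j * L μ (c (z i) * star (c (z j))) =
        L μ (q * star q) := by
      rw [mul_comm, hq2, hq1, Finset.sum_mul, map_sum]
      refine Finset.sum_congr rfl fun i _ => ?_
      rw [Finset.mul_sum, map_sum]
      refine Finset.sum_congr rfl fun j _ => ?_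
      simp [mul_assoc]; ring
    have hterm : ∀ i j, (starRingEnd ℂ) (d i / (starRingEnd ℂ) (α - b (z i))) *
        (d j / (starRingEnd ℂ) (α - b (z j))) *
        ((C : ℂ) * ((1 - b (z i) * (starRingEnd ℂ) (b (z j))) * (1 - ip (z i) (z j))⁻¹ ^ n) -
        ((α - b (z i)) / (α - I (z i)) *
          ((1 - I (z i) * (starRingEnd ℂ) (I w)) * (1 - ip (z i) w)⁻¹ ^ n)) *
        (starRingEnd ℂ) ((α - b (z j)) / (α - I (z j)) *
          ((1 - I (z j) * (starRingEnd ℂ) (I w)) * (1 - ip (z j) w)⁻¹ ^ n))) =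
        (C : ℂ) * ((starRingEnd ℂ) (d i) * d j * L μ (c (z i) * star (c (z j)))) -
        (κ * ((starRingEnd ℂ) (d i) * L σ (c (z i) * star (c w)))) *
        (starRingEnd ℂ) (κ * ((starRingEnd ℂ) (d j) * L σ (c (z j) * star (c w)))) := by
      intro i j
      rw [← hμ _ (hz i) _ (hz j), ← hσ _ (hz i) _ hw, ← hσ _ (hz j) _ hw]
      have n1 := sub_ne hbmap hα (hz i)
      have n2 := sub_ne hbmap hα (hz j)
      have n3 := sub_ne hImap hα (hz i)
      have n4 := sub_ne hImap hα (hz j)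
      have n5 : (starRingEnd ℂ) (α - b (z j)) ≠ 0 := by rwa [Ne, map_eq_zero]
      have n6 : (starRingEnd ℂ) (α - I (z j)) ≠ 0 := by rwa [Ne, map_eq_zero]
      rw [← hκ]
      simp only [map_mul, map_div₀, Complex.conj_conj]
      generalize (starRingEnd ℂ) (α - b (z j)) = B' at *
      generalize (starRingEnd ℂ) (α - I (z j)) = I' at *
      generalize α - b (z i) = B at *
      generalize α - I (z i) = I'' at *
      field_simp
    simp only [hterm, Finset.sum_sub_distrib, ← Finset.mul_sum, hM] at h
    rw [← Finset.sum_mul, ← map_sum, ← Finset.mul_sum, hS, Complex.mul_conj, Complex.sub_re,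
      Complex.re_ofReal_mul, Complex.ofReal_re, Complex.normSq_eq_norm_sq, norm_mul,
      RCLike.norm_conj (L σ (q * c w)), mul_pow] at h
    linarith
  refine ⟨C / ‖κ‖ ^ 2, by positivity, fun q hq => ?_⟩
  have hq' := PB_le hn (Submodule.span ℂ
    ((fun z => star (c z)) '' ball (0 : E n) 1)).topologicalClosure
    (Submodule.isClosed_topologicalClosure _)
    (fun v hv => Submodule.le_topologicalClosure _ (Submodule.subset_span ⟨v, hv, rfl⟩)) q hq
  have hcl : IsClosed {q : Y n | ‖κ‖ ^ 2 * ‖L σ (q * c w)‖ ^ 2 ≤ C * (L μ (q * star q)).re} := by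
    apply isClosed_le
    · exact continuous_const.mul (((L σ).continuous.comp (continuous_id.mul continuous_const)).norm.pow 2)
    · exact continuous_const.mul (Complex.continuous_re.comp
        ((L μ).continuous.comp (continuous_id.mul continuous_star)))
  have h := closure_minimal (s := (Submodule.span ℂ
    ((fun z => star (c z)) '' ball (0 : E n) 1) : Set (Y n))) hsp hcl hq'
  have h : ‖κ‖ ^ 2 * ‖L σ (q * c w)‖ ^ 2 ≤ C * (L μ (q * star q)).re := h
  rw [L_mul_star, Complex.ofReal_re] at h
  rw [div_mul_eq_mul_div, le_div_iff₀ hκp]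
  linarith
end
end Clk

namespace Clk
open scoped Topology
section
variable {n : ℕ} [MeasurableSpace (E n)] [BorelSpace (E n)]

/-- Cauchy transform -/
noncomputable def psi (σ : Measure (E n)) [IsFiniteMeasure σ] (z : E n) : ℂ := L σ (c z)

/-- scaling of the closed ball -/
noncomputable def sk {n : ℕ} (t : ℝ) (h0 : 0 ≤ t) (h1 : t ≤ 1) (ζ : K n) : K n :=
  ⟨t • (ζ : E n), by
    rw [mem_closedBall_zero_iff, norm_smul, Real.norm_of_nonneg h0]
    nlinarith [normK ζ, norm_nonneg (ζ : E n)]⟩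

lemma smul_mem_ball {n : ℕ} {t : ℝ} (h0 : 0 ≤ t) (h1 : t < 1) (ζ : K n) :
    t • (ζ : E n) ∈ ball (0 : E n) 1 := by
  rw [mem_ball_zero_iff, norm_smul, Real.norm_of_nonneg h0]
  nlinarith [normK ζ, norm_nonneg (ζ : E n)]

lemma e_real_smul {n : ℕ} (t : ℝ) (z : E n) : e (t • z) = (t : ℂ) • e z := by
  rw [← map_smul]; congr 1

lemma poly_moment (σ : Measure (E n)) [IsFiniteMeasure σ] (k : ℕ) : ∀ g : Y n,
    ∃ a ∈ PA n, ∀ ζ : K n, a ζ = L σ (e (ζ : E n) ^ k * g) := by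
  induction k with
  | zero =>
    intro g
    exact ⟨algebraMap ℂ (Y n) (L σ g), (PA n).algebraMap_mem _, fun ζ => by simp⟩
  | succ k ih =>
    intro g
    choose a ha ha2 using fun i : Fin n => ih (star (x i) * g)
    refine ⟨∑ i, x i * a i, (PA n).sum_mem fun i _ =>
      (PA n).mul_mem (Algebra.subset_adjoin ⟨i, rfl⟩) (ha i), fun ζ => ?_⟩
    rw [ContinuousMap.sum_apply]
    have : e (ζ : E n) ^ (k + 1) * g =
        ∑ i, (ζ : E n) i • (e (ζ : E n) ^ k * (star (x i) * g)) := by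
      rw [pow_succ]
      nth_rewrite 2 [e_def]
      rw [Finset.mul_sum, Finset.sum_mul]
      refine Finset.sum_congr rfl fun i _ => ?_
      rw [mul_smul_comm, smul_mul_assoc, mul_assoc]
    rw [this, map_sum]
    refine Finset.sum_congr rfl fun i _ => ?_
    rw [map_smul, ContinuousMap.mul_apply, ha2, x_apply, smul_eq_mul]

lemma psi_mem (hn : 0 < n) (σ : Measure (E n)) [IsFiniteMeasure σ] {t : ℝ} (h0 : 0 ≤ t) (h1 : t < 1) :
    ∃ f ∈ PB n, ∀ ζ : K n, f ζ = psi σ (t • (ζ : E n)) := by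
  obtain ⟨m, hm⟩ : ∃ m, n = m + 1 := ⟨n - 1, by omega⟩
  choose a ha ha2 using fun k => poly_moment σ k 1
  have hnorm : ∀ k, ‖a k‖ ≤ ‖L σ‖ := by
    intro k
    rw [ContinuousMap.norm_le _ (norm_nonneg _)]
    intro ζ
    rw [ha2, mul_one]
    refine ((L σ).le_opNorm _).trans ?_
    have h2 : ‖e (ζ : E n) ^ k‖ ≤ 1 := by
      refine (norm_pow_le _ _).trans ?_
      exact pow_le_one₀ (norm_nonneg _) ((norm_e_le _).trans (normK ζ))
    nlinarith [norm_nonneg (L σ)]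
  have hs : Summable (fun k : ℕ => (((k + m).choose m : ℝ) * t ^ k) * ‖L σ‖) := by
    have := (summable_choose_mul_geometric_of_norm_lt_one m (r := t)
      (by rwa [Real.norm_of_nonneg h0])).mul_right ‖L σ‖
    exact this
  have hs2 : Summable (fun k : ℕ => (((k + m).choose m : ℂ) * (t : ℂ) ^ k) • a k) := by
    refine Summable.of_norm_bounded hs fun k => ?_
    rw [norm_smul]
    have : ‖((k + m).choose m : ℂ) * (t : ℂ) ^ k‖ = ((k + m).choose m : ℝ) * t ^ k := by
      rw [norm_mul, norm_pow, Complex.norm_real, Real.norm_of_nonneg h0]; simp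
    rw [this]
    exact mul_le_mul_of_nonneg_left (hnorm k) (by positivity)
  refine ⟨∑' k : ℕ, (((k + m).choose m : ℂ) * (t : ℂ) ^ k) • a k, ?_, fun ζ => ?_⟩
  · exact (isClosed_PB n).mem_of_tendsto hs2.hasSum (Eventually.of_forall fun s =>
      (PB n).sum_mem fun k _ => (PB n).smul_mem (PA_sub_PB (ha k)) _)
  · have h3 := hs2.hasSum.mapL (evK ζ)
    have h4 := (hasSum_c m hm (smul_mem_ball h0 h1 ζ)).mapL (L σ)
    have h5 : (fun k : ℕ => evK ζ ((((k + m).choose m : ℂ) * (t : ℂ) ^ k) • a k)) =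
        fun k : ℕ => L σ (((k + m).choose m : ℂ) • e (t • (ζ : E n)) ^ k) := by
      funext k
      rw [map_smul, evK_apply, ha2, e_real_smul, smul_pow, map_smul, map_smul, mul_one]
      simp [mul_assoc]
    rw [h5] at h3
    exact h3.unique h4

lemma h_mem (hn : 0 < n) (σ : Measure (E n)) [IsFiniteMeasure σ]
    (hre : ∀ z ∈ ball (0 : E n) 1, 0 ≤ (psi σ z).re)
    {t : ℝ} (h0 : 0 ≤ t) (h1 : t < 1) {N : ℝ} (hN : 0 < N) :
    ∃ f ∈ PB n, ∀ ζ : K n, f ζ = N / (N + psi σ (t • (ζ : E n))) := by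
  obtain ⟨f, hf, hf2⟩ := psi_mem hn σ h0 h1
  set R := ‖f‖ with hR
  set A := R ^ 2 / N with hA
  have hA0 : 0 ≤ A := by positivity
  have hAN : N * A = R ^ 2 := by rw [hA]; field_simp
  have hNA : 0 < N + A := by linarith
  let g : Y n := ((N + A : ℝ) : ℂ)⁻¹ • (algebraMap ℂ (Y n) A - f)
  have hg : g ∈ PB n := (PB n).smul_mem ((PB n).sub_mem ((PB n).algebraMap_mem _) hf) _
  have hgn : ‖g‖ < 1 := by
    rw [ContinuousMap.norm_lt_iff _ one_pos]
    intro ζ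
    have e1 : g ζ = ((N + A : ℝ) : ℂ)⁻¹ * (A - f ζ) := by simp [g]
    rw [e1, norm_mul, norm_inv, Complex.norm_real, Real.norm_of_nonneg hNA.le, inv_mul_lt_one₀ hNA]
    apply lt_of_pow_lt_pow_left₀ 2 hNA.le
    have e2 : ‖(A : ℂ) - f ζ‖ ^ 2 = A ^ 2 - 2 * A * (f ζ).re + ‖f ζ‖ ^ 2 := by
      rw [← Complex.normSq_eq_norm_sq, ← Complex.normSq_eq_norm_sq, Complex.normSq_apply,
        Complex.normSq_apply]
      simp; ring
    have e3 : 0 ≤ (f ζ).re := by rw [hf2]; exact hre _ (smul_mem_ball h0 h1 ζ)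
    have e4 : ‖f ζ‖ ≤ R := f.norm_coe_le_norm ζ
    have e5 : ‖f ζ‖ ^ 2 ≤ R ^ 2 := pow_le_pow_left₀ (norm_nonneg _) e4 2
    rw [e2]
    nlinarith [mul_nonneg hA0 e3, mul_pos hN hN]
  refine ⟨((N : ℂ) / ((N + A : ℝ) : ℂ)) • Ring.inverse (1 - g),
    (PB n).smul_mem (inv_one_sub_mem hg hgn) _, fun ζ => ?_⟩
  rw [ContinuousMap.smul_apply, ringInverse_apply (isUnit_one_sub_of_norm_lt_one hgn), ← hf2]
  have e1 : (1 - g) ζ = 1 - ((N + A : ℝ) : ℂ)⁻¹ * (A - f ζ) := by simp [g]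
  rw [e1]
  have hne : ((N + A : ℝ) : ℂ) ≠ 0 := by exact_mod_cast hNA.ne'
  have hne2 : 1 - ((N + A : ℝ) : ℂ)⁻¹ * (A - f ζ) = (N + f ζ) / ((N + A : ℝ) : ℂ) := by
    field_simp; push_cast; ring
  rw [hne2, smul_eq_mul, inv_div]
  field_simp

lemma fubini_poisson (hn : 0 < n) (Λ : Measure (E n)) [IsProbabilityMeasure Λ]
    (hs : Λ (sphere (0 : E n) 1)ᶜ = 0)
    (hinv : ∀ U : E n ≃ₗᵢ[ℂ] E n, Measure.map (⇑U) Λ = Λ)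
    (σ : Measure (E n)) [IsFiniteMeasure σ] (hσs : σ (sphere (0 : E n) 1)ᶜ = 0)
    (u : E n → ℝ)
    (hu : ∀ z ∈ ball (0 : E n) 1,
      ∫ ζ, (1 - ‖z‖ ^ 2) ^ n / ‖1 - ip z ζ‖ ^ (2 * n) ∂σ = u z)
    {t : ℝ} (h0 : 0 ≤ t) (h1 : t < 1) (q : Y n) (hq : q ∈ PB n) :
    ∫ ζ : K n, q (sk t h0 h1.le ζ) ∂(km σ) =
      ∫ η : K n, q η * (u (t • (η : E n)) : ℂ) ∂(km Λ) := by
  let Q : K n → K n → ℂ := fun ζ η =>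
    q η * (((1 - t ^ 2) ^ n / ‖1 - ip (t • (ζ : E n)) η‖ ^ (2 * n) : ℝ) : ℂ)
  have hQc : Continuous (Function.uncurry Q) := by
    have hip : Continuous (fun p : K n × K n => ip (t • (p.1 : E n)) (p.2 : E n)) := by
      simp only [ip_eq]; fun_prop
    have hne : ∀ p : K n × K n, ‖1 - ip (t • (p.1 : E n)) (p.2 : E n)‖ ^ (2 * n) ≠ 0 := by
      intro p
      exact pow_ne_zero _ (norm_ne_zero_iff.mpr (one_sub_ip_ne
        (mem_ball_zero_iff.mp (smul_mem_ball h0 h1 p.1)) (normK p.2)))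
    refine (q.continuous.comp continuous_snd).mul (Complex.continuous_ofReal.comp ?_)
    exact continuous_const.div ((continuous_const.sub hip).norm.pow _) hne
  have hQi : Integrable (Function.uncurry Q) ((km σ).prod (km Λ)) :=
    Continuous.integrable_of_hasCompactSupport hQc (HasCompactSupport.of_compactSpace _)
  have hS : ∀ᵐ ζ ∂σ, ζ ∈ sphere (0 : E n) 1 := hσs
  have hSΛ : ∀ᵐ ζ ∂Λ, ζ ∈ sphere (0 : E n) 1 := hs
  have hnm : ∀ ζ : K n, (ζ : E n) ∈ sphere (0 : E n) 1 → ‖t • (ζ : E n)‖ ^ 2 = t ^ 2 := by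
    intro ζ hζ
    rw [norm_smul, mem_sphere_zero_iff_norm.mp hζ, Real.norm_of_nonneg h0, mul_one]
  have hL : ∫ ζ : K n, q (sk t h0 h1.le ζ) ∂(km σ) = ∫ ζ, ∫ η, Q ζ η ∂(km Λ) ∂(km σ) := by
    apply integral_congr_ae
    filter_upwards [ae_km hS] with ζ hζ
    have hz := smul_mem_ball h0 h1 ζ
    have hp := poisson_poly Λ hs hinv hn hz q hq
    rw [hnm ζ hζ] at hp
    have ht : (1 - t ^ 2 : ℝ) ≠ 0 := by nlinarith
    have hp2 : q (sk t h0 h1.le ζ) =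
        ((1 - t ^ 2 : ℝ) : ℂ) ^ n * L Λ (q * star (c (t • (ζ : E n))) * c (t • (ζ : E n))) := by
      rw [hp]
      have : ((1 - t ^ 2 : ℝ) : ℂ) ≠ 0 := by exact_mod_cast ht
      rw [inv_pow]; field_simp
      rfl
    rw [hp2, L_apply, ← integral_const_mul]
    congr 1; ext η
    simp only [ContinuousMap.mul_apply, ContinuousMap.star_apply,
      c_apply (mem_ball_zero_iff.mp hz), Q]
    rw [mul_assoc (q η), Complex.star_def, Complex.conj_mul']
    rw [norm_pow, norm_inv]
    push_cast
    rw [← pow_mul, inv_pow, mul_comm n 2]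
    ring
  have hR : ∫ η : K n, q η * (u (t • (η : E n)) : ℂ) ∂(km Λ) =
      ∫ η, ∫ ζ, Q ζ η ∂(km σ) ∂(km Λ) := by
    apply integral_congr_ae
    filter_upwards [ae_km hSΛ] with η hη
    rw [← hu _ (smul_mem_ball h0 h1 η), ← integral_km hσs, ← integral_complex_ofReal,
      ← integral_const_mul]
    congr 1; ext ζ
    simp only [Q]
    have : ‖1 - ip (t • (η : E n)) ζ‖ = ‖1 - ip (t • (ζ : E n)) η‖ := by
      rw [← RCLike.norm_conj, map_sub, ip_conj]
      have : ip (ζ : E n) (t • (η : E n)) = ip (t • (ζ : E n)) η := by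
        simp [ip]; congr 1; ext i; ring
      rw [this]; simp
    rw [hnm η hη, this]
  rw [hL, hR]
  exact integral_integral_swap hQi
end
end Clk

namespace Clk
open scoped Topology
section
variable {n : ℕ} [MeasurableSpace (E n)] [BorelSpace (E n)]

lemma re_H {α w : ℂ} (hα : ‖α‖ = 1) :
    ((α + w) / (α - w)).re = (1 - ‖w‖ ^ 2) / ‖α - w‖ ^ 2 := by
  have h1 : (α + w) / (α - w) = ((α + w) * (starRingEnd ℂ) (α - w)) / ((‖α - w‖ ^ 2 : ℝ) : ℂ) := by
    by_cases h : α - w = 0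
    · simp [h]
    · have h2 : (starRingEnd ℂ) (α - w) ≠ 0 := by rwa [Ne, map_eq_zero]
      rw [← Complex.normSq_eq_norm_sq, ← Complex.mul_conj, mul_div_mul_right _ _ h2]
  rw [h1, Complex.div_ofReal_re]
  congr 1
  have h3 : ‖α‖ ^ 2 = 1 := by rw [hα]; norm_num
  rw [← h3, ← Complex.normSq_eq_norm_sq, ← Complex.normSq_eq_norm_sq, Complex.normSq_apply,
    Complex.normSq_apply]
  simp; ring

lemma two_psi (σ : Measure (E n)) [IsFiniteMeasure σ] (I : E n → ℂ)
    (hImap : ∀ z ∈ ball (0 : E n) 1, I z ∈ ball (0 : ℂ) 1) (α : ℂ) (hα : ‖α‖ = 1)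
    (hσ : ∀ z ∈ ball (0 : E n) 1, ∀ w ∈ ball (0 : E n) 1,
      (α - I z) * (starRingEnd ℂ) (α - I w) * L σ (c z * star (c w)) =
      (1 - I z * (starRingEnd ℂ) (I w)) * (1 - ip z w)⁻¹ ^ n)
    {z : E n} (hz : z ∈ ball (0 : E n) 1) :
    2 * psi σ z = (α + I z) / (α - I z) + (starRingEnd ℂ) ((α + I 0) / (α - I 0)) := by
  have hB0 : (0 : E n) ∈ ball (0 : E n) 1 := by simp
  have h := hσ z hz 0 hB0
  have hip : ip z (0 : E n) = 0 := by simp [ip]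
  rw [c_zero, hip] at h
  simp only [star_one, mul_one, sub_zero, inv_one, one_pow] at h
  have h' : (α - I z) * (starRingEnd ℂ) (α - I 0) * psi σ z = 1 - I z * (starRingEnd ℂ) (I 0) := h
  have n1 := sub_ne hImap hα hz
  have n2 : (starRingEnd ℂ) (α - I 0) ≠ 0 := by
    rw [Ne, map_eq_zero]; exact sub_ne hImap hα hB0
  have hαα : α * (starRingEnd ℂ) α = 1 := by
    rw [Complex.mul_conj, Complex.normSq_eq_norm_sq, hα]; norm_num
  rw [map_div₀]
  rw [div_add_div _ _ n1 n2, eq_div_iff (mul_ne_zero n1 n2)]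
  simp only [map_add, map_sub] at *
  linear_combination 2 * h' - 2 * hαα

lemma re_psi (σ : Measure (E n)) [IsFiniteMeasure σ] (I : E n → ℂ)
    (hImap : ∀ z ∈ ball (0 : E n) 1, I z ∈ ball (0 : ℂ) 1) (α : ℂ) (hα : ‖α‖ = 1)
    (hσ : ∀ z ∈ ball (0 : E n) 1, ∀ w ∈ ball (0 : E n) 1,
      (α - I z) * (starRingEnd ℂ) (α - I w) * L σ (c z * star (c w)) =
      (1 - I z * (starRingEnd ℂ) (I w)) * (1 - ip z w)⁻¹ ^ n)
    {z : E n} (hz : z ∈ ball (0 : E n) 1) :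
    0 ≤ (1 - ‖I z‖ ^ 2) / ‖α - I z‖ ^ 2 ∧ 0 ≤ (psi σ z).re ∧
    (1 - ‖I z‖ ^ 2) / ‖α - I z‖ ^ 2 ≤ 2 * (psi σ z).re := by
  have hB0 : (0 : E n) ∈ ball (0 : E n) 1 := by simp
  have h := congrArg Complex.re (two_psi σ I hImap α hα hσ hz)
  rw [Complex.add_re, Complex.conj_re, re_H hα, re_H hα] at h
  have pos : ∀ v ∈ ball (0 : E n) 1, 0 ≤ (1 - ‖I v‖ ^ 2) / ‖α - I v‖ ^ 2 := by
    intro v hv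
    have := mem_ball_zero_iff.mp (hImap v hv)
    apply div_nonneg _ (by positivity)
    nlinarith [norm_nonneg (I v)]
  have p1 := pos z hz
  have p0 := pos 0 hB0
  have h2 : (2 * psi σ z).re = 2 * (psi σ z).re := by simp
  rw [h2] at h
  refine ⟨p1, by linarith, by linarith⟩

lemma h_bounds {N : ℝ} (hN : 0 < N) {p : ℂ} (hp : 0 ≤ p.re) :
    N + p.re ≤ ‖(N : ℂ) + p‖ ∧ ‖(N : ℂ) / (N + p)‖ ≤ 1 ∧
    ‖(N : ℂ) / (N + p)‖ ^ 2 ≤ ((N : ℂ) / (N + p)).re ∧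
    1 - (N : ℂ) / (N + p) = p / (N + p) ∧ ‖(N : ℂ) / (N + p)‖ * p.re ≤ N := by
  have h1 : N + p.re ≤ ‖(N : ℂ) + p‖ := by
    have := Complex.re_le_norm ((N : ℂ) + p)
    simpa using this
  have h2 : 0 < ‖(N : ℂ) + p‖ := by linarith
  have h3 : (N : ℂ) + p ≠ 0 := norm_pos_iff.mp h2
  have h4 : ‖(N : ℂ) / (N + p)‖ = N / ‖(N : ℂ) + p‖ := by
    rw [norm_div, Complex.norm_real, Real.norm_of_nonneg hN.le]
  refine ⟨h1, ?_, ?_, ?_, ?_⟩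
  · rw [h4, div_le_one h2]; linarith
  · rw [h4, Complex.div_re, div_pow]
    simp only [Complex.ofReal_re, Complex.ofReal_im, Complex.add_re, zero_mul, zero_div, add_zero]
    rw [Complex.normSq_eq_norm_sq]
    apply div_le_div_of_nonneg_right _ (by positivity)
    nlinarith
  · field_simp; ring
  · rw [h4, div_mul_eq_mul_div, div_le_iff₀ h2]
    nlinarith

/-- radii tending to 1 -/
noncomputable def tk (k : ℕ) : ℝ := 1 - 1 / ((k : ℝ) + 2)

lemma tk_nonneg (k : ℕ) : 0 ≤ tk k := by
  unfold tk
  have : 1 / ((k : ℝ) + 2) ≤ 1 := by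
    rw [div_le_one (by positivity)]; linarith [(Nat.cast_nonneg k : (0:ℝ) ≤ k)]
  linarith

lemma tk_lt (k : ℕ) : tk k < 1 := by
  unfold tk
  have : 0 < 1 / ((k : ℝ) + 2) := by positivity
  linarith

lemma tk_tendsto : Tendsto tk atTop (nhdsWithin 1 (Iio 1)) := by
  apply tendsto_nhdsWithin_iff.mpr
  refine ⟨?_, Eventually.of_forall fun k => tk_lt k⟩
  have h : Tendsto (fun k : ℕ => 1 / ((k : ℝ) + 2)) atTop (𝓝 0) := by
    apply Tendsto.div_atTop tendsto_const_nhds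
    exact tendsto_atTop_add_const_right _ _ tendsto_natCast_atTop_atTop
  have h2 := h.const_sub 1
  rw [sub_zero] at h2
  exact h2

lemma h_tendsto (σ : Measure (E n)) [IsFiniteMeasure σ] (I : E n → ℂ)
    (hImap : ∀ z ∈ ball (0 : E n) 1, I z ∈ ball (0 : ℂ) 1) (α : ℂ) (hα : ‖α‖ = 1)
    (hσ : ∀ z ∈ ball (0 : E n) 1, ∀ w ∈ ball (0 : E n) 1,
      (α - I z) * (starRingEnd ℂ) (α - I w) * L σ (c z * star (c w)) =
      (1 - I z * (starRingEnd ℂ) (I w)) * (1 - ip z w)⁻¹ ^ n)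
    (z : ℕ → E n) (hz : ∀ k, z k ∈ ball (0 : E n) 1)
    (hI : Tendsto (fun k => I (z k)) atTop (𝓝 α)) {N : ℝ} (hN : 0 < N) :
    Tendsto (fun k => (N : ℂ) / (N + psi σ (z k))) atTop (𝓝 0) := by
  have hB0 : (0 : E n) ∈ ball (0 : E n) 1 := by simp
  set c0 := (starRingEnd ℂ) ((α + I 0) / (α - I 0)) with hc0
  have e1 : ∀ k, (N : ℂ) / (N + psi σ (z k)) =
      2 * N * (α - I (z k)) / ((2 * N + c0) * (α - I (z k)) + (α + I (z k))) := by
    intro k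
    have h := two_psi σ I hImap α hα hσ (hz k)
    have n1 := sub_ne hImap hα (hz k)
    have h2 : psi σ (z k) = ((α + I (z k)) / (α - I (z k)) + c0) / 2 := by
      rw [← hc0] at h; linear_combination h / 2
    have h3 : (N : ℂ) + psi σ (z k) =
        ((2 * N + c0) * (α - I (z k)) + (α + I (z k))) / (2 * (α - I (z k))) := by
      rw [h2]; field_simp; ring
    rw [h3, div_div_eq_mul_div]; ring
  simp_rw [e1]
  have hα0 : α ≠ 0 := by rw [← norm_ne_zero_iff, hα]; norm_num
  have l1 : Tendsto (fun k => 2 * (N : ℂ) * (α - I (z k))) atTop (𝓝 (2 * N * (α - α))) :=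
    (hI.const_sub α).const_mul _
  have l2 : Tendsto (fun k => (2 * (N : ℂ) + c0) * (α - I (z k)) + (α + I (z k))) atTop
      (𝓝 ((2 * N + c0) * (α - α) + (α + α))) :=
    ((hI.const_sub α).const_mul _).add (hI.const_add α)
  have h3 := l1.div l2 (by simpa [← two_mul] using hα0)
  rw [sub_self, mul_zero, zero_div] at h3
  exact h3
end
end Clk

namespace Clk
open scoped Topology
section
variable {n : ℕ} [MeasurableSpace (E n)] [BorelSpace (E n)]

lemma null_alpha (hn : 0 < n) (Λ : Measure (E n)) [IsProbabilityMeasure Λ]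
    (hs : Λ (sphere (0 : E n) 1)ᶜ = 0)
    (hinv : ∀ U : E n ≃ₗᵢ[ℂ] E n, Measure.map (⇑U) Λ = Λ)
    (σ : Measure (E n)) [IsFiniteMeasure σ] (I : E n → ℂ)
    (hImap : ∀ z ∈ ball (0 : E n) 1, I z ∈ ball (0 : ℂ) 1) (α : ℂ) (hα : ‖α‖ = 1)
    (hσ : ∀ z ∈ ball (0 : E n) 1, ∀ w ∈ ball (0 : E n) 1,
      (α - I z) * (starRingEnd ℂ) (α - I w) * L σ (c z * star (c w)) =
      (1 - I z * (starRingEnd ℂ) (I w)) * (1 - ip z w)⁻¹ ^ n) :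
    ∀ᵐ η : K n ∂(km Λ), ¬ Tendsto (fun k => I (tk k • (η : E n))) atTop (𝓝 α) := by
  have hre : ∀ z ∈ ball (0 : E n) 1, 0 ≤ (psi σ z).re :=
    fun z hz => (re_psi σ I hImap α hα hσ hz).2.1
  have hB0 : (0 : E n) ∈ ball (0 : E n) 1 := by simp
  choose h hh hh2 using fun (N : ℕ) (k : ℕ) =>
    h_mem hn σ hre (tk_nonneg k) (tk_lt k) (N := (N : ℝ) + 1) (by positivity)
  let g : ℕ → ℕ → K n → ENNReal := fun N k η => ENNReal.ofReal (1 - h N k η).re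
  have hmeas : ∀ N k, Measurable (g N k) := by
    intro N k
    apply ENNReal.measurable_ofReal.comp
    have : Continuous (fun η => (1 - h N k η).re) := by
      have := (h N k).continuous
      fun_prop
    exact this.measurable
  have hprob : (km Λ).real univ = 1 := by
    have h1 := integral_km hs (fun _ => (1 : ℝ))
    simpa using h1
  have hpos : ∀ N k (η : K n), 0 ≤ (1 - h N k η).re := by
    intro N k η
    rw [hh2]
    have hN : (0 : ℝ) < (N : ℝ) + 1 := by positivity
    have h1 := h_bounds hN (hre _ (smul_mem_ball (tk_nonneg k) (tk_lt k) η))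
    have h2 := Complex.re_le_norm (((N + 1 : ℝ) : ℂ) / (((N + 1 : ℝ) : ℂ) + psi σ (tk k • (η : E n))))
    rw [Complex.sub_re, Complex.one_re]
    linarith [h1.2.1]
  have hbound_int : ∀ N k, ∫⁻ η, g N k η ∂(km Λ) ≤ ENNReal.ofReal (‖psi σ 0‖ / (N + 1)) := by
    intro N k
    have hi : Integrable (fun η => (1 - h N k η).re) (km Λ) := (integrable_Y Λ (1 - h N k)).re
    rw [← ofReal_integral_eq_lintegral_ofReal hi (Eventually.of_forall (hpos N k))]
    apply ENNReal.ofReal_le_ofReal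
    have e1 : ∫ η, (1 - h N k η).re ∂(km Λ) = (L Λ (1 - h N k)).re := by
      rw [L_apply]
      exact integral_re (integrable_Y Λ (1 - h N k))
    have e2 := szego_poly Λ hs hinv hn hB0 (1 - h N k) ((PB n).sub_mem (PB n).one_mem (hh N k))
    rw [c_zero, mul_one] at e2
    have hN : (0 : ℝ) < (N : ℝ) + 1 := by positivity
    rw [e1, e2]
    have e3 : (1 - h N k) (pt hB0) = psi σ 0 / (((N + 1 : ℝ) : ℂ) + psi σ 0) := by
      rw [ContinuousMap.sub_apply, hh2]
      simp only [pt, smul_zero]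
      exact (h_bounds hN (hre 0 hB0)).2.2.2.1
    rw [e3]
    refine (Complex.re_le_norm _).trans ?_
    rw [norm_div]
    apply div_le_div_of_nonneg_left (norm_nonneg _) hN
    linarith [(h_bounds hN (hre 0 hB0)).1, hre 0 hB0]
  have hfat : ∀ N, (km Λ) {η | 1 ≤ liminf (fun k => g N k η) atTop} ≤
      ENNReal.ofReal (‖psi σ 0‖ / (N + 1)) := by
    intro N
    have h1 := mul_meas_ge_le_lintegral (μ := km Λ) (Measurable.liminf (hmeas N)) 1
    rw [one_mul] at h1
    refine h1.trans ((lintegral_liminf_le (hmeas N)).trans ?_)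
    apply Filter.liminf_le_of_le
    · exact isBounded_ge_of_bot
    · intro b hb
      obtain ⟨k, hk⟩ := hb.exists
      exact hk.trans (hbound_int N k)
  have hA : (km Λ) (⋂ N, {η | 1 ≤ liminf (fun k => g N k η) atTop}) = 0 := by
    have hb : ∀ N : ℕ, (km Λ) (⋂ N, {η | 1 ≤ liminf (fun k => g N k η) atTop}) ≤
        ENNReal.ofReal (‖psi σ 0‖ / (N + 1)) := fun N =>
      (measure_mono (iInter_subset _ N)).trans (hfat N)
    have hlim : Tendsto (fun N : ℕ => ENNReal.ofReal (‖psi σ 0‖ / (N + 1))) atTop (𝓝 0) := by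
      have := (tendsto_const_nhds (x := ‖psi σ 0‖)).div_atTop
        (tendsto_atTop_add_const_right _ (1:ℝ) tendsto_natCast_atTop_atTop)
      simpa using ENNReal.tendsto_ofReal this
    exact le_antisymm (ge_of_tendsto' hlim hb) bot_le
  have hA' : ∀ᵐ η ∂(km Λ), η ∉ (⋂ N, {η | 1 ≤ liminf (fun k => g N k η) atTop}) :=
    measure_eq_zero_iff_ae_notMem.mp hA
  filter_upwards [hA'] with η hη hT
  apply hη
  rw [mem_iInter]
  intro N
  have hN : (0 : ℝ) < (N : ℝ) + 1 := by positivity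
  have h1 := h_tendsto σ I hImap α hα hσ (fun k => tk k • (η : E n))
    (fun k => smul_mem_ball (tk_nonneg k) (tk_lt k) η) hT hN
  have h2 : Tendsto (fun k => g N k η) atTop (𝓝 1) := by
    have h3 : Tendsto (fun k => (1 - h N k η).re) atTop (𝓝 1) := by
      simp only [hh2]
      have := (Complex.continuous_re.tendsto _).comp (h1.const_sub 1)
      simpa [Function.comp_def] using this
    have h4 := ENNReal.tendsto_ofReal h3
    rw [ENNReal.ofReal_one] at h4
    exact h4
  show 1 ≤ liminf (fun k => g N k η) atTop
  rw [h2.liminf_eq]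

lemma good_t (hn : 0 < n) (Λ : Measure (E n)) [IsProbabilityMeasure Λ]
    (hs : Λ (sphere (0 : E n) 1)ᶜ = 0)
    (hinv : ∀ U : E n ≃ₗᵢ[ℂ] E n, Measure.map (⇑U) Λ = Λ)
    (σ : Measure (E n)) [IsFiniteMeasure σ] (hσs : σ (sphere (0 : E n) 1)ᶜ = 0) (I : E n → ℂ)
    (hI : DifferentiableOn ℂ I (ball (0 : E n) 1))
    (hImap : ∀ z ∈ ball (0 : E n) 1, I z ∈ ball (0 : ℂ) 1) (α : ℂ) (hα : ‖α‖ = 1)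
    (hσ : ∀ z ∈ ball (0 : E n) 1, ∀ w ∈ ball (0 : E n) 1,
      (α - I z) * (starRingEnd ℂ) (α - I w) * L σ (c z * star (c w)) =
      (1 - I z * (starRingEnd ℂ) (I w)) * (1 - ip z w)⁻¹ ^ n)
    (hu : ∀ z ∈ ball (0 : E n) 1,
      ∫ ζ, (1 - ‖z‖ ^ 2) ^ n / ‖1 - ip z ζ‖ ^ (2 * n) ∂σ = (1 - ‖I z‖ ^ 2) / ‖α - I z‖ ^ 2)
    (Ib : E n → ℂ)
    (hIinner : ∀ᵐ ζ ∂Λ,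
      Tendsto (fun r : ℝ => I (r • ζ)) (nhdsWithin 1 (Iio 1)) (nhds (Ib ζ)) ∧ ‖Ib ζ‖ = 1)
    {N : ℝ} (hN : 0 < N) {ε : ℝ} (hε : 0 < ε) :
    ∃ t : ℝ, 0 ≤ t ∧ t < 1 ∧
      ∫ ζ : K n, ‖(N : ℂ) / (N + psi σ (t • (ζ : E n)))‖ ^ 2 ∂(km σ) ≤ ε := by
  have hre : ∀ z ∈ ball (0 : E n) 1, 0 ≤ (psi σ z).re :=
    fun z hz => (re_psi σ I hImap α hα hσ hz).2.1
  choose h hh hh2 using fun (k : ℕ) => h_mem hn σ hre (tk_nonneg k) (tk_lt k) hN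
  let u : E n → ℝ := fun z => (1 - ‖I z‖ ^ 2) / ‖α - I z‖ ^ 2
  have hF := fun k => fubini_poisson hn Λ hs hinv σ hσs u hu (tk_nonneg k) (tk_lt k) (h k) (hh k)
  have hlim : Tendsto (fun k => ∫ η : K n, h k η * (u (tk k • (η : E n)) : ℂ) ∂(km Λ)) atTop
      (𝓝 (∫ η : K n, (0 : ℂ) ∂(km Λ))) := by
    apply tendsto_integral_of_dominated_convergence (fun _ => 2 * N)
    · intro k
      have hc1 : Continuous (fun η : K n => I (tk k • (η : E n))) := by
        apply hI.continuousOn.comp_continuous (by fun_prop)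
        intro η; exact smul_mem_ball (tk_nonneg k) (tk_lt k) η
      have hc2 : Continuous (fun η : K n => u (tk k • (η : E n))) := by
        refine Continuous.div (continuous_const.sub (hc1.norm.pow 2))
          ((continuous_const.sub hc1).norm.pow 2) fun η => ?_
        exact pow_ne_zero _ (norm_ne_zero_iff.mpr
          (sub_ne hImap hα (smul_mem_ball (tk_nonneg k) (tk_lt k) η)))
      exact ((h k).continuous.mul (Complex.continuous_ofReal.comp hc2)).aestronglyMeasurable
    · exact integrable_const _
    · intro k
      refine Eventually.of_forall fun η => ?_
      have hz := smul_mem_ball (tk_nonneg k) (tk_lt k) η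
      have b1 := re_psi σ I hImap α hα hσ hz
      have b2 := h_bounds hN b1.2.1
      rw [norm_mul, hh2, Complex.norm_real, Real.norm_of_nonneg b1.1]
      calc _ ≤ ‖(N : ℂ) / (N + psi σ (tk k • (η : E n)))‖ * (2 * (psi σ (tk k • (η : E n))).re) :=
            mul_le_mul_of_nonneg_left b1.2.2 (norm_nonneg _)
        _ ≤ 2 * N := by linarith [b2.2.2.2.2]
    · filter_upwards [ae_km hIinner, null_alpha hn Λ hs hinv σ I hImap α hα hσ] with η h1 h2
      have h3 : Tendsto (fun k => I (tk k • (η : E n))) atTop (𝓝 (Ib η)) := h1.1.comp tk_tendsto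
      have hne : α - Ib η ≠ 0 := by
        intro h0
        rw [← sub_eq_zero.mp h0] at h3
        exact h2 h3
      have h4 : Tendsto (fun k => u (tk k • (η : E n))) atTop
          (𝓝 ((1 - ‖Ib η‖ ^ 2) / ‖α - Ib η‖ ^ 2)) :=
        ((h3.norm.pow 2).const_sub 1).div (((h3.const_sub α).norm).pow 2)
          (pow_ne_zero _ (norm_ne_zero_iff.mpr hne))
      rw [h1.2] at h4
      norm_num at h4
      apply squeeze_zero_norm (a := fun k => ‖u (tk k • (η : E n))‖)
      · intro k
        have hz := smul_mem_ball (tk_nonneg k) (tk_lt k) η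
        have b2 := h_bounds hN (hre _ hz)
        rw [norm_mul, hh2, Complex.norm_real]
        have := mul_le_mul_of_nonneg_right b2.2.1 (norm_nonneg (u (tk k • (η : E n))))
        linarith
      · simpa using h4.norm
  rw [integral_zero] at hlim
  have hlim2 := hlim.norm
  rw [norm_zero] at hlim2
  obtain ⟨k, hk⟩ := (hlim2.eventually (gt_mem_nhds hε)).exists
  have hkk : ∀ ζ : K n, (tk k * tk k) • (ζ : E n) = tk k • ((sk (tk k) (tk_nonneg k) (tk_lt k).le ζ : K n) : E n) := by
    intro ζ; rw [mul_smul]; rfl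
  refine ⟨tk k * tk k, mul_nonneg (tk_nonneg k) (tk_nonneg k),
    by nlinarith [tk_nonneg k, tk_lt k], ?_⟩
  rw [← hF k] at hk
  have hcont : Continuous (fun ζ : K n => sk (tk k) (tk_nonneg k) (tk_lt k).le ζ) := by
    unfold sk; fun_prop
  let H : Y n := (h k).comp ⟨_, hcont⟩
  have e1 : ∫ ζ : K n, h k (sk (tk k) (tk_nonneg k) (tk_lt k).le ζ) ∂(km σ) = L σ H := rfl
  rw [e1] at hk
  have e2 : ∀ ζ : K n, H ζ = (N : ℂ) / (N + psi σ ((tk k * tk k) • (ζ : E n))) := by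
    intro ζ
    rw [hkk, ← hh2]; rfl
  have hmn : ∫ ζ : K n, ‖(N : ℂ) / (N + psi σ ((tk k * tk k) • (ζ : E n)))‖ ^ 2 ∂(km σ) ≤
      ∫ ζ : K n, (H ζ).re ∂(km σ) := by
    apply integral_mono
    · simp only [← e2]
      apply Continuous.integrable_of_hasCompactSupport _ (HasCompactSupport.of_compactSpace _)
      exact H.continuous.norm.pow 2
    · exact (integrable_Y σ H).re
    · intro ζ
      show ‖(N : ℂ) / (N + psi σ ((tk k * tk k) • (ζ : E n)))‖ ^ 2 ≤ (H ζ).re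
      rw [e2]
      refine (h_bounds hN (hre _ ?_)).2.2.1
      rw [hkk]; exact smul_mem_ball (tk_nonneg k) (tk_lt k) _
  refine hmn.trans ?_
  have e3 : ∫ ζ : K n, (H ζ).re ∂(km σ) = (L σ H).re := integral_re (integrable_Y σ H)
  rw [e3]
  exact (Complex.re_le_norm _).trans hk.le
end
end Clk

namespace Clk
open scoped Topology
section

/-- polynomials -/
abbrev MP (n : ℕ) := MvPolynomial (Fin n) ℂ

/-- evaluation -/
noncomputable def ev {n : ℕ} (p : MP n) (z : E n) : ℂ := MvPolynomial.eval (fun i => z i) p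

lemma ev_add {n : ℕ} (p q : MP n) (z : E n) : ev (p + q) z = ev p z + ev q z := by simp [ev]
lemma ev_mul {n : ℕ} (p q : MP n) (z : E n) : ev (p * q) z = ev p z * ev q z := by simp [ev]
lemma ev_C {n : ℕ} (a : ℂ) (z : E n) : ev (MvPolynomial.C a : MP n) z = a := by simp [ev]
lemma ev_X {n : ℕ} (i : Fin n) (z : E n) : ev (MvPolynomial.X i : MP n) z = z i := by simp [ev]

lemma differentiable_ev {n : ℕ} (p : MP n) : Differentiable ℂ (ev p) := by
  induction p using MvPolynomial.induction_on with
  | C a =>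
    have : ev (MvPolynomial.C a : MP n) = fun _ => a := by ext z; exact ev_C a z
    rw [this]; fun_prop
  | add p q hp hq =>
    have : ev (p + q) = fun z => ev p z + ev q z := by ext z; exact ev_add p q z
    rw [this]; fun_prop
  | mul_X p i hp =>
    have : ev (p * MvPolynomial.X i) = fun z => ev p z * z i := by
      ext z; rw [ev_mul, ev_X]
    rw [this]; fun_prop

lemma aeval_eq_ev {n : ℕ} (p : MP n) (ζ : K n) : (MvPolynomial.aeval x p : Y n) ζ = ev p ζ := by
  induction p using MvPolynomial.induction_on with
  | C a => simp [ev_C]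
  | add p q hp hq => rw [map_add, ContinuousMap.add_apply, hp, hq, ev_add]
  | mul_X p i hp => 
    rw [map_mul, ContinuousMap.mul_apply, hp, ev_mul, ev_X, MvPolynomial.aeval_X, x_apply]

lemma mem_PA_iff {n : ℕ} (f : Y n) : f ∈ PA n ↔ ∃ p : MP n, MvPolynomial.aeval x p = f := by
  rw [PA, Algebra.adjoin_range_eq_range_aeval]; rfl

/-- directional derivative -/
noncomputable def dP {n : ℕ} (p : MP n) (v z : E n) : ℂ := ∑ i, v i * ev (MvPolynomial.pderiv i p) z

lemma dP_single {n : ℕ} (p : MP n) (i : Fin n) (z : E n) :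
    dP p (EuclideanSpace.single i 1) z = ev (MvPolynomial.pderiv i p) z := by
  rw [dP, Finset.sum_eq_single i]
  · simp
  · intro j _ hj; simp [hj]
  · simp

lemma dP_sub_smul {n : ℕ} (p : MP n) (v w : E n) (a : ℂ) (z : E n) :
    dP p (v - a • w) z = dP p v z - a * dP p w z := by
  simp [dP, sub_mul, Finset.sum_sub_distrib, Finset.mul_sum, mul_assoc]

lemma hasDerivAt_ev {n : ℕ} (p : MP n) (z v : E n) (s : ℂ) :
    HasDerivAt (fun s : ℂ => ev p (z + s • v)) (dP p v (z + s • v)) s := by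
  induction p using MvPolynomial.induction_on with
  | C a =>
    have : dP (MvPolynomial.C a : MP n) v (z + s • v) = 0 := by simp [dP, ev]
    rw [this]; simp only [ev_C]; exact hasDerivAt_const _ _
  | add p q hp hq =>
    have : dP (p + q) v (z + s • v) = dP p v (z + s • v) + dP q v (z + s • v) := by
      simp [dP, ev, mul_add, Finset.sum_add_distrib]
    rw [this]; simp only [ev_add]; exact hp.add hq
  | mul_X p i hp =>
    have : dP (p * MvPolynomial.X i) v (z + s • v) =
        dP p v (z + s • v) * (z + s • v) i + ev p (z + s • v) * v i := by
      simp only [dP, Derivation.leibniz, MvPolynomial.pderiv_X, smul_eq_mul, ev_add, ev_mul, ev_X,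
        mul_add, Finset.sum_add_distrib, Finset.sum_mul]
      rw [add_comm]
      congr 1
      · refine Finset.sum_congr rfl fun j _ => by ring
      · rw [Finset.sum_eq_single i]
        · simp [ev]; ring
        · intro j _ hj
          simp [ev, Pi.single_apply, hj, Ne.symm hj]
        · simp
    rw [this]
    simp only [ev_mul, ev_X]
    have h2 : HasDerivAt (fun s : ℂ => (z + s • v) i) (v i) s := by
      have := ((hasDerivAt_id s).mul_const (v i)).const_add (z i)
      simpa using this
    exact hp.mul h2

lemma continuous_dP {n : ℕ} (p : MP n) (v : E n) : Continuous (dP p v) := by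
  unfold dP
  exact continuous_finsetSum _ fun i _ => continuous_const.mul (differentiable_ev _).continuous

/-- Cauchy estimate -/
lemma cauchy_ev {n : ℕ} (p : MP n) (v z : E n) {R C : ℝ} (hR : 0 < R)
    (h : ∀ s : ℂ, ‖s‖ = R → ‖ev p (z + s • v)‖ ≤ C) : ‖dP p v z‖ ≤ C / R := by
  have h1 : deriv (fun s : ℂ => ev p (z + s • v)) 0 = dP p v z := by
    have := (hasDerivAt_ev p z v 0).deriv
    simpa using this
  rw [← h1]
  apply Complex.norm_deriv_le_of_forall_mem_sphere_norm_le hR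
  · exact (Differentiable.diffContOnCl fun s => (hasDerivAt_ev p z v s).differentiableAt)
  · intro s hs
    exact h s (mem_sphere_zero_iff_norm.mp hs)

lemma exists_T {n : ℕ} (P : MP n) : ∃ Q : MP n, ∀ z : E n,
    ev Q z = ∫ t in (0:ℝ)..1, ev P (t • z) := by
  induction P using MvPolynomial.induction_on' with
  | monomial d a =>
    set k := d.sum fun _ e => e with hk
    refine ⟨MvPolynomial.monomial d (a * ((k : ℂ) + 1)⁻¹), fun z => ?_⟩
    have h1 : ∀ t : ℝ, ev (MvPolynomial.monomial d a) (t • z) =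
        ((t ^ k : ℝ) : ℂ) * ev (MvPolynomial.monomial d a) z := by
      intro t
      simp only [ev, MvPolynomial.eval_monomial, Finsupp.prod, PiLp.smul_apply, Complex.real_smul,
        mul_pow, Finset.prod_mul_distrib, Finset.prod_pow_eq_pow_sum, hk, Finsupp.sum]
      push_cast; ring
    simp only [h1]
    rw [intervalIntegral.integral_mul_const, intervalIntegral.integral_ofReal, integral_pow]
    simp [ev, MvPolynomial.eval_monomial]
    ring
  | add p q hp hq =>
    obtain ⟨Q1, h1⟩ := hp
    obtain ⟨Q2, h2⟩ := hq
    refine ⟨Q1 + Q2, fun z => ?_⟩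
    rw [ev_add, h1, h2, ← intervalIntegral.integral_add]
    · simp only [ev_add]
    · exact ((differentiable_ev p).continuous.comp (by fun_prop)).intervalIntegrable _ _
    · exact ((differentiable_ev q).continuous.comp (by fun_prop)).intervalIntegrable _ _

/-- the operator T -/
noncomputable def T {n : ℕ} (i : Fin n) (p : MP n) : MP n :=
  (exists_T (MvPolynomial.pderiv i p)).choose

lemma ev_T {n : ℕ} (i : Fin n) (p : MP n) (z : E n) :
    ev (T i p) z = ∫ t in (0:ℝ)..1, dP p (EuclideanSpace.single i 1) (t • z) := by
  simp only [dP_single]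
  exact (exists_T (MvPolynomial.pderiv i p)).choose_spec z

lemma ftc_ev {n : ℕ} (p : MP n) (z : E n) :
    ev p z - ev p 0 = ∫ t in (0:ℝ)..1, dP p z (t • z) := by
  have h : ∀ t : ℝ, HasDerivAt (fun t : ℝ => ev p (t • z)) (dP p z (t • z)) t := by
    intro t
    have := (hasDerivAt_ev p 0 z (t : ℂ)).comp_ofReal
    simpa using this
  rw [intervalIntegral.integral_eq_sub_of_hasDerivAt (fun t _ => h t)
    (((continuous_dP p z).comp (by fun_prop)).intervalIntegrable _ _)]
  simp

lemma T_ident {n : ℕ} (i : Fin n) (p : MP n) (z : E n) :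
    (starRingEnd ℂ) (z i) * ev p z - ev (T i p) z = (starRingEnd ℂ) (z i) * ev p 0 -
      ∫ t in (0:ℝ)..1, dP p (EuclideanSpace.single i 1 - (starRingEnd ℂ) (z i) • z) (t • z) := by
  simp only [dP_sub_smul]
  rw [intervalIntegral.integral_sub, intervalIntegral.integral_const_mul, ← ftc_ev, ← ev_T]
  · ring
  · exact ((continuous_dP p _).comp (by fun_prop)).intervalIntegrable _ _
  · exact (continuous_const.mul ((continuous_dP p z).comp (by fun_prop))).intervalIntegrable _ _
end
end Clk

namespace Clk
open scoped Topology
section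

lemma tau_est {n : ℕ} (i : Fin n) {z : E n} (hz : ‖z‖ = 1) (t : ℝ) (s : ℂ) :
    ‖t • z + s • (EuclideanSpace.single i (1:ℂ) - (starRingEnd ℂ) (z i) • z)‖ ^ 2 ≤ t ^ 2 + ‖s‖ ^ 2 := by
  set τ : E n := EuclideanSpace.single i (1:ℂ) - (starRingEnd ℂ) (z i) • z with hτ
  have horth : inner ℂ z τ = 0 := by
    rw [hτ, inner_sub_right, inner_smul_right, inner_self_eq_norm_sq_to_K, hz,
      EuclideanSpace.inner_single_right]
    simp
  have h1 : ‖τ‖ ^ 2 ≤ 1 := by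
    have h2 : (EuclideanSpace.single i (1:ℂ) : E n) = τ + (starRingEnd ℂ) (z i) • z := by
      rw [hτ]; abel
    have h3 : ‖(EuclideanSpace.single i (1:ℂ) : E n)‖ ^ 2 = ‖τ‖ ^ 2 + ‖(starRingEnd ℂ) (z i) • z‖ ^ 2 := by
      rw [h2, @norm_add_sq ℂ, inner_smul_right, ← inner_conj_symm, horth]; simp
    have h4 : ‖(EuclideanSpace.single i (1:ℂ) : E n)‖ = 1 := by simp
    rw [h4] at h3
    nlinarith [sq_nonneg ‖(starRingEnd ℂ) (z i) • z‖]
  have h5 : (t • z : E n) = (t : ℂ) • z := rfl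
  rw [@norm_add_sq ℂ, h5, inner_smul_left, inner_smul_right, horth, norm_smul, norm_smul, hz]
  simp only [mul_zero, map_zero, Complex.norm_real, mul_one, add_zero, mul_pow, Real.norm_eq_abs,
    sq_abs]
  nlinarith [sq_nonneg ‖s‖]

lemma intervalIntegrable_sing :
    IntervalIntegrable (fun t : ℝ => (1 - t) ^ (-3/4 : ℝ)) volume 0 1 := by
  have h := (intervalIntegral.intervalIntegrable_rpow' (a := 0) (b := 1) (r := (-3/4 : ℝ))
    (by norm_num)).comp_sub_left 1
  simpa using h.symm

/-- constant -/
noncomputable def C0 : ℝ := ∫ t in (0:ℝ)..1, (1 - t) ^ (-3/4 : ℝ)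

lemma T_core {n : ℕ} (i : Fin n) (p : MP n) {M m δ : ℝ} (hm0 : 0 ≤ m) (hδ : 0 < δ)
    (hM : ∀ z : E n, ‖z‖ ≤ 1 → ‖ev p z‖ ≤ M)
    (hm : ∀ z : E n, ‖z‖ ^ 2 ≤ 1 - δ / 2 → ‖ev p z‖ ≤ m) (h0 : ‖ev p 0‖ ≤ m)
    {z : E n} (hz : ‖z‖ = 1) :
    ‖(starRingEnd ℂ) (z i) * ev p z - ev (T i p) z‖ ≤
      m + (m * (δ / 2) ^ (-1/2 : ℝ) + M * (1/2 : ℝ) ^ (-1/2 : ℝ) * δ ^ (1/4 : ℝ) * C0) := by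
  have hM0 : 0 ≤ M := (norm_nonneg _).trans (hM z hz.le)
  rw [T_ident]
  refine (norm_sub_le _ _).trans (add_le_add ?_ ?_)
  · rw [norm_mul, RCLike.norm_conj]
    have : ‖z i‖ ≤ 1 := hz ▸ PiLp.norm_apply_le z i
    nlinarith [norm_nonneg (ev p 0), norm_nonneg (z i)]
  · set τ : E n := EuclideanSpace.single i (1:ℂ) - (starRingEnd ℂ) (z i) • z with hτ
    have hg : IntervalIntegrable (fun t : ℝ => m * (δ / 2) ^ (-1/2 : ℝ) +
        M * (1/2 : ℝ) ^ (-1/2 : ℝ) * δ ^ (1/4 : ℝ) * (1 - t) ^ (-3/4 : ℝ)) volume 0 1 :=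
      intervalIntegrable_const.add (intervalIntegrable_sing.const_mul _)
    have hne : ∀ᵐ t : ℝ, t ≠ 1 := by
      simp [ae_iff]
    refine (intervalIntegral.norm_integral_le_of_norm_le (g := fun t : ℝ => m * (δ / 2) ^ (-1/2 : ℝ) +
        M * (1/2 : ℝ) ^ (-1/2 : ℝ) * δ ^ (1/4 : ℝ) * (1 - t) ^ (-3/4 : ℝ)) zero_le_one ?_ hg).trans ?_
    · filter_upwards [hne] with t ht1 ht
      have ht' : t < 1 := lt_of_le_of_ne ht.2 ht1
      have htp : 0 < t := ht.1
      have hR2 : 0 < (1 - t) / 2 := by linarith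
      have hR : 0 < Real.sqrt ((1 - t) / 2) := Real.sqrt_pos.mpr hR2
      have hb : ∀ s : ℂ, ‖s‖ = Real.sqrt ((1 - t) / 2) → ‖t • z + s • τ‖ ^ 2 ≤ (1 + t) / 2 := by
        intro s hs
        refine (tau_est i hz t s).trans ?_
        rw [hs, Real.sq_sqrt hR2.le]
        nlinarith
      have hinv : ∀ y : ℝ, 0 < y → ∀ C : ℝ, C / Real.sqrt y = C * y ^ (-1/2 : ℝ) := by
        intro y hy C
        rw [Real.sqrt_eq_rpow, div_eq_mul_inv, ← Real.rpow_neg hy.le]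
        norm_num
      have hp1 : 0 ≤ (δ / 2) ^ (-1/2 : ℝ) := by positivity
      have hp2 : 0 ≤ (1 - t) ^ (-3/4 : ℝ) := Real.rpow_nonneg (by linarith) _
      have hp3 : 0 ≤ (1/2 : ℝ) ^ (-1/2 : ℝ) := by positivity
      have hp4 : 0 ≤ δ ^ (1/4 : ℝ) := by positivity
      rcases le_or_gt t (1 - δ) with hc | hc
      · have h1 := cauchy_ev p τ (t • z) hR (C := m) fun s hs => hm _ (by
          have := hb s hs; linarith)
        rw [hinv _ hR2] at h1
        have h2 : ((1 - t) / 2) ^ (-1/2 : ℝ) ≤ (δ / 2) ^ (-1/2 : ℝ) :=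
          Real.rpow_le_rpow_of_nonpos (by positivity) (by linarith) (by norm_num)
        have h3 := mul_le_mul_of_nonneg_left h2 hm0
        have h4 : 0 ≤ M * (1/2 : ℝ) ^ (-1/2 : ℝ) * δ ^ (1/4 : ℝ) * (1 - t) ^ (-3/4 : ℝ) := by positivity
        linarith
      · have h1 := cauchy_ev p τ (t • z) hR (C := M) fun s hs => hM _ (by
          have := hb s hs
          have h5 : ‖t • z + s • τ‖ ^ 2 ≤ 1 := by linarith
          nlinarith [norm_nonneg (t • z + s • τ)])
        rw [hinv _ hR2] at h1
        have h2 : ((1 - t) / 2) ^ (-1/2 : ℝ) = (1/2 : ℝ) ^ (-1/2 : ℝ) *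
            ((1 - t) ^ (1/4 : ℝ) * (1 - t) ^ (-3/4 : ℝ)) := by
          rw [← Real.rpow_add (by linarith), div_eq_mul_one_div, mul_comm,
            Real.mul_rpow (by norm_num) (by linarith)]
          norm_num
        have h3 : (1 - t) ^ (1/4 : ℝ) ≤ δ ^ (1/4 : ℝ) :=
          Real.rpow_le_rpow (by linarith) (by linarith) (by norm_num)
        have h4 : M * ((1 - t) / 2) ^ (-1/2 : ℝ) ≤
            M * (1/2 : ℝ) ^ (-1/2 : ℝ) * δ ^ (1/4 : ℝ) * (1 - t) ^ (-3/4 : ℝ) := by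
          rw [h2, mul_assoc M, mul_assoc M]
          apply mul_le_mul_of_nonneg_left _ hM0
          rw [mul_assoc]
          apply mul_le_mul_of_nonneg_left _ hp3
          exact mul_le_mul_of_nonneg_right h3 hp2
        have h5 : 0 ≤ m * (δ / 2) ^ (-1/2 : ℝ) := by positivity
        linarith
    · rw [intervalIntegral.integral_add intervalIntegrable_const
        (intervalIntegrable_sing.const_mul _), intervalIntegral.integral_const_mul]
      simp [C0]

/-- bounded sequences of polynomials tending to zero locally uniformly -/
def Montel {n : ℕ} (p : ℕ → MP n) : Prop :=
  (∃ M : ℝ, ∀ j, ∀ z : E n, ‖z‖ ≤ 1 → ‖ev (p j) z‖ ≤ M) ∧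
  ∀ s : ℝ, s < 1 → ∀ ε > 0, ∀ᶠ j in atTop, ∀ z : E n, ‖z‖ ≤ s → ‖ev (p j) z‖ ≤ ε

lemma max_princ {n : ℕ} (q : MP n) {M : ℝ} (hM0 : ‖ev q 0‖ ≤ M)
    (h : ∀ z : E n, ‖z‖ = 1 → ‖ev q z‖ ≤ M) (z : E n) (hz : ‖z‖ ≤ 1) : ‖ev q z‖ ≤ M := by
  by_cases hz0 : z = 0
  · rw [hz0]; exact hM0
  have hzn : 0 < ‖z‖ := norm_pos_iff.mpr hz0
  let v : E n := (‖z‖ : ℂ)⁻¹ • z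
  have hv : ‖v‖ = 1 := by
    simp [v, norm_smul, hzn.ne']
  have hf : Differentiable ℂ (fun s : ℂ => ev q (s • v)) :=
    (differentiable_ev q).comp (by fun_prop)
  have h1 := Complex.norm_le_of_forall_mem_frontier_norm_le (U := ball (0:ℂ) 1) isBounded_ball
    hf.diffContOnCl (C := M) (by
      intro s hs
      rw [frontier_ball _ one_ne_zero] at hs
      apply h
      rw [norm_smul, hv, mem_sphere_zero_iff_norm.mp hs, one_mul]) (z := (‖z‖ : ℂ)) (by
      rw [closure_ball _ one_ne_zero]; simpa using hz)
  have h2 : (‖z‖ : ℂ) • v = z := by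
    have : (‖z‖ : ℂ) ≠ 0 := by simpa using hz0
    simp [v, smul_smul, this]
  simpa only [h2] using h1
end
end Clk

namespace Clk
open scoped Topology
section

/-- `φ p_j` is asymptotically `q_j` on the sphere -/
def Near {n : ℕ} (φ : Y n) (p q : ℕ → MP n) : Prop :=
  ∀ ε > 0, ∀ᶠ j in atTop, ∀ z : K n, ‖(z : E n)‖ = 1 → ‖φ z * ev (p j) z - ev (q j) z‖ ≤ ε

lemma Montel_T_near {n : ℕ} (i : Fin n) (p : ℕ → MP n) (hp : Montel p) :
    Near (star (x i)) p (fun j => T i (p j)) := by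
  obtain ⟨⟨M, hM⟩, hl⟩ := hp
  intro ε hε
  set A := M * (1/2 : ℝ) ^ (-1/2 : ℝ) * C0 with hA
  have hlim : Tendsto (fun δ : ℝ => A * δ ^ (1/4 : ℝ)) (𝓝[>] 0) (𝓝 0) := by
    have h1 : ContinuousAt (fun δ : ℝ => A * δ ^ (1/4 : ℝ)) 0 :=
      continuousAt_const.mul (Real.continuousAt_rpow_const 0 (1/4 : ℝ) (Or.inr (by norm_num)))
    have h2 : A * (0 : ℝ) ^ (1/4 : ℝ) = 0 := by rw [Real.zero_rpow (by norm_num), mul_zero]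
    have h3 := h1.tendsto
    rw [h2] at h3
    exact h3.mono_left nhdsWithin_le_nhds
  have hev := (hlim.eventually (gt_mem_nhds (half_pos hε))).and
    (self_mem_nhdsWithin : Ioi (0:ℝ) ∈ 𝓝[>] 0)
  obtain ⟨δ, hδ1, hδ0⟩ := hev.exists
  have hδ : 0 < δ := hδ0
  have hpw : 0 ≤ (δ / 2) ^ (-1/2 : ℝ) := by positivity
  set m := ε / 2 / (1 + (δ / 2) ^ (-1/2 : ℝ)) with hm
  have hmp : 0 < m := by positivity
  have hmm : m + m * (δ / 2) ^ (-1/2 : ℝ) = ε / 2 := by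
    have : m * (1 + (δ / 2) ^ (-1/2 : ℝ)) = ε / 2 := by
      rw [hm]; field_simp
    linarith
  have hs : Real.sqrt (1 - δ / 2) < 1 := by
    rw [Real.sqrt_lt' one_pos]; linarith
  filter_upwards [hl _ hs m hmp] with j hj z hz
  have h := T_core i (p j) hmp.le hδ (hM j) (fun w hw => hj w (Real.le_sqrt_of_sq_le hw))
    (hj 0 (by simp)) hz
  have e1 : (star (x i) : Y n) z = (starRingEnd ℂ) ((z : E n) i) := rfl
  rw [e1]
  refine h.trans ?_
  have e2 : M * (1/2 : ℝ) ^ (-1/2 : ℝ) * δ ^ (1/4 : ℝ) * C0 = A * δ ^ (1/4 : ℝ) := by rw [hA]; ring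
  rw [e2]
  linarith

lemma ev_T_bound {n : ℕ} (i : Fin n) (p : MP n) (z : E n) {s C R : ℝ} (hz : ‖z‖ ≤ s)
    (hR : 0 < R) (h : ∀ w : E n, ‖w‖ ≤ s + R → ‖ev p w‖ ≤ C) :
    ‖ev (T i p) z‖ ≤ C / R := by
  rw [ev_T]
  have h1 : ∀ t ∈ Set.uIoc (0:ℝ) 1, ‖dP p (EuclideanSpace.single i 1) (t • z)‖ ≤ C / R := by
    intro t ht
    rw [uIoc_of_le zero_le_one] at ht
    apply cauchy_ev p _ _ hR
    intro u hu
    apply h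
    refine (norm_add_le _ _).trans ?_
    rw [norm_smul, norm_smul, hu, Real.norm_of_nonneg ht.1.le]
    have h3 : ‖(EuclideanSpace.single i (1:ℂ) : E n)‖ = 1 := by simp
    rw [h3]
    nlinarith [norm_nonneg z, ht.2]
  have h2 := intervalIntegral.norm_integral_le_of_norm_le_const h1
  simpa using h2

lemma Montel_T {n : ℕ} (i : Fin n) (p : ℕ → MP n) (hp : Montel p) :
    Montel (fun j => T i (p j)) := by
  obtain ⟨⟨M, hM⟩, hl⟩ := hp
  have hM0 : 0 ≤ M := (norm_nonneg _).trans (hM 0 0 (by simp))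
  constructor
  · refine ⟨max M (M + (M + (M * ((1:ℝ) / 2) ^ (-1/2 : ℝ) + M * (1/2 : ℝ) ^ (-1/2 : ℝ) * (1:ℝ) ^ (1/4 : ℝ) * C0))),
      fun j z hz => max_princ _ ?_ ?_ z hz⟩
    · refine le_trans ?_ (le_max_left _ _)
      have := ev_T_bound i (p j) 0 (s := 0) (R := 1) (C := M) (by simp) one_pos
        (fun w hw => hM j w (by simpa using hw))
      simpa using this
    · intro w hw
      refine le_trans ?_ (le_max_right _ _)
      have h1 := T_core i (p j) hM0 one_pos (hM j) (fun v hv => hM j v (by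
        nlinarith [norm_nonneg v])) (hM j 0 (by simp)) hw
      have h2 : ‖(starRingEnd ℂ) (w i) * ev (p j) w‖ ≤ M := by
        rw [norm_mul, RCLike.norm_conj]
        have a1 : ‖w i‖ ≤ 1 := hw ▸ PiLp.norm_apply_le w i
        nlinarith [norm_nonneg (w i), hM j w hw.le, norm_nonneg (ev (p j) w)]
      have h3 := norm_sub_norm_le (ev (T i (p j)) w) ((starRingEnd ℂ) (w i) * ev (p j) w)
      rw [norm_sub_rev] at h3
      linarith
  · intro s hs ε hε
    set s' := max s 0
    have hs' : s' < 1 := max_lt hs one_pos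
    have hR : 0 < (1 - s') / 2 := by linarith
    filter_upwards [hl (s' + (1 - s') / 2) (by linarith) (ε * ((1 - s') / 2)) (by positivity)]
      with j hj z hz
    have := ev_T_bound i (p j) z (hz.trans (le_max_left s 0)) hR hj
    rwa [mul_div_cancel_right₀ _ hR.ne'] at this

lemma Montel_mul {n : ℕ} (r : MP n) (p : ℕ → MP n) (hp : Montel p)
    {B : ℝ} (hB : ∀ z : E n, ‖z‖ ≤ 1 → ‖ev r z‖ ≤ B) :
    Montel (fun j => r * p j) := by
  obtain ⟨⟨M, hM⟩, hl⟩ := hp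
  have hB0 : 0 ≤ B := (norm_nonneg _).trans (hB 0 (by simp))
  constructor
  · refine ⟨B * M, fun j z hz => ?_⟩
    rw [ev_mul, norm_mul]
    exact mul_le_mul (hB z hz) (hM j z hz) (norm_nonneg _) hB0
  · intro s hs ε hε
    filter_upwards [hl s hs (ε / (B + 1)) (by positivity)] with j hj z hz
    rw [ev_mul, norm_mul]
    have h1 := mul_le_mul (hB z (hz.trans hs.le)) (hj z hz) (norm_nonneg _) hB0
    refine h1.trans ?_
    rw [mul_div_assoc', div_le_iff₀ (by positivity)]
    nlinarith

lemma Montel_add {n : ℕ} (p q : ℕ → MP n) (hp : Montel p) (hq : Montel q) :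
    Montel (fun j => p j + q j) := by
  obtain ⟨⟨M, hM⟩, hl⟩ := hp
  obtain ⟨⟨M', hM'⟩, hl'⟩ := hq
  constructor
  · refine ⟨M + M', fun j z hz => ?_⟩
    rw [ev_add]
    exact (norm_add_le _ _).trans (add_le_add (hM j z hz) (hM' j z hz))
  · intro s hs ε hε
    filter_upwards [hl s hs (ε / 2) (half_pos hε), hl' s hs (ε / 2) (half_pos hε)] with j h1 h2 z hz
    rw [ev_add]
    exact (norm_add_le _ _).trans (by linarith [h1 z hz, h2 z hz])

lemma near_all {n : ℕ} (φ : Y n) (hφ : φ ∈ StarAlgebra.adjoin ℂ (range (x : Fin n → Y n))) :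
    ∀ p : ℕ → MP n, Montel p → ∃ q, Montel q ∧ Near φ p q := by
  have h1 : φ ∈ Algebra.adjoin ℂ (range (x : Fin n → Y n) ∪ star (range (x : Fin n → Y n))) := by
    rw [← StarAlgebra.adjoin_toSubalgebra]; exact hφ
  clear hφ
  induction h1 using Algebra.adjoin_induction with
  | mem f hf =>
    intro p hp
    rcases hf with ⟨i, rfl⟩ | ⟨i, hi⟩
    · refine ⟨fun j => MvPolynomial.X i * p j, Montel_mul _ p hp (B := 1) fun z hz => ?_, ?_⟩
      · rw [ev_X]; exact (PiLp.norm_apply_le z i).trans hz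
      · intro ε hε
        refine Eventually.of_forall fun j z hz => ?_
        rw [ev_mul, ev_X, x_apply, sub_self, norm_zero]; exact hε.le
    · have hf : f = star (x i) := by rw [hi, star_star]
      rw [hf]
      exact ⟨_, Montel_T i p hp, Montel_T_near i p hp⟩
  | algebraMap a =>
    intro p hp
    refine ⟨fun j => MvPolynomial.C a * p j, Montel_mul _ p hp (B := ‖a‖) fun z hz => ?_, ?_⟩
    · rw [ev_C]
    · intro ε hε
      refine Eventually.of_forall fun j z hz => ?_
      rw [ev_mul, ev_C]
      simpa using hε.le
  | add f g _ _ hf hg =>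
    intro p hp
    obtain ⟨q, hq, hq2⟩ := hf p hp
    obtain ⟨r, hr, hr2⟩ := hg p hp
    refine ⟨_, Montel_add q r hq hr, fun ε hε => ?_⟩
    filter_upwards [hq2 (ε / 2) (half_pos hε), hr2 (ε / 2) (half_pos hε)] with j h1 h2 z hz
    have e1 : (f + g) z * ev (p j) z - ev (q j + r j) z =
        (f z * ev (p j) z - ev (q j) z) + (g z * ev (p j) z - ev (r j) z) := by
      rw [ev_add, ContinuousMap.add_apply]; ring
    rw [e1]
    exact (norm_add_le _ _).trans (by linarith [h1 z hz, h2 z hz])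
  | mul f g _ _ hf hg =>
    intro p hp
    obtain ⟨q, hq, hq2⟩ := hg p hp
    obtain ⟨r, hr, hr2⟩ := hf q hq
    refine ⟨r, hr, fun ε hε => ?_⟩
    filter_upwards [hq2 (ε / 2 / (‖f‖ + 1)) (by positivity), hr2 (ε / 2) (half_pos hε)]
      with j h1 h2 z hz
    have e1 : (f * g) z * ev (p j) z - ev (r j) z =
        f z * (g z * ev (p j) z - ev (q j) z) + (f z * ev (q j) z - ev (r j) z) := by
      rw [ContinuousMap.mul_apply]; ring
    rw [e1]
    refine (norm_add_le _ _).trans ?_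
    rw [norm_mul]
    have h3 : ‖f z‖ * ‖g z * ev (p j) z - ev (q j) z‖ ≤ ‖f‖ * (ε / 2 / (‖f‖ + 1)) :=
      mul_le_mul (f.norm_coe_le_norm z) (h1 z hz) (norm_nonneg _) (norm_nonneg _)
    have h4 : ‖f‖ * (ε / 2 / (‖f‖ + 1)) ≤ ε / 2 := by
      rw [mul_div_assoc', div_le_iff₀ (by positivity)]
      nlinarith [norm_nonneg f]
    linarith [h2 z hz]
end
end Clk

namespace Clk
open scoped Topology
section
variable {n : ℕ} [MeasurableSpace (E n)] [BorelSpace (E n)]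

lemma seq (hn : 0 < n) (Λ : Measure (E n)) [IsProbabilityMeasure Λ]
    (hs : Λ (sphere (0 : E n) 1)ᶜ = 0)
    (hinv : ∀ U : E n ≃ₗᵢ[ℂ] E n, Measure.map (⇑U) Λ = Λ)
    (σ : Measure (E n)) [IsFiniteMeasure σ] (hσs : σ (sphere (0 : E n) 1)ᶜ = 0) (I : E n → ℂ)
    (hI : DifferentiableOn ℂ I (ball (0 : E n) 1))
    (hImap : ∀ z ∈ ball (0 : E n) 1, I z ∈ ball (0 : ℂ) 1) (α : ℂ) (hα : ‖α‖ = 1)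
    (hσ : ∀ z ∈ ball (0 : E n) 1, ∀ w ∈ ball (0 : E n) 1,
      (α - I z) * (starRingEnd ℂ) (α - I w) * L σ (c z * star (c w)) =
      (1 - I z * (starRingEnd ℂ) (I w)) * (1 - ip z w)⁻¹ ^ n)
    (hu : ∀ z ∈ ball (0 : E n) 1,
      ∫ ζ, (1 - ‖z‖ ^ 2) ^ n / ‖1 - ip z ζ‖ ^ (2 * n) ∂σ = (1 - ‖I z‖ ^ 2) / ‖α - I z‖ ^ 2)
    (Ib : E n → ℂ)
    (hIinner : ∀ᵐ ζ ∂Λ,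
      Tendsto (fun r : ℝ => I (r • ζ)) (nhdsWithin 1 (Iio 1)) (nhds (Ib ζ)) ∧ ‖Ib ζ‖ = 1) :
    ∃ p : ℕ → MP n, (∀ j z, ‖z‖ ≤ 1 → ‖ev (p j) z‖ ≤ 3) ∧ Montel p ∧
      Tendsto (fun j => ∫ ζ : K n, ‖1 - ev (p j) ζ‖ ∂(km σ)) atTop (𝓝 0) := by
  have hre : ∀ z ∈ ball (0 : E n) 1, 0 ≤ (psi σ z).re := fun z hz =>
    (re_psi σ I hImap α hα hσ hz).2.1
  have main : ∀ j : ℕ, ∃ t : ℝ, 0 ≤ t ∧ t < 1 ∧ ∃ p : MP n,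
      (∀ ζ : K n, ‖ev p ζ - (1 - ((j : ℝ) + 1 : ℝ) / (((j : ℝ) + 1 : ℝ) + psi σ (t • (ζ : E n))))‖
        ≤ 1 / ((j : ℝ) + 1)) ∧
      ∫ ζ : K n, ‖1 - ev p ζ‖ ∂(km σ) ≤ 1 / ((j : ℝ) + 1) * (2 * (km σ).real univ + 1) := by
    intro j
    set N : ℝ := (j : ℝ) + 1 with hNd
    have hN : 0 < N := by positivity
    set δ : ℝ := 1 / N with hδ
    have hδ0 : 0 < δ := by positivity
    obtain ⟨t, h0, h1, ht⟩ := good_t hn Λ hs hinv σ hσs I hI hImap α hα hσ hu Ib hIinner hN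
      (pow_pos hδ0 2)
    refine ⟨t, h0, h1, ?_⟩
    obtain ⟨f, hf, hf2⟩ := h_mem hn σ hre h0 h1 hN
    have hg : (1 - f) ∈ PB n := (PB n).sub_mem (PB n).one_mem hf
    have hg' : (1 - f) ∈ closure ((PA n : Subalgebra ℂ (Y n)) : Set (Y n)) := by
      rw [← Subalgebra.topologicalClosure_coe]; exact hg
    obtain ⟨g, hgA, hgd⟩ := Metric.mem_closure_iff.mp hg' δ hδ0
    obtain ⟨p, hp⟩ := (mem_PA_iff g).mp hgA
    have hpz : ∀ ζ : K n, ‖ev p ζ - (1 - f ζ)‖ ≤ δ := by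
      intro ζ
      rw [← aeval_eq_ev, hp]
      have := (g - (1 - f)).norm_coe_le_norm ζ
      rw [dist_comm, dist_eq_norm] at hgd
      exact this.trans hgd.le
    refine ⟨p, fun ζ => by rw [← hf2]; exact hpz ζ, ?_⟩
    have b1 : ∀ ζ : K n, ‖1 - ev p ζ‖ ≤ 2 * δ + ‖f ζ‖ ^ 2 / δ := by
      intro ζ
      have e1 : 1 - ev p ζ = f ζ - (ev p ζ - (1 - f ζ)) := by ring
      have h2 : ‖f ζ‖ ≤ δ + ‖f ζ‖ ^ 2 / δ := by
        have : ‖f ζ‖ * δ ≤ (δ + ‖f ζ‖ ^ 2 / δ) * δ := by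
          have : (δ + ‖f ζ‖ ^ 2 / δ) * δ = δ ^ 2 + ‖f ζ‖ ^ 2 := by field_simp
          rw [this]; nlinarith [sq_nonneg (‖f ζ‖ - δ), sq_nonneg (‖f ζ‖), sq_nonneg δ]
        exact le_of_mul_le_mul_right this hδ0
      rw [e1]
      exact (norm_sub_le _ _).trans (by linarith [hpz ζ])
    have ci : ∀ g : K n → ℝ, Continuous g → Integrable g (km σ) := fun g hg =>
      Continuous.integrable_of_hasCompactSupport hg (HasCompactSupport.of_compactSpace _)
    have cp : Continuous fun ζ : K n => ev p ζ := by
      have : (fun ζ : K n => ev p ζ) = fun ζ => (MvPolynomial.aeval x p : Y n) ζ := by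
        funext ζ; rw [aeval_eq_ev]
      rw [this]; fun_prop
    have e2 : ∫ ζ : K n, ‖f ζ‖ ^ 2 ∂(km σ) ≤ δ ^ 2 := by
      refine le_trans (le_of_eq ?_) ht
      refine integral_congr_ae (Eventually.of_forall fun ζ => ?_)
      simp only [hf2]
    calc ∫ ζ : K n, ‖1 - ev p ζ‖ ∂(km σ) ≤ ∫ ζ : K n, (2 * δ + ‖f ζ‖ ^ 2 / δ) ∂(km σ) :=
          integral_mono (ci _ (by fun_prop)) (ci _ (by fun_prop)) b1
      _ = 2 * δ * (km σ).real univ + (∫ ζ : K n, ‖f ζ‖ ^ 2 ∂(km σ)) / δ := by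
          rw [integral_add (ci _ (by fun_prop)) (ci _ (by fun_prop)), integral_div, integral_const]
          simp [mul_comm]
      _ ≤ 2 * δ * (km σ).real univ + δ ^ 2 / δ := by gcongr
      _ = δ * (2 * (km σ).real univ + 1) := by field_simp
  choose t ht0 ht1 p hp hpi using main
  have hN : ∀ j : ℕ, (0 : ℝ) < (j : ℝ) + 1 := fun j => by positivity
  have hN1 : ∀ j : ℕ, (1 : ℝ) / ((j : ℝ) + 1) ≤ 1 := fun j => by
    rw [div_le_one (hN j)]; linarith [(Nat.cast_nonneg j : (0 : ℝ) ≤ j)]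
  have hb3 : ∀ j z, ‖z‖ ≤ 1 → ‖ev (p j) z‖ ≤ 3 := by
    intro j z hz
    let ζ : K n := ⟨z, mem_closedBall_zero_iff.mpr hz⟩
    have h1 := hp j ζ
    have h2 := (h_bounds (hN j) (hre _ (smul_mem_ball (ht0 j) (ht1 j) ζ))).2.1
    have h3 := norm_sub_le (1 : ℂ) (((j : ℝ) + 1 : ℝ) / (((j : ℝ) + 1 : ℝ) + psi σ (t j • (ζ : E n))))
    rw [norm_one] at h3
    have h4 := norm_le_norm_add_norm_sub' (ev (p j) ζ)
      (1 - ((j : ℝ) + 1 : ℝ) / (((j : ℝ) + 1 : ℝ) + psi σ (t j • (ζ : E n))))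
    have h5 := hN1 j
    exact h4.trans (by linarith)
  refine ⟨p, hb3, ⟨⟨3, hb3⟩, ?_⟩, ?_⟩
  · intro s hs1 ε hε
    obtain ⟨C, hC⟩ : ∃ C, ∀ z ∈ closedBall (0 : E n) s, ‖psi σ z‖ ≤ C := by
      refine (isCompact_closedBall _ _).exists_bound_of_continuousOn ?_
      exact (L σ).continuous.comp_continuousOn
        (differentiableOn_c.continuousOn.mono (closedBall_subset_ball hs1))
    have hl : Tendsto (fun j : ℕ => 1 / ((j : ℝ) + 1) * (1 + C)) atTop (𝓝 0) := by
      simpa using tendsto_one_div_add_atTop_nhds_zero_nat.mul_const (1 + C)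
    filter_upwards [hl.eventually_le_const hε] with j hj z hz
    have hz1 : ‖z‖ ≤ 1 := hz.trans hs1.le
    let ζ : K n := ⟨z, mem_closedBall_zero_iff.mpr hz1⟩
    have h1 := hp j ζ
    have hb := h_bounds (hN j) (hre _ (smul_mem_ball (ht0 j) (ht1 j) ζ))
    rw [hb.2.2.2.1] at h1
    have h4 := norm_le_norm_add_norm_sub' (ev (p j) ζ)
      (psi σ (t j • (ζ : E n)) / (((j : ℝ) + 1 : ℝ) + psi σ (t j • (ζ : E n))))
    have h6 : ‖psi σ (t j • (ζ : E n))‖ ≤ C := by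
      apply hC
      rw [mem_closedBall_zero_iff, norm_smul, Real.norm_of_nonneg (ht0 j)]
      have := ht1 j
      have h7 : ‖(ζ : E n)‖ ≤ s := hz
      nlinarith [norm_nonneg (ζ : E n), ht0 j]
    have h7 : ‖psi σ (t j • (ζ : E n)) / (((j : ℝ) + 1 : ℝ) + psi σ (t j • (ζ : E n)))‖
        ≤ C / ((j : ℝ) + 1) := by
      rw [norm_div]
      exact div_le_div₀ ((norm_nonneg _).trans h6) h6 (hN j)
        (by linarith [hb.1, hre _ (smul_mem_ball (ht0 j) (ht1 j) ζ)])
    have h8 : 1 / ((j : ℝ) + 1) * (1 + C) = 1 / ((j : ℝ) + 1) + C / ((j : ℝ) + 1) := by ring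
    refine le_trans h4 ?_
    linarith
  · refine squeeze_zero (fun j => integral_nonneg fun _ => norm_nonneg _) hpi ?_
    simpa using tendsto_one_div_add_atTop_nhds_zero_nat.mul_const (2 * (km σ).real univ + 1)

lemma star_ineq (σ μ : Measure (E n)) [IsFiniteMeasure σ] [IsFiniteMeasure μ]
    (hσs : σ (sphere (0 : E n) 1)ᶜ = 0) (hμs : μ (sphere (0 : E n) 1)ᶜ = 0)
    (w : E n) {M : ℝ} (hM : 0 ≤ M)
    (hkey : ∀ q ∈ PB n, ‖L σ (q * c w)‖ ^ 2 ≤ M * ∫ ζ, ‖q ζ‖ ^ 2 ∂(km μ))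
    (p : ℕ → MP n) (hp3 : ∀ j z, ‖z‖ ≤ 1 → ‖ev (p j) z‖ ≤ 3) (hpM : Montel p)
    (hpl : Tendsto (fun j => ∫ ζ : K n, ‖1 - ev (p j) ζ‖ ∂(km σ)) atTop (𝓝 0))
    (φ : Y n) (hφ : φ ∈ StarAlgebra.adjoin ℂ (range (x : Fin n → Y n))) :
    ‖L σ (φ * c w)‖ ^ 2 ≤ (18 * M) * ∫ ζ, ‖φ ζ‖ ^ 2 ∂(km μ) := by
  obtain ⟨q, hqM, hq⟩ := near_all φ hφ p hpM
  have ci : ∀ (ρ : Measure (E n)) [IsFiniteMeasure ρ] (g : K n → ℝ), Continuous g →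
      Integrable g (km ρ) := fun ρ _ g hg =>
    Continuous.integrable_of_hasCompactSupport hg (HasCompactSupport.of_compactSpace _)
  have cp : ∀ p : MP n, Continuous fun ζ : K n => ev p ζ := by
    intro p
    have : (fun ζ : K n => ev p ζ) = fun ζ => (MvPolynomial.aeval x p : Y n) ζ := by
      funext ζ; rw [aeval_eq_ev]
    rw [this]; fun_prop
  have sph : ∀ (ρ : Measure (E n)), ρ (sphere (0 : E n) 1)ᶜ = 0 →
      ∀ᵐ ζ : K n ∂(km ρ), ‖(ζ : E n)‖ = 1 := by
    intro ρ hρ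
    have h : ∀ᵐ ζ ∂ρ, ‖ζ‖ = 1 := by
      have h2 : ∀ᵐ ζ ∂ρ, ζ ∈ sphere (0 : E n) 1 := hρ
      filter_upwards [h2] with ζ hζ
      exact mem_sphere_zero_iff_norm.mp hζ
    exact ae_km h
  let Q : ℕ → Y n := fun j => MvPolynomial.aeval x (q j)
  have hQ : ∀ j ζ, Q j ζ = ev (q j) ζ := fun j ζ => aeval_eq_ev _ _
  have hQB : ∀ j, Q j ∈ PB n := fun j => PA_sub_PB ((mem_PA_iff _).mpr ⟨q j, rfl⟩)
  have h1 : Tendsto (fun j => L σ (Q j * c w)) atTop (𝓝 (L σ (φ * c w))) := by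
    rw [tendsto_iff_norm_sub_tendsto_zero]
    have b : ∀ ε > 0, ∀ᶠ j in atTop, ‖L σ (Q j * c w) - L σ (φ * c w)‖ ≤
        (‖φ‖ * ∫ ζ : K n, ‖1 - ev (p j) ζ‖ ∂(km σ)) * ‖c w‖ + ε * (km σ).real univ * ‖c w‖ := by
      intro ε hε
      filter_upwards [hq ε hε] with j hj
      rw [← map_sub, ← sub_mul, L_apply]
      refine (norm_integral_le_integral_norm _).trans ?_
      have : ∫ ζ : K n, ‖((Q j - φ) * c w) ζ‖ ∂(km σ) ≤
          ∫ ζ : K n, (‖φ‖ * ‖1 - ev (p j) ζ‖ * ‖c w‖ + ε * ‖c w‖) ∂(km σ) := by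
        refine integral_mono_ae (ci σ _ (by fun_prop)) (ci σ _ (by have := cp (p j); fun_prop)) ?_
        filter_upwards [sph σ hσs] with ζ hζ
        have e1 : (Q j - φ) ζ = -(φ ζ * ev (p j) ζ - ev (q j) ζ) - φ ζ * (1 - ev (p j) ζ) := by
          rw [ContinuousMap.sub_apply, hQ]; ring
        rw [ContinuousMap.mul_apply, norm_mul, ← add_mul]
        refine mul_le_mul ?_ ((c w).norm_coe_le_norm ζ) (norm_nonneg _) (by positivity)
        rw [e1]
        refine (norm_sub_le _ _).trans ?_
        rw [norm_neg, norm_mul]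
        have := hj ζ hζ
        have h2 : ‖φ ζ‖ * ‖1 - ev (p j) ζ‖ ≤ ‖φ‖ * ‖1 - ev (p j) ζ‖ :=
          mul_le_mul_of_nonneg_right (φ.norm_coe_le_norm ζ) (norm_nonneg _)
        linarith
      refine this.trans (le_of_eq ?_)
      rw [integral_add (ci σ _ (by have := cp (p j); fun_prop)) (ci σ _ (by fun_prop)),
        integral_mul_const, integral_const_mul, integral_const]
      simp; ring
    rw [Metric.tendsto_atTop']
    intro η hη
    set A := (km σ).real univ * ‖c w‖ with hA
    have hA0 : 0 ≤ A := by positivity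
    have hε : 0 < η / 2 / (A + 1) := by positivity
    have hl : Tendsto (fun j => (‖φ‖ * ∫ ζ : K n, ‖1 - ev (p j) ζ‖ ∂(km σ)) * ‖c w‖) atTop (𝓝 0) := by
      simpa using (hpl.const_mul ‖φ‖).mul_const ‖c w‖
    have hev := (b _ hε).and (hl.eventually_lt_const (half_pos hη))
    obtain ⟨J, hJ⟩ := eventually_atTop.mp hev
    refine ⟨J, fun j hj => ?_⟩
    obtain ⟨h2, h3⟩ := hJ j hj.le
    rw [Real.dist_eq, sub_zero, abs_of_nonneg (norm_nonneg _)]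
    have h4 : η / 2 / (A + 1) * (km σ).real univ * ‖c w‖ ≤ η / 2 := by
      rw [mul_assoc, ← hA, div_mul_eq_mul_div, div_le_iff₀ (by positivity)]
      nlinarith
    linarith
  have h2 : ∀ ε > 0, ‖L σ (φ * c w)‖ ^ 2 ≤
      M * (18 * (∫ ζ, ‖φ ζ‖ ^ 2 ∂(km μ)) + 2 * ε ^ 2 * (km μ).real univ) := by
    intro ε hε
    refine le_of_tendsto (h1.norm.pow 2) ?_
    filter_upwards [hq ε hε] with j hj
    refine (hkey _ (hQB j)).trans (mul_le_mul_of_nonneg_left ?_ hM)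
    have : ∫ ζ, ‖Q j ζ‖ ^ 2 ∂(km μ) ≤ ∫ ζ, (18 * ‖φ ζ‖ ^ 2 + 2 * ε ^ 2) ∂(km μ) := by
      refine integral_mono_ae (ci μ _ (by fun_prop)) (ci μ _ (by fun_prop)) ?_
      filter_upwards [sph μ hμs] with ζ hζ
      have h3 := hj ζ hζ
      have e1 : Q j ζ = φ ζ * ev (p j) ζ - (φ ζ * ev (p j) ζ - ev (q j) ζ) := by
        rw [hQ]; ring
      have h4 : ‖Q j ζ‖ ≤ 3 * ‖φ ζ‖ + ε := by
        rw [e1]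
        refine (norm_sub_le _ _).trans ?_
        rw [norm_mul]
        have := mul_le_mul_of_nonneg_left (hp3 j ζ (normK ζ)) (norm_nonneg (φ ζ))
        linarith
      have h5 := norm_nonneg (Q j ζ)
      have h6 : ‖Q j ζ‖ ^ 2 ≤ (3 * ‖φ ζ‖ + ε) ^ 2 := pow_le_pow_left₀ h5 h4 2
      show ‖Q j ζ‖ ^ 2 ≤ 18 * ‖φ ζ‖ ^ 2 + 2 * ε ^ 2
      nlinarith [sq_nonneg (3 * ‖φ ζ‖ - ε)]
    refine this.trans (le_of_eq ?_)
    rw [integral_add (ci μ _ (by fun_prop)) (ci μ _ (by fun_prop)), integral_const_mul,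
      integral_const]
    simp; ring
  have hl : Tendsto (fun ε : ℝ => M * (18 * (∫ ζ, ‖φ ζ‖ ^ 2 ∂(km μ)) + 2 * ε ^ 2 * (km μ).real univ))
      (𝓝[>] 0) (𝓝 (M * (18 * (∫ ζ, ‖φ ζ‖ ^ 2 ∂(km μ)) + 2 * (0 : ℝ) ^ 2 * (km μ).real univ))) := by
    refine Tendsto.mono_left (Continuous.tendsto ?_ 0) nhdsWithin_le_nhds
    fun_prop
  have := ge_of_tendsto hl (eventually_nhdsWithin_of_forall fun ε hε => h2 ε hε)
  refine this.trans (le_of_eq ?_)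
  ring

lemma full_ineq (σ μ : Measure (E n)) [IsFiniteMeasure σ] [IsFiniteMeasure μ]
    (w : E n) (hw : ‖w‖ < 1) {M : ℝ} (hM : 0 ≤ M)
    (hkey : ∀ φ ∈ StarAlgebra.adjoin ℂ (range (x : Fin n → Y n)),
      ‖L σ (φ * c w)‖ ^ 2 ≤ M * ∫ ζ, ‖φ ζ‖ ^ 2 ∂(km μ)) :
    ∃ M' : ℝ, 0 ≤ M' ∧ ∀ φ : Y n, ‖L σ φ‖ ^ 2 ≤ M' * ∫ ζ, ‖φ ζ‖ ^ 2 ∂(km μ) := by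
  have hsq : ∀ φ : Y n, ∫ ζ, ‖φ ζ‖ ^ 2 ∂(km μ) = (L μ (φ * star φ)).re := by
    intro φ
    have : L μ (φ * star φ) = ((∫ ζ, ‖φ ζ‖ ^ 2 ∂(km μ) : ℝ) : ℂ) := by
      rw [L_apply, ← integral_complex_ofReal]
      refine integral_congr_ae (Eventually.of_forall fun ζ => ?_)
      simp [Complex.mul_conj, Complex.normSq_eq_norm_sq]
    rw [this, Complex.ofReal_re]
  have hall : ∀ φ : Y n, ‖L σ (φ * c w)‖ ^ 2 ≤ M * ∫ ζ, ‖φ ζ‖ ^ 2 ∂(km μ) := by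
    have htop : (StarAlgebra.adjoin ℂ (range (x : Fin n → Y n))).topologicalClosure = ⊤ := by
      refine ContinuousMap.starSubalgebra_topologicalClosure_eq_top_of_separatesPoints _ ?_
      intro a b hab
      have : ∃ i, (a : E n) i ≠ (b : E n) i := by
        by_contra! h
        exact hab (Subtype.ext (PiLp.ext h))
      obtain ⟨i, hi⟩ := this
      exact ⟨_, ⟨x i, StarAlgebra.subset_adjoin ℂ _ ⟨i, rfl⟩, rfl⟩, hi⟩
    intro φ
    have hφ : φ ∈ closure ((StarAlgebra.adjoin ℂ (range (x : Fin n → Y n)) : StarSubalgebra ℂ (Y n)) : Set (Y n)) := by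
      rw [← StarSubalgebra.topologicalClosure_coe, htop]; trivial
    have hcl : IsClosed {φ : Y n | ‖L σ (φ * c w)‖ ^ 2 ≤ M * (L μ (φ * star φ)).re} := by
      refine isClosed_le ?_ ?_ <;> fun_prop
    have := closure_minimal (t := {φ : Y n | ‖L σ (φ * c w)‖ ^ 2 ≤ M * (L μ (φ * star φ)).re})
      (fun φ hφ => by
        show ‖L σ (φ * c w)‖ ^ 2 ≤ M * (L μ (φ * star φ)).re
        rw [← hsq]; exact hkey φ hφ) hcl hφ
    rw [hsq]; exact this
  set D : Y n := (1 - e w) ^ n with hD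
  have hDc : D * c w = 1 := by
    rw [hD, c, ← mul_pow, G, Ring.mul_inverse_cancel _ (isUnit_one_sub_e hw), one_pow]
  refine ⟨M * ‖D‖ ^ 2, by positivity, fun φ => ?_⟩
  have h1 := hall (φ * D)
  rw [mul_assoc, hDc, mul_one] at h1
  refine h1.trans ?_
  rw [mul_assoc]
  refine mul_le_mul_of_nonneg_left ?_ hM
  rw [← integral_const_mul]
  have ci : ∀ g : K n → ℝ, Continuous g → Integrable g (km μ) := fun g hg =>
    Continuous.integrable_of_hasCompactSupport hg (HasCompactSupport.of_compactSpace _)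
  refine integral_mono (ci _ (by fun_prop)) (ci _ (by fun_prop)) fun ζ => ?_
  show ‖(φ * D) ζ‖ ^ 2 ≤ ‖D‖ ^ 2 * ‖φ ζ‖ ^ 2
  rw [ContinuousMap.mul_apply, norm_mul, mul_pow, mul_comm]
  gcongr
  exact D.norm_coe_le_norm ζ

end
end Clk

namespace Clk
open scoped Topology
section
variable {n : ℕ} [MeasurableSpace (E n)] [BorelSpace (E n)]

lemma meas_ineq (σ μ : Measure (E n)) [IsFiniteMeasure σ] [IsFiniteMeasure μ]
    (hσs : σ (sphere (0 : E n) 1)ᶜ = 0) (hμs : μ (sphere (0 : E n) 1)ᶜ = 0)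
    {M : ℝ} (hM : 0 ≤ M) (hkey : ∀ φ : Y n, ‖L σ φ‖ ^ 2 ≤ M * ∫ ζ, ‖φ ζ‖ ^ 2 ∂(km μ))
    (ψ : E n → ℝ) (hψ : Measurable ψ) {C : ℝ} (hC : ∀ ζ, ‖ψ ζ‖ ≤ C) :
    ∫ ζ, ψ ζ ∂σ ≤ √(M * (2 * ∫ ζ, ψ ζ ^ 2 ∂μ)) := by
  have hcont : ∀ g : BoundedContinuousFunction (E n) ℝ,
      ∫ ζ, g ζ ∂σ ≤ √(M * ∫ ζ, g ζ ^ 2 ∂μ) := by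
    intro g
    let φ : Y n := ⟨fun ζ => (g ζ : ℂ), by fun_prop⟩
    have h := hkey φ
    have e1 : L σ φ = ((∫ ζ, g ζ ∂σ : ℝ) : ℂ) := by
      rw [L_apply, ← integral_km hσs (fun ζ => g ζ), ← integral_complex_ofReal]; rfl
    have e2 : ∫ ζ, ‖φ ζ‖ ^ 2 ∂(km μ) = ∫ ζ, g ζ ^ 2 ∂μ := by
      rw [← integral_km hμs (fun ζ => g ζ ^ 2)]
      refine integral_congr_ae (Eventually.of_forall fun ζ => ?_)
      show ‖(g ζ : ℂ)‖ ^ 2 = g ζ ^ 2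
      rw [Complex.norm_real, Real.norm_eq_abs, sq_abs]
    rw [e1, e2, Complex.norm_real, Real.norm_eq_abs, sq_abs] at h
    exact Real.le_sqrt_of_sq_le h
  have hmem : MemLp ψ (ENNReal.ofReal 2) (σ + μ) :=
    MemLp.of_bound hψ.aestronglyMeasurable C (Eventually.of_forall hC)
  have hb : ∀ δ : ℝ, 0 < δ → ∫ ζ, ψ ζ ∂σ ≤
      √(M * (2 * (∫ ζ, ψ ζ ^ 2 ∂μ) + 2 * δ ^ 2)) + δ * (σ.real univ + 1) := by
    intro δ hδ
    obtain ⟨g, hg, -⟩ := hmem.exists_boundedContinuous_integral_rpow_sub_le (by norm_num)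
      (pow_pos hδ 2)
    have bi : ∀ (ρ : Measure (E n)) [IsFiniteMeasure ρ] (f : E n → ℝ) (B : ℝ), Measurable f →
        (∀ ζ, ‖f ζ‖ ≤ B) → Integrable f ρ := fun ρ _ f B hf hB =>
      Integrable.of_bound hf.aestronglyMeasurable B (Eventually.of_forall hB)
    have hgm : Measurable g := g.continuous.measurable
    have hd : ∀ ζ, ‖ψ ζ - g ζ‖ ≤ C + ‖g‖ := fun ζ =>
      (norm_sub_le _ _).trans (add_le_add (hC ζ) (g.norm_coe_le_norm ζ))
    have hsqb : ∀ (f : E n → ℝ) (B : ℝ), (∀ ζ, ‖f ζ‖ ≤ B) → ∀ ζ, ‖f ζ ^ 2‖ ≤ B ^ 2 := by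
      intro f B h ζ
      rw [norm_pow]; exact pow_le_pow_left₀ (norm_nonneg _) (h ζ) 2
    have hdi : ∀ (ρ : Measure (E n)) [IsFiniteMeasure ρ],
        Integrable (fun ζ => (ψ ζ - g ζ) ^ 2) ρ := fun ρ _ =>
      bi ρ _ _ ((hψ.sub hgm).pow_const 2) (hsqb _ _ hd)
    have hg' : ∫ ζ, (ψ ζ - g ζ) ^ 2 ∂σ + ∫ ζ, (ψ ζ - g ζ) ^ 2 ∂μ ≤ δ ^ 2 := by
      rw [← integral_add_measure (hdi σ) (hdi μ)]
      refine le_trans (le_of_eq ?_) hg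
      refine integral_congr_ae (Eventually.of_forall fun ζ => ?_)
      simp
    have n1 : 0 ≤ ∫ ζ, (ψ ζ - g ζ) ^ 2 ∂σ := integral_nonneg fun _ => sq_nonneg _
    have n2 : 0 ≤ ∫ ζ, (ψ ζ - g ζ) ^ 2 ∂μ := integral_nonneg fun _ => sq_nonneg _
    have s1 : ∫ ζ, ψ ζ ∂σ ≤ ∫ ζ, g ζ ∂σ + δ * (σ.real univ + 1) := by
      have : ∫ ζ, ψ ζ ∂σ ≤ ∫ ζ, (g ζ + (δ + (ψ ζ - g ζ) ^ 2 / δ)) ∂σ := by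
        refine integral_mono (bi σ _ _ hψ hC) ?_ fun ζ => ?_
        · exact (bi σ _ _ hgm g.norm_coe_le_norm).add
            ((integrable_const _).add ((hdi σ).div_const _))
        · show ψ ζ ≤ g ζ + (δ + (ψ ζ - g ζ) ^ 2 / δ)
          have : (ψ ζ - g ζ) * δ ≤ (δ + (ψ ζ - g ζ) ^ 2 / δ) * δ := by
            have : (δ + (ψ ζ - g ζ) ^ 2 / δ) * δ = δ ^ 2 + (ψ ζ - g ζ) ^ 2 := by field_simp
            rw [this]
            nlinarith [sq_nonneg (ψ ζ - g ζ - δ), sq_nonneg (ψ ζ - g ζ), sq_nonneg δ]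
          linarith [le_of_mul_le_mul_right this hδ]
      have i3 : Integrable (fun ζ => δ + (ψ ζ - g ζ) ^ 2 / δ) σ :=
        (integrable_const _).add ((hdi σ).div_const _)
      rw [integral_add (bi σ _ _ hgm g.norm_coe_le_norm) i3,
        integral_add (integrable_const _) ((hdi σ).div_const _), integral_div,
        integral_const] at this
      have h3 : (∫ ζ, (ψ ζ - g ζ) ^ 2 ∂σ) / δ ≤ δ := by
        rw [div_le_iff₀ hδ]; nlinarith
      simp only [smul_eq_mul] at this
      linarith
    have s2 : ∫ ζ, g ζ ^ 2 ∂μ ≤ 2 * (∫ ζ, ψ ζ ^ 2 ∂μ) + 2 * δ ^ 2 := by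
      have i2 : Integrable (fun ζ => ψ ζ ^ 2) μ := bi μ _ _ (hψ.pow_const 2) (hsqb _ _ hC)
      have : ∫ ζ, g ζ ^ 2 ∂μ ≤ ∫ ζ, (2 * ψ ζ ^ 2 + 2 * (ψ ζ - g ζ) ^ 2) ∂μ := by
        refine integral_mono (bi μ _ _ (hgm.pow_const 2) (hsqb _ _ g.norm_coe_le_norm))
          ((i2.const_mul 2).add ((hdi μ).const_mul 2)) fun ζ => ?_
        show g ζ ^ 2 ≤ 2 * ψ ζ ^ 2 + 2 * (ψ ζ - g ζ) ^ 2
        nlinarith [sq_nonneg (2 * ψ ζ - g ζ)]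
      rw [integral_add (i2.const_mul 2) ((hdi μ).const_mul 2), integral_const_mul,
        integral_const_mul] at this
      linarith
    have s3 := (hcont g).trans (Real.sqrt_le_sqrt (mul_le_mul_of_nonneg_left s2 hM))
    linarith
  have hl : Tendsto (fun δ : ℝ => √(M * (2 * (∫ ζ, ψ ζ ^ 2 ∂μ) + 2 * δ ^ 2)) +
      δ * (σ.real univ + 1)) (𝓝[>] 0)
      (𝓝 (√(M * (2 * (∫ ζ, ψ ζ ^ 2 ∂μ) + 2 * (0 : ℝ) ^ 2)) + 0 * (σ.real univ + 1))) := by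
    refine Tendsto.mono_left (Continuous.tendsto ?_ 0) nhdsWithin_le_nhds
    fun_prop
  have := ge_of_tendsto hl (eventually_nhdsWithin_of_forall fun δ hδ => hb δ hδ)
  simpa using this

lemma final (σ μ : Measure (E n)) [IsFiniteMeasure σ] [IsFiniteMeasure μ]
    {M : ℝ} (hM : 0 ≤ M)
    (hm : ∀ (ψ : E n → ℝ), Measurable ψ → ∀ C : ℝ, (∀ ζ, ‖ψ ζ‖ ≤ C) →
      ∫ ζ, ψ ζ ∂σ ≤ √(M * (2 * ∫ ζ, ψ ζ ^ 2 ∂μ))) :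
    σ ≪ μ ∧ ∫⁻ ζ, (σ.rnDeriv μ ζ) ^ 2 ∂μ < ⊤ := by
  have hac : σ ≪ μ := by
    refine Measure.AbsolutelyContinuous.mk fun A hA hμA => ?_
    have h := hm (A.indicator 1) (measurable_one.indicator hA) 1 (fun ζ => by
      by_cases h : ζ ∈ A <;> simp [h])
    have h0 : ∫ ζ, (A.indicator 1 ζ : ℝ) ^ 2 ∂μ = 0 := by
      refine integral_eq_zero_of_ae ?_
      have : ∀ᵐ ζ ∂μ, ζ ∉ A := measure_eq_zero_iff_ae_notMem.mp hμA
      filter_upwards [this] with ζ hζ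
      simp [hζ]
    rw [h0, integral_indicator_one hA] at h
    simp at h
    have h2 : σ.real A = 0 := le_antisymm h measureReal_nonneg
    exact (measureReal_eq_zero_iff).mp h2
  refine ⟨hac, ?_⟩
  set h := σ.rnDeriv μ with hh
  have hmeas : Measurable h := Measure.measurable_rnDeriv σ μ
  have hN : ∀ N : ℕ, ∫⁻ ζ, (min (h ζ) N) ^ 2 ∂μ ≤ ENNReal.ofReal (2 * M) := by
    intro N
    set f : E n → ENNReal := fun ζ => min (h ζ) N with hf
    have fm : Measurable f := hmeas.min measurable_const
    have fle : ∀ ζ, f ζ ≤ N := fun ζ => min_le_right _ _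
    have ftop : ∀ ζ, f ζ ≠ ⊤ := fun ζ => ((fle ζ).trans_lt (ENNReal.natCast_lt_top N)).ne
    have gb : ∀ ζ, ‖(f ζ).toReal‖ ≤ N := by
      intro ζ
      rw [Real.norm_of_nonneg ENNReal.toReal_nonneg]
      simpa using ENNReal.toReal_mono (ENNReal.natCast_ne_top N) (fle ζ)
    have h1 := hm (fun ζ => (f ζ).toReal) fm.ennreal_toReal N gb
    have h2 : ∫⁻ ζ, f ζ ^ 2 ∂μ ≤ ∫⁻ ζ, f ζ ∂σ := by
      haveI : σ.HaveLebesgueDecomposition μ :=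
        Measure.haveLebesgueDecomposition_of_sigmaFinite σ μ
      rw [← lintegral_rnDeriv_mul hac fm.aemeasurable]
      refine lintegral_mono fun ζ => ?_
      rw [sq]
      exact mul_le_mul' (min_le_left _ _) le_rfl
    have e1 : ∫ ζ, (f ζ).toReal ∂σ = (∫⁻ ζ, f ζ ∂σ).toReal :=
      integral_toReal fm.aemeasurable (Eventually.of_forall fun ζ => (ftop ζ).lt_top)
    have e2 : ∫ ζ, (f ζ).toReal ^ 2 ∂μ = (∫⁻ ζ, f ζ ^ 2 ∂μ).toReal := by
      rw [← integral_toReal (fm.pow_const 2).aemeasurable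
        (Eventually.of_forall fun ζ => ENNReal.pow_lt_top (ftop ζ).lt_top)]
      simp
    have t1 : ∫⁻ ζ, f ζ ∂σ ≠ ⊤ := by
      refine ((lintegral_mono fle).trans_lt ?_).ne
      rw [lintegral_const]
      exact ENNReal.mul_lt_top (ENNReal.natCast_lt_top N) (measure_lt_top _ _)
    have t2 : ∫⁻ ζ, f ζ ^ 2 ∂μ ≠ ⊤ := (h2.trans_lt t1.lt_top).ne
    have h3 := ENNReal.toReal_mono t1 h2
    rw [e1, e2] at h1
    set A := (∫⁻ ζ, f ζ ^ 2 ∂μ).toReal with hA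
    have hA0 : 0 ≤ A := ENNReal.toReal_nonneg
    have h4 : A ≤ √(M * (2 * A)) := h3.trans h1
    have h5 : A ^ 2 ≤ M * (2 * A) := by
      calc A ^ 2 ≤ √(M * (2 * A)) ^ 2 := pow_le_pow_left₀ hA0 h4 2
        _ = _ := Real.sq_sqrt (by positivity)
    have h6 : A ≤ 2 * M := by
      rcases hA0.eq_or_lt with h | h
      · rw [← h]; positivity
      · nlinarith
    rw [← ENNReal.ofReal_toReal t2]
    exact ENNReal.ofReal_le_ofReal h6
  refine lt_of_le_of_lt ?_ (ENNReal.ofReal_lt_top (r := 2 * M))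
  have hl : Tendsto (fun N : ℕ => ∫⁻ ζ, (min (h ζ) N) ^ 2 ∂μ) atTop (𝓝 (∫⁻ ζ, h ζ ^ 2 ∂μ)) := by
    refine lintegral_tendsto_of_tendsto_of_monotone
      (fun N => ((hmeas.min measurable_const).pow_const 2).aemeasurable) ?_ ?_
    · refine Eventually.of_forall fun ζ a b hab => ?_
      show min (h ζ) (a : ENNReal) ^ 2 ≤ min (h ζ) (b : ENNReal) ^ 2
      gcongr
    · refine Eventually.of_forall fun ζ => ?_
      have : Tendsto (fun N : ℕ => min (h ζ) (N : ENNReal)) atTop (𝓝 (min (h ζ) ⊤)) :=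
        tendsto_const_nhds.min ENNReal.tendsto_nat_nhds_top
      rw [min_top_right] at this
      exact ENNReal.Tendsto.pow this
  exact le_of_tendsto' hl hN

end
end Clk

/-- (iii) ⇒ (i) of the main theorem: in the same setting, if for some `w ∈ B_n` the function
`z ↦ ((α - b z)/(α - I z))·K(z,w)` lies in the de Branges–Rovnyak space `H(b)`, then
`σ ≪ μ` and `dσ/dμ ∈ L²(μ)`. -/
theorem stmt10 (n : ℕ) (hn : 2 ≤ n)
    [MeasurableSpace (EuclideanSpace ℂ (Fin n))]
    [BorelSpace (EuclideanSpace ℂ (Fin n))]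
    (Λ : Measure (EuclideanSpace ℂ (Fin n))) (hΛprob : IsProbabilityMeasure Λ)
    (hΛsupp : Λ (sphere (0 : EuclideanSpace ℂ (Fin n)) 1)ᶜ = 0)
    (hΛinv : ∀ U : EuclideanSpace ℂ (Fin n) ≃ₗᵢ[ℂ] EuclideanSpace ℂ (Fin n),
      Measure.map (⇑U) Λ = Λ)
    (I : EuclideanSpace ℂ (Fin n) → ℂ)
    (hI : DifferentiableOn ℂ I (ball (0 : EuclideanSpace ℂ (Fin n)) 1))
    (hImap : ∀ z ∈ ball (0 : EuclideanSpace ℂ (Fin n)) 1, I z ∈ ball (0 : ℂ) 1)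
    (Ib : EuclideanSpace ℂ (Fin n) → ℂ)
    (hIinner : ∀ᵐ ζ ∂Λ,
      Tendsto (fun r : ℝ => I (r • ζ)) (nhdsWithin 1 (Iio 1)) (nhds (Ib ζ)) ∧ ‖Ib ζ‖ = 1)
    (b : EuclideanSpace ℂ (Fin n) → ℂ)
    (hb : DifferentiableOn ℂ b (ball (0 : EuclideanSpace ℂ (Fin n)) 1))
    (hbmap : ∀ z ∈ ball (0 : EuclideanSpace ℂ (Fin n)) 1, b z ∈ ball (0 : ℂ) 1)
    (hbnc : ∃ z₁ ∈ ball (0 : EuclideanSpace ℂ (Fin n)) 1,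
      ∃ z₂ ∈ ball (0 : EuclideanSpace ℂ (Fin n)) 1, b z₁ ≠ b z₂)
    (α : ℂ) (hα : ‖α‖ = 1)
    (σ μ : Measure (EuclideanSpace ℂ (Fin n)))
    (hσfin : IsFiniteMeasure σ) (hμfin : IsFiniteMeasure μ)
    (hσsupp : σ (sphere (0 : EuclideanSpace ℂ (Fin n)) 1)ᶜ = 0)
    (hμsupp : μ (sphere (0 : EuclideanSpace ℂ (Fin n)) 1)ᶜ = 0)
    (hσ : ∀ z ∈ ball (0 : EuclideanSpace ℂ (Fin n)) 1,
      ∫ ζ, (1 - ‖z‖ ^ 2) ^ n /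
          ‖1 - ∑ i, z i * (starRingEnd ℂ) (ζ i)‖ ^ (2 * n) ∂σ =
        (1 - ‖I z‖ ^ 2) / ‖α - I z‖ ^ 2)
    (hμ : ∀ z ∈ ball (0 : EuclideanSpace ℂ (Fin n)) 1,
      ∫ ζ, (1 - ‖z‖ ^ 2) ^ n /
          ‖1 - ∑ i, z i * (starRingEnd ℂ) (ζ i)‖ ^ (2 * n) ∂μ =
        (1 - ‖b z‖ ^ 2) / ‖α - b z‖ ^ 2)
    (hmem : ∃ w ∈ ball (0 : EuclideanSpace ℂ (Fin n)) 1,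
      MemRKHSBall n
        (fun z w' => (1 - b z * (starRingEnd ℂ) (b w')) *
          ((1 - ∑ i, z i * (starRingEnd ℂ) (w' i))⁻¹) ^ n)
        (fun z => (α - b z) / (α - I z) *
          ((1 - I z * (starRingEnd ℂ) (I w)) *
            ((1 - ∑ i, z i * (starRingEnd ℂ) (w i))⁻¹) ^ n))) :
    σ ≪ μ ∧ ∫⁻ ζ, (σ.rnDeriv μ ζ) ^ 2 ∂μ < ⊤ := by
  have hn0 : 0 < n := by omega
  haveI := hΛprob
  haveI := hσfin
  haveI := hμfin
  obtain ⟨w, hw, hmem⟩ := hmem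
  have hσk : ∀ z ∈ ball (0 : Clk.E n) 1, ∀ w ∈ ball (0 : Clk.E n) 1,
      (α - I z) * (starRingEnd ℂ) (α - I w) * Clk.L σ (Clk.c z * star (Clk.c w)) =
      (1 - I z * (starRingEnd ℂ) (I w)) * (1 - Clk.ip z w)⁻¹ ^ n := fun z hz w hw =>
    Clk.kernel_ident σ hσsupp I hI hImap α hα hσ hz hw
  have hμk : ∀ z ∈ ball (0 : Clk.E n) 1, ∀ w ∈ ball (0 : Clk.E n) 1,
      (α - b z) * (starRingEnd ℂ) (α - b w) * Clk.L μ (Clk.c z * star (Clk.c w)) =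
      (1 - b z * (starRingEnd ℂ) (b w)) * (1 - Clk.ip z w)⁻¹ ^ n := fun z hz w hw =>
    Clk.kernel_ident μ hμsupp b hb hbmap α hα hμ hz hw
  obtain ⟨M, hM, hkey⟩ := Clk.key_ineq hn0 σ μ b I hbmap hImap α hα hμk hσk w hw hmem
  obtain ⟨p, hp3, hpM, hpl⟩ := Clk.seq hn0 Λ hΛsupp hΛinv σ hσsupp I hI hImap α hα hσk hσ Ib
    hIinner
  obtain ⟨M', hM', hfull⟩ := Clk.full_ineq σ μ w (mem_ball_zero_iff.mp hw)
    (M := 18 * M) (by positivity)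
    (fun φ hφ => Clk.star_ineq σ μ hσsupp hμsupp w hM hkey p hp3 hpM hpl φ hφ)
  exact Clk.final σ μ hM' fun ψ hψ C hC =>
    Clk.meas_ineq σ μ hσsupp hμsupp hM' hfull ψ hψ hC
end
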